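/- arXiv:1012.2793 — 3 statements merged into one kernel-verified Lean document; each statement's English description precedes it below -/
import Mathlib

section
/- Let f ∈ ℤ[T] be a monic squarefree polynomial of degree ≥ 1, and let κ be the number of irreducible factors of f in ℚ[T]. For a prime p let ρ_f(p) = |{α ∈ ℤ/pℤ : f(α) ≡ 0 (mod p)}|. Then there exists a constant C ≥ 0 such that for all x ≥ 3, |Σ_{p ≤ x} ρ_f(p)/p − κ log log x| ≤ C, where the sum is over primes p ≤ x. -/
/-- `rhoF f d` is the number of residues `α ∈ ℤ/dℤ` with `f(α) ≡ 0 (mod d)`. -/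
noncomputable def rhoF (f : Polynomial ℤ) (d : ℕ) : ℕ :=
  Nat.card {α : ZMod d // Polynomial.aeval α f = 0}

/-- The number of irreducible factors (with multiplicity) of `f` viewed in `ℚ[T]`. -/
noncomputable def numIrredFactors (f : Polynomial ℤ) : ℕ :=
  Multiset.card
    (UniqueFactorizationMonoid.normalizedFactors (f.map (Int.castRingHom ℚ)))

section

open ArithmeticFunction ArithmeticFunction.vonMangoldt Complex LSeries in
theorem vM_bound : ∃ C : ℝ, 0 < C ∧ ∀ s : ℝ, 1 < s → s ≤ 2 →
    Summable (fun n : ℕ => vonMangoldt n / (n:ℝ) ^ s) ∧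
    ∑' n : ℕ, vonMangoldt n / (n:ℝ) ^ s ≤ C / (s - 1) := by
  have ha : IsUnit (1 : ZMod 1) := isUnit_one
  have hres : ∀ n, residueClass (1 : ZMod 1) n = vonMangoldt n := by
    intro n
    have : (n : ZMod 1) = 1 := Subsingleton.elim _ _
    simp [residueClass, Set.indicator, this]
  have H {x : ℝ} (hx : 1 < x) :
      ∑' n, residueClass (1 : ZMod 1) n / (n : ℝ) ^ x =
        (LFunctionResidueClassAux (1 : ZMod 1) x).re + ((1:ℕ).totient : ℝ)⁻¹ / (x - 1) := by
    refine ofReal_injective ?_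
    simp only [ofReal_tsum, ofReal_div, ofReal_cpow (Nat.cast_nonneg _), ofReal_natCast,
      ofReal_add, ofReal_inv, ofReal_sub, ofReal_one]
    simp_rw [← LFunctionResidueClassAux_real ha hx,
      eqOn_LFunctionResidueClassAux ha <| Set.mem_ofPred.mpr (ofReal_re x ▸ hx), sub_add_cancel,
      LSeries, term]
    refine tsum_congr fun n ↦ ?_
    split_ifs with hn
    · simp only [hn, residueClass_apply_zero, ofReal_zero, zero_div]
    · rfl
  have : ContinuousOn (fun x : ℝ ↦ (LFunctionResidueClassAux (1 : ZMod 1) x).re) (Set.Icc 1 2) :=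
    continuous_re.continuousOn.comp (t := Set.univ) (continuousOn_LFunctionResidueClassAux 1)
      (fun ⦃x⦄ a ↦ trivial) |>.comp continuous_ofReal.continuousOn fun x hx ↦ by
        simpa only [Set.mem_ofPred_eq, ofReal_re] using hx.1
  obtain ⟨C, hC⟩ := bddAbove_def.mp <| IsCompact.bddAbove_image isCompact_Icc this
  refine ⟨|C| + 1, by positivity, fun s h1 h2 => ⟨?_, ?_⟩⟩
  · have := LSeriesSummable_vonMangoldt (s := (s:ℂ)) (by simpa using h1)
    have h3 := this.norm
    refine h3.congr fun n => ?_
    rw [norm_term_eq]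
    split_ifs with h
    · simp [h]
    · simp [abs_of_nonneg vonMangoldt_nonneg]
  · have h3 := H h1
    simp only [hres] at h3
    rw [h3]
    have h4 := hC _ (Set.mem_image_of_mem _ (show s ∈ Set.Icc (1:ℝ) 2 from ⟨h1.le, h2⟩))
    have h5 : |C| ≤ |C| / (s-1) := by
      rw [le_div_iff₀ (by linarith)]
      nlinarith [abs_nonneg C]
    have h6 := le_abs_self C
    rw [add_div]
    simp only [Nat.totient_one, Nat.cast_one, inv_one]
    linarith

theorem prime_log_bound : ∃ C : ℝ, 0 < C ∧ ∀ s : ℝ, 1 < s → s ≤ 2 →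
    Summable (fun p : ℕ => if p.Prime then Real.log p * (p:ℝ) ^ (-s) else 0) ∧
    ∑' p : ℕ, (if p.Prime then Real.log p * (p:ℝ) ^ (-s) else 0) ≤ C / (s - 1) := by
  obtain ⟨C, hC, h⟩ := vM_bound
  refine ⟨C, hC, fun s h1 h2 => ?_⟩
  obtain ⟨hs, hle⟩ := h s h1 h2
  have key : ∀ p : ℕ, (if p.Prime then Real.log p * (p:ℝ) ^ (-s) else 0)
      ≤ ArithmeticFunction.vonMangoldt p / (p:ℝ) ^ s := by
    intro p
    split_ifs with hp
    · rw [ArithmeticFunction.vonMangoldt_apply_prime hp, Real.rpow_neg (by positivity), div_eq_mul_inv]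
    · exact div_nonneg ArithmeticFunction.vonMangoldt_nonneg (by positivity)
  have hnn : ∀ p : ℕ, 0 ≤ (if p.Prime then Real.log p * (p:ℝ) ^ (-s) else 0) := by
    intro p
    split_ifs with hp
    · exact mul_nonneg (Real.log_natCast_nonneg _) (by positivity)
    · exact le_rfl
  have hsum := Summable.of_nonneg_of_le hnn key hs
  exact ⟨hsum, (hsum.tsum_le_tsum key hs).trans hle⟩

theorem analytic_core (ρ : ℕ → ℝ) (n : ℝ) (h0 : ∀ p, p.Prime → 0 ≤ ρ p) (hn : ∀ p, p.Prime → ρ p ≤ n)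
    (δ C : ℝ) (hδ : 0 < δ)
    (H : ∀ s : ℝ, 1 < s → s < 1 + δ →
      |(∑' p : ℕ, if p.Prime then ρ p * (p:ℝ) ^ (-s) else 0) - Real.log (1 / (s - 1))| ≤ C) :
    ∃ C : ℝ, 0 ≤ C ∧ ∀ x : ℝ, 3 ≤ x →
      |(∑ p ∈ (Finset.range (⌊x⌋₊ + 1)).filter Nat.Prime, ρ p / (p : ℝ)) -
          Real.log (Real.log x)| ≤ C := by
  obtain ⟨A, hA, hlog⟩ := prime_log_bound
  have hn0 : 0 ≤ n := (h0 2 Nat.prime_two).trans (hn 2 Nat.prime_two)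
  have main : ∀ x : ℝ, 3 ≤ x → |(∑ p ∈ (Finset.range (⌊x⌋₊ + 1)).filter Nat.Prime, ρ p / (p : ℝ)) -
      (∑' p : ℕ, if p.Prime then ρ p * (p:ℝ) ^ (-(1 + 1 / Real.log x)) else 0)| ≤
        n * Real.exp 1 * A := by
    intro x hx
    have hL : 1 < Real.log x := by
      rw [Real.lt_log_iff_exp_lt (by linarith)]
      linarith [Real.exp_one_lt_d9]
    set L := Real.log x with hLdef
    set s := 1 + 1 / L with hs
    have hL0 : 0 < 1 / L := by positivity
    have hL1 : 1 / L ≤ 1 := by rw [div_le_one (by linarith)]; exact hL.le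
    obtain ⟨hsum, hle⟩ := hlog s (by linarith) (by linarith)
    set g := fun p : ℕ => if p.Prime then Real.log p * (p:ℝ) ^ (-s) else 0 with hg
    set t := fun p : ℕ => if p.Prime then ρ p * (p:ℝ) ^ (-s) else 0 with ht
    set u := fun p : ℕ => if p ∈ (Finset.range (⌊x⌋₊ + 1)).filter Nat.Prime then ρ p / (p:ℝ) else 0 with hu
    have hub : ∀ p, |u p - t p| ≤ (n * Real.exp 1 * (1 / L)) * g p := by
      intro p
      by_cases hp : p.Prime
      swap
      · simp [hu, ht, hg, hp]
      have hp0 : (0:ℝ) < p := by exact_mod_cast hp.pos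
      have hlp : 0 ≤ Real.log p := Real.log_natCast_nonneg _
      have hps : (0:ℝ) < (p:ℝ) ^ (-s) := by positivity
      by_cases hpx : (p:ℝ) ≤ x
      · have hmem : p ∈ (Finset.range (⌊x⌋₊ + 1)).filter Nat.Prime := by
          simp only [Finset.mem_filter, Finset.mem_range, hp, and_true]
          exact Nat.lt_succ_of_le (Nat.le_floor hpx)
        simp only [hu, ht, hg, hp, if_true, if_pos hmem]
        have e1 : 1 / (p:ℝ) = (p:ℝ) ^ (-s) * Real.exp (Real.log p / L) := by
          rw [Real.rpow_def_of_pos hp0, ← Real.exp_add]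
          rw [show Real.log p * -s + Real.log p / L = - Real.log p by rw [hs]; ring]
          rw [Real.exp_neg, Real.exp_log hp0, one_div]
        have e2 : Real.log p / L ≤ 1 := by
          rw [div_le_one (by linarith)]
          exact Real.log_le_log hp0 hpx
        have e3 : 0 ≤ Real.log p / L := by positivity
        have e4 : Real.exp (Real.log p / L) - 1 ≤ Real.log p / L * Real.exp 1 := by
          have i1 : 1 - Real.log p / L ≤ Real.exp (-(Real.log p / L)) := by
            linarith [Real.add_one_le_exp (-(Real.log p / L))]
          have i2 : Real.exp (Real.log p / L) ≤ Real.exp 1 := Real.exp_le_exp.2 e2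
          have i3 : Real.exp (Real.log p / L) * Real.exp (-(Real.log p / L)) = 1 := by
            rw [← Real.exp_add]; simp
          have i4 := Real.exp_pos (Real.log p / L)
          nlinarith
        have e5 : 0 ≤ Real.exp (Real.log p / L) - 1 := by
          linarith [Real.add_one_le_exp (Real.log p / L)]
        have : ρ p / p - ρ p * (p:ℝ) ^ (-s) = ρ p * ((p:ℝ) ^ (-s) * (Real.exp (Real.log p / L) - 1)) := by
          rw [div_eq_mul_one_div, e1]; ring
        rw [this, abs_of_nonneg (mul_nonneg (h0 p hp) (mul_nonneg hps.le e5))]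
        calc _ ≤ n * ((p:ℝ) ^ (-s) * (Real.log p / L * Real.exp 1)) := by
              gcongr
              exact hn p hp
          _ = _ := by ring
      · have hmem : p ∉ (Finset.range (⌊x⌋₊ + 1)).filter Nat.Prime := by
          simp only [Finset.mem_filter, Finset.mem_range, hp, and_true]
          intro h
          exact hpx ((Nat.le_floor_iff (by linarith)).1 (Nat.le_of_lt_succ h))
        simp only [hu, ht, hg, hp, if_true, if_neg hmem]
        rw [zero_sub, abs_neg, abs_of_nonneg (mul_nonneg (h0 p hp) hps.le)]
        have e1 : 1 ≤ Real.log p / L := by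
          rw [le_div_iff₀ (by linarith), one_mul]
          exact Real.log_le_log (by linarith) (by linarith)
        have e2 : 1 ≤ Real.exp 1 := by linarith [Real.add_one_le_exp 1]
        calc ρ p * (p:ℝ) ^ (-s) ≤ n * (p:ℝ)^(-s) := by gcongr; exact hn p hp
          _ = n * (1 * 1) * (p:ℝ)^(-s) := by ring
          _ ≤ n * (Real.exp 1 * (Real.log p / L)) * (p:ℝ)^(-s) := by gcongr
          _ = _ := by ring
    have hus : HasSum u (∑ p ∈ (Finset.range (⌊x⌋₊ + 1)).filter Nat.Prime, ρ p / (p : ℝ)) := by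
      have := hasSum_sum_of_ne_finset_zero (L := .unconditional ℕ) (f := u) (s := (Finset.range (⌊x⌋₊ + 1)).filter Nat.Prime)
        (fun b hb => by simp only [hu, if_neg hb])
      convert this using 1
      refine Finset.sum_congr rfl fun p hp => ?_
      simp only [hu, if_pos hp]
    have hgs := hsum.mul_left (n * Real.exp 1 * (1 / L))
    have hds : Summable (fun p => |u p - t p|) :=
      Summable.of_nonneg_of_le (fun _ => abs_nonneg _) hub hgs
    have hts : Summable t := by
      have := hus.summable.sub hds.of_abs
      simpa using this
    rw [← hus.tsum_eq, ← hus.summable.tsum_sub hts]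
    calc _ ≤ ∑' p, |u p - t p| := by
            have := norm_tsum_le_tsum_norm (f := fun p => u p - t p) (by simpa using hds)
            simpa using this
      _ ≤ _ := hds.tsum_le_tsum hub hgs
      _ = (n * Real.exp 1 * (1 / L)) * ∑' p, g p := tsum_mul_left
      _ ≤ (n * Real.exp 1 * (1 / L)) * (A / (s - 1)) := by gcongr
      _ = _ := by
        rw [hs]
        have : L ≠ 0 := by linarith
        field_simp
        ring
  set X0 := Real.exp (1 / δ) with hX0
  set B := n * Real.exp 1 * A + |C| + n * (⌊X0⌋₊ + 1) + |Real.log (1 / δ)| with hB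
  have hB1 : 0 ≤ n * Real.exp 1 * A := by positivity
  have hB2 : 0 ≤ n * ((⌊X0⌋₊:ℝ) + 1) := by positivity
  refine ⟨B, by positivity, fun x hx => ?_⟩
  have hL : 1 < Real.log x := by
    rw [Real.lt_log_iff_exp_lt (by linarith)]
    linarith [Real.exp_one_lt_d9]
  by_cases hxx : x ≤ X0
  · have hll : 0 ≤ Real.log (Real.log x) := Real.log_nonneg hL.le
    have hll2 : Real.log (Real.log x) ≤ Real.log (1 / δ) := by
      apply Real.log_le_log (by linarith)
      rw [Real.log_le_iff_le_exp (by linarith)]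
      exact hxx
    have hS0 : 0 ≤ ∑ p ∈ (Finset.range (⌊x⌋₊ + 1)).filter Nat.Prime, ρ p / (p : ℝ) :=
      Finset.sum_nonneg fun p hp => div_nonneg (h0 p (Finset.mem_filter.1 hp).2) (by positivity)
    have hS1 : ∑ p ∈ (Finset.range (⌊x⌋₊ + 1)).filter Nat.Prime, ρ p / (p : ℝ) ≤ n * (⌊X0⌋₊ + 1) := by
      calc _ ≤ ∑ p ∈ (Finset.range (⌊x⌋₊ + 1)).filter Nat.Prime, n := by
            refine Finset.sum_le_sum fun p hp => ?_
            have hp' := (Finset.mem_filter.1 hp).2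
            exact (div_le_self (h0 p hp') (by exact_mod_cast hp'.one_lt.le)).trans (hn p hp')
        _ = (((Finset.range (⌊x⌋₊ + 1)).filter Nat.Prime).card : ℝ) * n := by simp
        _ ≤ ((⌊X0⌋₊ + 1 : ℕ) : ℝ) * n := by
            gcongr
            refine (Finset.card_filter_le _ _).trans ?_
            rw [Finset.card_range]
            gcongr
        _ = _ := by push_cast; ring
    have := le_abs_self (Real.log (1/δ))
    rw [abs_le]
    have := abs_nonneg C
    constructor <;> linarith
  · push Not at hxx
    have hs2 : 1 / Real.log x < δ := by
      rw [div_lt_comm₀ (by linarith) hδ]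
      rw [Real.lt_log_iff_exp_lt (by linarith)]
      exact hxx
    have h1 := main x hx
    have h2 := H (1 + 1 / Real.log x) (by have : 0 < 1 / Real.log x := by positivity
                                          linarith) (by linarith)
    have h3 : 1 / (1 + 1 / Real.log x - 1) = Real.log x := by
      rw [add_sub_cancel_left, one_div_one_div]
    rw [h3] at h2
    have h4 := abs_sub_le (∑ p ∈ (Finset.range (⌊x⌋₊ + 1)).filter Nat.Prime, ρ p / (p : ℝ))
      (∑' p : ℕ, if p.Prime then ρ p * (p:ℝ) ^ (-(1 + 1 / Real.log x)) else 0) (Real.log (Real.log x))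
    have := le_abs_self C
    have := abs_nonneg (Real.log (1/δ))
    linarith

end

section

theorem euler_bound (n : ℕ) : ∃ C : ℝ, ∀ (a : ℕ → ℝ) (s : ℝ), 1 < s → a 1 = 1 →
    (∀ m k : ℕ, m.Coprime k → a (m * k) = a m * a k) → (∀ m, 0 ≤ a m) →
    (∀ p k : ℕ, p.Prime → a (p ^ k) ≤ ((k:ℝ) + 1) ^ n) →
    Summable (fun m : ℕ => a m * (m:ℝ) ^ (-s)) →
    |(∑' p : ℕ, if p.Prime then a p * (p:ℝ) ^ (-s) else 0) -
      Real.log (∑' m : ℕ, a m * (m:ℝ) ^ (-s))| ≤ C := by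
  have hMs : Summable (fun k : ℕ => ((k:ℝ) + 3) ^ n * (1/2:ℝ) ^ k) := by
    have h1 : Summable (fun k : ℕ => (k:ℝ) ^ n * (1/2:ℝ) ^ k) :=
      summable_pow_mul_geometric_of_norm_lt_one n (by norm_num)
    have h2 := ((summable_nat_add_iff 3).2 h1).mul_left 8
    refine h2.congr fun k => ?_
    push_cast
    rw [pow_add]; ring
  set M := ∑' k : ℕ, ((k:ℝ) + 3) ^ n * (1/2:ℝ) ^ k with hM
  have hM0 : 0 ≤ M := tsum_nonneg fun k => by positivity
  have hQs : Summable (fun k : ℕ => 1 / (k:ℝ) ^ 2) := Real.summable_one_div_nat_pow.2 (by norm_num)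
  set Q := ∑' k : ℕ, 1 / (k:ℝ) ^ 2 with hQ
  have hQ0 : 0 ≤ Q := tsum_nonneg fun k => by positivity
  set D : ℝ := 2 ^ n + M with hD
  refine ⟨M * Q + D ^ 2 * Q, fun a s hs a1 hmul h0 hpk hsum => ?_⟩
  set f := fun m : ℕ => a m * (m:ℝ) ^ (-s) with hf
  have hf0 : ∀ m, 0 ≤ f m := fun m => mul_nonneg (h0 m) (by positivity)
  have hEP := EulerProduct.eulerProduct (f := f) (by simp [hf, a1])
    (fun {m k} h => by
      simp only [hf]
      rw [hmul m k h]
      push_cast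
      rw [Real.mul_rpow (by positivity) (by positivity)]; ring)
    (by simpa only [Real.norm_eq_abs, abs_of_nonneg (hf0 _)] using hsum)
    (by simp only [hf, Nat.cast_zero, Real.zero_rpow (by linarith : -s ≠ 0), mul_zero])
  -- local factors
  have hloc : ∀ p : ℕ, p.Prime → 0 ≤ (∑' e, f (p ^ e)) - 1 - f p ∧
      (∑' e, f (p ^ e)) - 1 - f p ≤ M * (1 / (p:ℝ) ^ 2) := by
    intro p hp
    have hp2 : (2:ℝ) ≤ p := by exact_mod_cast hp.two_le
    have hb : ∀ k : ℕ, f (p ^ (k + 2)) ≤ (1 / (p:ℝ) ^ 2) * (((k:ℝ) + 3) ^ n * (1/2:ℝ) ^ k) := by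
      intro k
      simp only [hf]
      have i1 : a (p ^ (k+2)) ≤ ((k:ℝ) + 3) ^ n := by
        have := hpk p (k+2) hp
        push_cast at this
        rw [show (k:ℝ) + 2 + 1 = k + 3 by ring] at this
        exact this
      have i2 : ((p ^ (k+2) : ℕ) : ℝ) ^ (-s) ≤ (1 / (p:ℝ) ^ 2) * (1/2:ℝ) ^ k := by
        have j1 : (1:ℝ) ≤ ((p ^ (k+2) : ℕ) : ℝ) := by exact_mod_cast Nat.one_le_pow _ _ hp.pos
        calc ((p ^ (k+2) : ℕ) : ℝ) ^ (-s) ≤ ((p ^ (k+2) : ℕ) : ℝ) ^ (-1:ℝ) :=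
              Real.rpow_le_rpow_of_exponent_le j1 (by linarith)
          _ = (1 / (p:ℝ)^2) * (1 / (p:ℝ)) ^ k := by
              rw [Real.rpow_neg_one]; push_cast
              rw [pow_add, mul_inv, one_div_pow]; ring
          _ ≤ _ := by gcongr
      calc _ ≤ ((k:ℝ) + 3) ^ n * ((1 / (p:ℝ) ^ 2) * (1/2:ℝ) ^ k) :=
            mul_le_mul i1 i2 (by positivity) (by positivity)
        _ = _ := by ring
    have hs2 : Summable (fun k : ℕ => f (p ^ (k+2))) :=
      Summable.of_nonneg_of_le (fun _ => hf0 _) hb (hMs.mul_left _)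
    have hs1 : Summable (fun k : ℕ => f (p ^ k)) := (summable_nat_add_iff 2).1 hs2
    have heq := hs1.sum_add_tsum_nat_add 2
    simp only [Finset.sum_range_succ, Finset.sum_range_zero, pow_zero, pow_one, zero_add] at heq
    have f1 : f 1 = 1 := by simp [hf, a1]
    rw [f1] at heq
    have e : (∑' e, f (p ^ e)) - 1 - f p = ∑' k, f (p ^ (k+2)) := by linarith
    rw [e]
    refine ⟨tsum_nonneg fun _ => hf0 _, ?_⟩
    calc _ ≤ _ := hs2.tsum_le_tsum hb (hMs.mul_left _)
      _ = _ := by rw [tsum_mul_left, mul_comm]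
  have hfp : ∀ p : ℕ, p.Prime → f p ≤ 2 ^ n * (1 / (p:ℝ)) := by
    intro p hp
    have i1 := hpk p 1 hp
    simp only [pow_one, Nat.cast_one] at i1
    norm_num at i1
    have hp1 : (1:ℝ) ≤ p := by exact_mod_cast hp.one_lt.le
    have i2 : (p:ℝ) ^ (-s) ≤ 1 / (p:ℝ) := by
      rw [one_div, ← Real.rpow_neg_one]
      exact Real.rpow_le_rpow_of_exponent_le hp1 (by linarith)
    exact mul_le_mul i1 i2 (by positivity) (by positivity)
  set g := fun p : ℕ => if p.Prime then a p * (p:ℝ) ^ (-s) else 0 with hg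
  have hgs : Summable g := by
    refine Summable.of_nonneg_of_le (fun p => ?_) (fun p => ?_) hsum
    · simp only [hg]; split_ifs
      · exact hf0 p
      · exact le_rfl
    · simp only [hg]; split_ifs
      · exact le_rfl
      · exact hf0 p
  have hT := hgs.hasSum.tendsto_sum_nat
  have hgsum : ∀ N, ∑ p ∈ Finset.range N, g p = ∑ p ∈ N.primesBelow, f p := by
    intro N
    rw [Nat.primesBelow, Finset.sum_filter]
  simp only [hgsum] at hT
  have hQle : ∀ N : ℕ, ∑ p ∈ N.primesBelow, 1 / (p:ℝ) ^ 2 ≤ Q := fun N =>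
    hQs.sum_le_tsum _ (fun _ _ => by positivity)
  have hup : (∑' m, f m) ≤ Real.exp ((∑' p, g p) + M * Q) := by
    refine le_of_tendsto_of_tendsto' hEP ((Real.continuous_exp.tendsto _).comp (hT.add_const (M*Q))) ?_
    intro N
    simp only [Function.comp]
    calc _ ≤ ∏ p ∈ N.primesBelow, Real.exp (f p + M * (1 / (p:ℝ)^2)) := by
          refine Finset.prod_le_prod (fun p hp => tsum_nonneg fun _ => hf0 _) fun p hp => ?_
          have := hloc p (Nat.prime_of_mem_primesBelow hp)
          have h2 := Real.add_one_le_exp (f p + M * (1 / (p:ℝ)^2))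
          linarith
      _ = Real.exp (∑ p ∈ N.primesBelow, f p + M * ∑ p ∈ N.primesBelow, (1 / (p:ℝ)^2)) := by
          rw [← Real.exp_sum, Finset.sum_add_distrib, Finset.mul_sum]
      _ ≤ _ := by
          rw [Real.exp_le_exp]
          have := mul_le_mul_of_nonneg_left (hQle N) hM0
          linarith
  have hlo : Real.exp ((∑' p, g p) - D ^ 2 * Q) ≤ ∑' m, f m := by
    refine le_of_tendsto_of_tendsto' ((Real.continuous_exp.tendsto _).comp (hT.sub_const (D^2*Q))) hEP ?_
    intro N
    simp only [Function.comp]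
    calc _ ≤ Real.exp (∑ p ∈ N.primesBelow, f p - D ^ 2 * ∑ p ∈ N.primesBelow, (1 / (p:ℝ)^2)) := by
          rw [Real.exp_le_exp]
          have := mul_le_mul_of_nonneg_left (hQle N) (sq_nonneg D)
          linarith
      _ = ∏ p ∈ N.primesBelow, Real.exp (f p - D ^ 2 * (1 / (p:ℝ)^2)) := by
          rw [← Real.exp_sum, Finset.sum_sub_distrib, Finset.mul_sum]
      _ ≤ _ := by
          refine Finset.prod_le_prod (fun p hp => (Real.exp_pos _).le) fun p hp => ?_
          have hp' := Nat.prime_of_mem_primesBelow hp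
          obtain ⟨l1, l2⟩ := hloc p hp'
          have l3 := hfp p hp'
          have l4 := hf0 p
          have hp1 : (1:ℝ) ≤ p := by exact_mod_cast hp'.one_lt.le
          obtain ⟨u, hu⟩ : ∃ u, u = (∑' e, f (p ^ e)) - 1 := ⟨_, rfl⟩
          have hu0 : f p ≤ u := by linarith
          have hu1 : u ≤ D * (1 / p) := by
            have : M * (1 / (p:ℝ)^2) ≤ M * (1 / p) := by
              gcongr
              nlinarith
            rw [hD, add_mul]; linarith
          have hu2 : u ^ 2 ≤ D ^ 2 * (1 / (p:ℝ)^2) := by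
            calc u ^ 2 ≤ (D * (1 / p)) ^ 2 := by gcongr; linarith
              _ = _ := by rw [mul_pow, one_div_pow]
          have hu3 : 0 ≤ u := by linarith
          have : u - u ^ 2 ≤ Real.log (1 + u) := by
            refine le_trans ?_ (Real.one_sub_inv_le_log_of_pos (by linarith))
            have : 1 - (1+u)⁻¹ = u / (1+u) := by field_simp; ring
            rw [this, le_div_iff₀ (by linarith)]
            nlinarith [pow_nonneg hu3 3]
          rw [show (∑' e, f (p ^ e)) = 1 + u by linarith, ← Real.le_log_iff_exp_le (by linarith)]
          linarith
  have hpos : 0 < ∑' m, f m := lt_of_lt_of_le (Real.exp_pos _) hlo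
  rw [← Real.le_log_iff_exp_le hpos] at hlo
  rw [← Real.log_le_iff_le_exp hpos] at hup
  have : 0 ≤ M * Q := by positivity
  have : 0 ≤ D^2 * Q := by positivity
  rw [abs_le]
  constructor <;> linarith

open Filter Topology in
/-- Zeta functions with a simple pole. -/
theorem zeta_bound (a : ℕ → ℕ) (n : ℕ) (r : ℝ) (hr : 0 < r) (ha1 : a 1 = 1)
    (hmul : ∀ m k : ℕ, m.Coprime k → a (m * k) = a m * a k)
    (hpk : ∀ p k : ℕ, p.Prime → a (p ^ k) ≤ (k + 1) ^ n)
    (hlim : Tendsto (fun s : ℝ ↦ ((s:ℂ) - 1) * LSeries (fun n ↦ (a n : ℂ)) s) (𝓝[>] 1) (𝓝 (r:ℂ))) :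
    ∃ δ C : ℝ, 0 < δ ∧ ∀ s : ℝ, 1 < s → s < 1 + δ →
      |(∑' p : ℕ, if p.Prime then (a p : ℝ) * (p:ℝ) ^ (-s) else 0) - Real.log (1 / (s - 1))| ≤ C := by
  obtain ⟨C, hC⟩ := euler_bound n
  have hev : ∀ᶠ s : ℝ in 𝓝[>] 1, ‖((s:ℂ) - 1) * LSeries (fun n ↦ (a n : ℂ)) s - r‖ < r / 2 := by
    have := (tendsto_iff_norm_sub_tendsto_zero.1 hlim).eventually_lt_const (show 0 < r / 2 by positivity)
    exact this
  obtain ⟨v, hv, hsub⟩ := (mem_nhdsGT_iff_exists_Ioo_subset).1 hev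
  simp only [Set.mem_Ioi] at hv
  refine ⟨v - 1, C + (|Real.log (r / 2)| + |Real.log (2 * r)|), by linarith, fun s h1 h2 => ?_⟩
  have hs := hsub (show s ∈ Set.Ioo 1 v from ⟨h1, by linarith⟩)
  simp only [Set.mem_ofPred_eq] at hs
  have hterm : ∀ m : ℕ, LSeries.term (fun n ↦ (a n : ℂ)) s m = (((a m : ℝ) * (m:ℝ) ^ (-s) : ℝ) : ℂ) := by
    intro m
    rcases eq_or_ne m 0 with rfl | hm
    · simp [Real.zero_rpow (by linarith : -s ≠ 0)]
    · rw [LSeries.term_of_ne_zero hm, Real.rpow_neg (by positivity)]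
      push_cast
      rw [Complex.ofReal_cpow (by positivity)]
      push_cast
      rw [div_eq_mul_inv]
  set Z := ∑' m : ℕ, (a m : ℝ) * (m:ℝ) ^ (-s) with hZ
  have hL : LSeries (fun n ↦ (a n : ℂ)) s = (Z : ℂ) := by
    rw [LSeries, hZ, Complex.ofReal_tsum]
    exact tsum_congr hterm
  rw [hL] at hs
  have hs' : |(s - 1) * Z - r| < r / 2 := by
    have : (((s - 1) * Z - r : ℝ) : ℂ) = ((s:ℂ) - 1) * Z - r := by push_cast; ring
    rw [← this, Complex.norm_real, Real.norm_eq_abs] at hs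
    exact hs
  rw [abs_lt] at hs'
  have hsZ1 : r / 2 ≤ (s - 1) * Z := by linarith
  have hsZ2 : (s - 1) * Z ≤ 2 * r := by linarith
  have hZ0 : 0 < Z := by
    by_contra hc
    push Not at hc
    nlinarith
  have hsum : Summable (fun m : ℕ => (a m : ℝ) * (m:ℝ) ^ (-s)) := by
    by_contra hc
    rw [hZ, tsum_eq_zero_of_not_summable hc] at hZ0
    exact lt_irrefl _ hZ0
  have h3 := hC (fun m => (a m : ℝ)) s h1 (by simp [ha1])
    (fun m k h => by exact_mod_cast hmul m k h) (fun m => by positivity)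
    (fun p k hp => by exact_mod_cast hpk p k hp) hsum
  have h4 : Real.log ((s-1) * Z) = Real.log Z - Real.log (1 / (s-1)) := by
    rw [Real.log_mul (by linarith) (by linarith), one_div, Real.log_inv]; ring
  have h5 : |Real.log Z - Real.log (1 / (s-1))| ≤ |Real.log (r / 2)| + |Real.log (2 * r)| := by
    rw [← h4]
    have k1 := Real.log_le_log (by positivity) hsZ1
    have k2 := Real.log_le_log (by nlinarith) hsZ2
    rw [abs_le]
    constructor
    · linarith [neg_abs_le (Real.log (r/2)), abs_nonneg (Real.log (2 * r))]
    · linarith [le_abs_self (Real.log (2 * r)), abs_nonneg (Real.log (r / 2))]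
  exact (abs_sub_le _ _ _).trans (add_le_add h3 h5)

end

section

open NumberField

noncomputable def idCount (K : Type*) [Field K] [NumberField K] (n : ℕ) : ℕ :=
  Nat.card {I : Ideal (𝓞 K) // Ideal.absNorm I = n}

theorem idCount_one (K : Type*) [Field K] [NumberField K] : idCount K 1 = 1 := by
  unfold idCount
  rw [Nat.card_eq_one_iff_unique]
  refine ⟨⟨fun a b => Subtype.ext ?_⟩, ⟨⟨⊤, by simp⟩⟩⟩
  rw [Ideal.absNorm_eq_one_iff.1 a.2, Ideal.absNorm_eq_one_iff.1 b.2]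

theorem sup_coprime {R : Type*} [CommRing R] (J : Ideal R) (m k : ℕ) (h : m.Coprime k)
    (hk : (k : R) ∈ J) : J ⊔ Ideal.span {(m : R)} = ⊤ := by
  rw [Ideal.eq_top_iff_one]
  have h1 := Nat.isCoprime_iff_coprime.2 h
  obtain ⟨a, b, hab⟩ := h1
  have h2 : (1 : R) = b * k + a * m := by
    have := congrArg (fun z : ℤ => (z : R)) hab
    push_cast at this
    rw [← this]; ring
  rw [h2]
  exact Ideal.add_mem _ (Ideal.mem_sup_left (J.mul_mem_left _ hk))
    (Ideal.mem_sup_right (Ideal.mul_mem_left _ _ (Ideal.subset_span rfl)))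

theorem idCount_mul (K : Type*) [Field K] [NumberField K] (m k : ℕ) (h : m.Coprime k) :
    idCount K (m * k) = idCount K m * idCount K k := by
  rcases Nat.eq_zero_or_pos m with rfl | hm
  · have : k = 1 := by simpa using h
    subst this; simp [idCount_one]
  rcases Nat.eq_zero_or_pos k with rfl | hk
  · have : m = 1 := by simpa using h
    subst this; simp [idCount_one]
  unfold idCount
  rw [← Nat.card_prod]
  symm
  have key : ∀ (I J : Ideal (𝓞 K)) (m k : ℕ), m.Coprime k → Ideal.absNorm I = m →
      Ideal.absNorm J = k → I * J ⊔ Ideal.span {(m : 𝓞 K)} = I := by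
    intro I J m k h hI hJ
    have hmI : (m : 𝓞 K) ∈ I := hI ▸ Ideal.absNorm_mem I
    have hkJ : (k : 𝓞 K) ∈ J := hJ ▸ Ideal.absNorm_mem J
    have h1 := sup_coprime J m k h hkJ
    apply le_antisymm
    · exact sup_le Ideal.mul_le_left ((Ideal.span_singleton_le_iff_mem _).2 hmI)
    · calc I = I * (J ⊔ Ideal.span {(m : 𝓞 K)}) := by rw [h1, Ideal.mul_top]
        _ = I * J ⊔ I * Ideal.span {(m : 𝓞 K)} := Ideal.mul_sup _ _ _
        _ ≤ _ := sup_le_sup le_rfl Ideal.mul_le_right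
  have hcop : ∀ (L : Ideal (𝓞 K)) (m k : ℕ), m.Coprime k →
      (Ideal.absNorm (L ⊔ Ideal.span {(m : 𝓞 K)})).Coprime k := by
    intro L m k h
    have h1 : Ideal.absNorm (L ⊔ Ideal.span {(m : 𝓞 K)}) ∣
        Ideal.absNorm (Ideal.span {(m : 𝓞 K)}) := Ideal.absNorm_dvd_absNorm_of_le le_sup_right
    rw [Ideal.absNorm_span_natCast] at h1
    exact Nat.Coprime.coprime_dvd_left h1 (Nat.Coprime.pow_left _ h)
  refine Nat.card_congr (Equiv.ofBijective
    (fun P : {I : Ideal (𝓞 K) // Ideal.absNorm I = m} × {I : Ideal (𝓞 K) // Ideal.absNorm I = k} =>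
      (⟨P.1.1 * P.2.1, by rw [map_mul, P.1.2, P.2.2]⟩ :
        {I : Ideal (𝓞 K) // Ideal.absNorm I = m * k})) ⟨?_, ?_⟩)
  · rintro ⟨⟨I, hI⟩, ⟨J, hJ⟩⟩ ⟨⟨I', hI'⟩, ⟨J', hJ'⟩⟩ heq
    have heq : I * J = I' * J' := congrArg Subtype.val heq
    have e1 := key I J m k h hI hJ
    have e2 := key I' J' m k h hI' hJ'
    have e3 := key J I k m h.symm hJ hI
    have e4 := key J' I' k m h.symm hJ' hI'
    rw [mul_comm] at e3 e4
    rw [heq] at e1 e3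
    simp only [Prod.mk.injEq, Subtype.mk.injEq]
    exact ⟨e1.symm.trans e2, e3.symm.trans e4⟩
  · rintro ⟨L, hL⟩
    have hmul : (L ⊔ Ideal.span {(m : 𝓞 K)}) * (L ⊔ Ideal.span {(k : 𝓞 K)}) = L := by
      apply le_antisymm
      · rw [Ideal.sup_mul, Ideal.mul_sup, Ideal.mul_sup]
        refine sup_le (sup_le Ideal.mul_le_left Ideal.mul_le_left)
          (sup_le Ideal.mul_le_right ?_)
        rw [Ideal.span_singleton_mul_span_singleton, Ideal.span_singleton_le_iff_mem,
          ← Nat.cast_mul, ← hL]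
        exact Ideal.absNorm_mem L
      · have h1 : (L ⊔ Ideal.span {(k : 𝓞 K)}) ⊔ Ideal.span {(m : 𝓞 K)} = ⊤ :=
          sup_coprime _ m k h (Ideal.mem_sup_right (Ideal.subset_span rfl))
        calc L = L * ((L ⊔ Ideal.span {(k : 𝓞 K)}) ⊔ Ideal.span {(m : 𝓞 K)}) := by
              rw [h1, Ideal.mul_top]
          _ = L * (L ⊔ Ideal.span {(k : 𝓞 K)}) ⊔ L * Ideal.span {(m : 𝓞 K)} :=
              Ideal.mul_sup _ _ _
          _ ≤ _ := sup_le (Ideal.mul_mono_left le_sup_left) (by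
              rw [mul_comm]; exact Ideal.mul_mono le_sup_right le_sup_left)
    have hN := congrArg Ideal.absNorm hmul
    rw [map_mul, hL] at hN
    have c1 := hcop L m k h
    have c2 := hcop L k m h.symm
    have d1 : Ideal.absNorm (L ⊔ Ideal.span {(m : 𝓞 K)}) ∣ m :=
      c1.dvd_of_dvd_mul_right (Dvd.intro _ hN)
    have d2 : Ideal.absNorm (L ⊔ Ideal.span {(k : 𝓞 K)}) ∣ k :=
      c2.dvd_of_dvd_mul_left (Dvd.intro_left _ hN)
    have d3 : m ∣ Ideal.absNorm (L ⊔ Ideal.span {(m : 𝓞 K)}) :=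
      c2.symm.dvd_of_dvd_mul_right (hN ▸ Dvd.intro _ rfl)
    have d4 : k ∣ Ideal.absNorm (L ⊔ Ideal.span {(k : 𝓞 K)}) :=
      c1.symm.dvd_of_dvd_mul_left (hN ▸ Dvd.intro_left _ rfl)
    exact ⟨⟨⟨_, Nat.dvd_antisymm d1 d3⟩, ⟨_, Nat.dvd_antisymm d2 d4⟩⟩, Subtype.ext hmul⟩

end

section

open NumberField

open UniqueFactorizationMonoid in
theorem card_factors_le (K : Type*) [Field K] [NumberField K] (p k : ℕ) (hp : p.Prime)
    (I : Ideal (𝓞 K)) (hI : Ideal.absNorm I = p ^ k) :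
    Multiset.card (normalizedFactors I) ≤ k := by
  have hI0 : I ≠ 0 := by
    rintro rfl
    simp at hI
    exact (pow_ne_zero k hp.ne_zero) hI.symm
  have h1 : (normalizedFactors I).prod = I := Ideal.prod_normalizedFactors_eq_self hI0
  have h2 : ((normalizedFactors I).map Ideal.absNorm).prod = p ^ k := by
    rw [← hI, Multiset.prod_hom, h1]
  have h3 : ∀ P ∈ normalizedFactors I, p ∣ Ideal.absNorm P := by
    intro P hP
    have hd : Ideal.absNorm P ∣ p ^ k := by
      rw [← hI]; exact map_dvd _ (dvd_of_mem_normalizedFactors hP)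
    obtain ⟨j, hj, hj2⟩ := (Nat.dvd_prime_pow hp).1 hd
    rcases Nat.eq_zero_or_pos j with rfl | hj0
    · exfalso
      have : P = ⊤ := Ideal.absNorm_eq_one_iff.1 (by simpa using hj2)
      exact (prime_of_normalized_factor P hP).not_isUnit (Ideal.isUnit_iff.2 this)
    · rw [hj2]; exact dvd_pow_self p hj0.ne'
  have h4 : ∀ s : Multiset (Ideal (𝓞 K)), (∀ P ∈ s, p ∣ Ideal.absNorm P) →
      p ^ (Multiset.card s) ∣ (s.map Ideal.absNorm).prod := by
    intro s
    induction s using Multiset.induction_on with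
    | empty => simp
    | cons a s ih =>
      intro h
      rw [Multiset.card_cons, Multiset.map_cons, Multiset.prod_cons, pow_succ']
      exact mul_dvd_mul (h a (Multiset.mem_cons_self a s))
        (ih fun P hP => h P (Multiset.mem_cons_of_mem hP))
  have h5 := h4 _ h3
  rw [h2] at h5
  exact (Nat.pow_dvd_pow_iff_le_right hp.one_lt).1 h5

open UniqueFactorizationMonoid in
open Classical in
theorem idCount_prime_pow (K : Type*) [Field K] [NumberField K] (p k : ℕ) (hp : p.Prime) :
    idCount K (p ^ k) ≤ (k + 1) ^ (Module.finrank ℤ (𝓞 K)) := by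
  set n := Module.finrank ℤ (𝓞 K)
  set S := normalizedFactors (Ideal.span {(p : 𝓞 K)})
  have hS : Multiset.card S ≤ n :=
    card_factors_le K p n hp _ (by rw [Ideal.absNorm_span_natCast])
  have hp0 : Ideal.span {(p : 𝓞 K)} ≠ 0 := by
    simp [hp.ne_zero]
  have hne : ∀ I : Ideal (𝓞 K), Ideal.absNorm I = p ^ k → I ≠ 0 := by
    rintro I hI rfl
    simp at hI
    exact (pow_ne_zero k hp.ne_zero) hI.symm
  have hmem : ∀ I : Ideal (𝓞 K), Ideal.absNorm I = p ^ k → ∀ P ∈ normalizedFactors I,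
      P ∈ S.toFinset := by
    intro I hI P hP
    have hPp := prime_of_normalized_factor P hP
    have h1 : I ∣ Ideal.span {(p : 𝓞 K)} ^ k := by
      rw [Ideal.dvd_iff_le, Ideal.span_singleton_pow, Ideal.span_singleton_le_iff_mem]
      have := Ideal.absNorm_mem I
      rw [hI] at this
      exact_mod_cast this
    have h2 : P ∣ Ideal.span {(p : 𝓞 K)} :=
      hPp.dvd_of_dvd_pow ((dvd_of_mem_normalizedFactors hP).trans h1)
    rw [Multiset.mem_toFinset, mem_normalizedFactors_iff' hp0]
    exact ⟨hPp.irreducible, normalize_eq _, h2⟩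
  let F : {I : Ideal (𝓞 K) // Ideal.absNorm I = p ^ k} → (S.toFinset → Fin (k + 1)) :=
    fun I P => ⟨(normalizedFactors I.1).count P.1, Nat.lt_succ_of_le
      ((Multiset.count_le_card _ _).trans (card_factors_le K p k hp I.1 I.2))⟩
  have hF : Function.Injective F := by
    intro I J h
    apply Subtype.ext
    rw [← Ideal.prod_normalizedFactors_eq_self (hne I.1 I.2),
      ← Ideal.prod_normalizedFactors_eq_self (hne J.1 J.2)]
    congr 1
    ext P
    by_cases hP : P ∈ S.toFinset
    · have := congrFun h ⟨P, hP⟩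
      exact congrArg Fin.val this
    · rw [Multiset.count_eq_zero_of_notMem (fun h => hP (hmem I.1 I.2 P h)),
        Multiset.count_eq_zero_of_notMem (fun h => hP (hmem J.1 J.2 P h))]
  unfold idCount
  refine (Nat.card_le_card_of_injective F hF).trans ?_
  rw [Nat.card_eq_fintype_card, Fintype.card_fun, Fintype.card_fin, Fintype.card_coe]
  exact Nat.pow_le_pow_right (Nat.succ_pos k) ((Multiset.toFinset_card_le S).trans hS)

end

section

open NumberField

open UniqueFactorizationMonoid Polynomial in
theorem idCount_prime (K : Type*) [Field K] [NumberField K] (θ : 𝓞 K) (p : ℕ) (hp : p.Prime)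
    (hpe : ¬ p ∣ RingOfIntegers.exponent θ) : idCount K p = rhoF (minpoly ℤ θ) p := by
  have : Fact p.Prime := ⟨hp⟩
  set f := minpoly ℤ θ with hf
  have hfm : f.Monic := minpoly.monic θ.isIntegral
  have hf0 : f.map (Int.castRingHom (ZMod p)) ≠ 0 := (hfm.map _).ne_zero
  have hroot : ∀ α : ZMod p, aeval α f = 0 →
      (X - C α) ∈ RingOfIntegers.monicFactorsMod θ p := by
    intro α hα
    rw [Multiset.mem_toFinset, mem_normalizedFactors_iff' hf0]
    refine ⟨irreducible_X_sub_C α, (monic_X_sub_C α).normalize_eq_self, ?_⟩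
    rw [dvd_iff_isRoot, IsRoot.def, eval_map, ← hα]
    rfl
  set e := NumberField.Ideal.primesOverSpanEquivMonicFactorsMod (θ := θ) hpe
  have hnorm : ∀ P : (Ideal.primesOver (Ideal.span {(p : ℤ)}) (𝓞 K)),
      Ideal.absNorm P.1 = p ^ (natDegree (e P).1) := by
    intro P
    have h1 := NumberField.Ideal.inertiaDeg_primesOverSpanEquivMonicFactorsMod_symm_apply' (θ := θ) hpe (e P).2
    have h2 : ((NumberField.Ideal.primesOverSpanEquivMonicFactorsMod hpe).symm ⟨(e P).1, (e P).2⟩) = P :=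
      e.symm_apply_apply P
    rw [h2] at h1
    have := P.2.1
    have := P.2.2
    rw [← h1, Ideal.pow_inertiaDeg p P.1]
  symm
  unfold idCount rhoF
  refine Nat.card_congr (Equiv.ofBijective
    (fun α : {α : ZMod p // aeval α f = 0} =>
      (⟨(e.symm ⟨X - C α.1, hroot α.1 α.2⟩).1, by rw [hnorm]; simp⟩ :
        {I : Ideal (𝓞 K) // Ideal.absNorm I = p})) ⟨?_, ?_⟩)
  · intro α β h
    have h1 := congrArg Subtype.val h
    have h2 : e.symm ⟨X - C α.1, hroot α.1 α.2⟩ = e.symm ⟨X - C β.1, hroot β.1 β.2⟩ :=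
      Subtype.ext h1
    have h3 := congrArg Subtype.val (e.symm.injective h2)
    have h4 : C α.1 = C β.1 := sub_right_injective h3
    exact Subtype.ext (C_injective h4)
  · rintro ⟨I, hI⟩
    have hIp : I.IsPrime := Ideal.isPrime_of_irreducible_absNorm (by rw [hI]; exact hp)
    have hover : I.LiesOver (Ideal.span {(p : ℤ)}) := by
      have hmax : (Ideal.span {(p : ℤ)}).IsMaximal := Int.ideal_span_isMaximal_of_prime p
      refine ⟨hmax.eq_of_le (Ideal.IsPrime.ne_top (Ideal.IsPrime.under ℤ I)) ?_⟩
      rw [Ideal.span_singleton_le_iff_mem, Ideal.under_def, Ideal.mem_comap]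
      have := Ideal.absNorm_mem I
      rw [hI] at this
      simpa using this
    set P : (Ideal.primesOver (Ideal.span {(p : ℤ)}) (𝓞 K)) := ⟨I, hIp, hover⟩ with hP
    have h1 := hnorm P
    have h2 : natDegree (e P).1 = 1 := by
      have : p ^ 1 = p ^ (natDegree (e P).1) := by rw [← h1, pow_one, hP, hI]
      exact (Nat.pow_right_injective hp.two_le this).symm
    have hmem := (e P).2
    rw [Multiset.mem_toFinset, mem_normalizedFactors_iff' hf0] at hmem
    obtain ⟨hirr, hnormz, hdvd⟩ := hmem
    have hmon : (e P).1.Monic := by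
      rw [← hnormz]; exact monic_normalize hirr.ne_zero
    obtain ⟨a, ha⟩ : ∃ a, (e P).1 = X - C a :=
      ⟨-((e P).1.coeff 0), by
        conv_lhs => rw [hmon.eq_X_add_C h2]
        simp⟩
    have hα : aeval a f = 0 := by
      rw [ha, dvd_iff_isRoot, IsRoot.def, eval_map] at hdvd
      exact hdvd
    refine ⟨⟨a, hα⟩, Subtype.ext ?_⟩
    have : (⟨X - C a, hroot a hα⟩ : RingOfIntegers.monicFactorsMod θ p) = e P := Subtype.ext ha.symm
    show (e.symm ⟨X - C a, hroot a hα⟩).1 = I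
    rw [this, e.symm_apply_apply]

open UniqueFactorizationMonoid Polynomial in
theorem exponent_ne_zero (K : Type*) [Field K] [NumberField K] (θ : 𝓞 K)
    (B : PowerBasis ℚ K) (hB : B.gen = (θ : K)) : RingOfIntegers.exponent θ ≠ 0 := by
  have hIntg : IsIntegral ℤ B.gen := by rw [hB]; exact RingOfIntegers.isIntegral_coe θ
  have hD : IsIntegral ℤ (Algebra.discr ℚ B.basis) := by
    apply Algebra.discr_isIntegral
    intro i
    rw [B.basis_eq_pow]
    exact hIntg.pow _
  obtain ⟨d, hd⟩ := IsIntegrallyClosed.isIntegral_iff.1 hD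
  have hd0 : d ≠ 0 := by
    rintro rfl
    exact Algebra.discr_not_zero_of_basis ℚ B.basis (by rw [← hd]; simp)
  have hmem : (d : 𝓞 K) ∈ conductor ℤ θ := by
    rw [mem_conductor_iff]
    intro b
    have h1 := Algebra.discr_mul_isIntegral_mem_adjoin ℚ hIntg (RingOfIntegers.isIntegral_coe b)
    rw [← hd, hB] at h1
    have h2 : Algebra.adjoin ℤ {(θ : K)} =
        (Algebra.adjoin ℤ {θ}).map (Algebra.algHom ℤ (𝓞 K) K) := by
      rw [AlgHom.map_adjoin, Set.image_singleton]; rfl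
    rw [h2] at h1
    obtain ⟨y, hy, hy2⟩ := h1
    have : y = (d : 𝓞 K) * b := by
      apply RingOfIntegers.coe_injective
      rw [RingHom.map_mul]
      have hy3 : algebraMap (𝓞 K) K y = _ := hy2
      rw [hy3]; simp [Algebra.smul_def]
    rw [← this]; exact hy
  unfold RingOfIntegers.exponent
  rw [Ne, Ideal.absNorm_eq_zero_iff]
  intro h
  have : d ∈ Ideal.under ℤ (conductor ℤ θ) := by
    rw [Ideal.under_def, Ideal.mem_comap]; simpa using hmem
  rw [h] at this
  exact hd0 (by simpa using this)

end

section

open NumberField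

/-- Changing the weights at the finitely many primes dividing `d`. -/
theorem transfer (u v : ℕ → ℝ) (d : ℕ) (hd : d ≠ 0)
    (h : ∀ p, p.Prime → ¬ p ∣ d → u p = v p) (κ : ℝ)
    (H : ∃ C : ℝ, 0 ≤ C ∧ ∀ x : ℝ, 3 ≤ x →
      |(∑ p ∈ (Finset.range (⌊x⌋₊ + 1)).filter Nat.Prime, u p / (p : ℝ)) -
          κ * Real.log (Real.log x)| ≤ C) :
    ∃ C : ℝ, 0 ≤ C ∧ ∀ x : ℝ, 3 ≤ x →
      |(∑ p ∈ (Finset.range (⌊x⌋₊ + 1)).filter Nat.Prime, v p / (p : ℝ)) -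
          κ * Real.log (Real.log x)| ≤ C := by
  obtain ⟨C, hC, H⟩ := H
  refine ⟨C + ∑ p ∈ d.primeFactors, |v p / p - u p / p|, by positivity, fun x hx => ?_⟩
  set S := (Finset.range (⌊x⌋₊ + 1)).filter Nat.Prime with hS
  have h1 : |∑ p ∈ S, v p / (p : ℝ) - ∑ p ∈ S, u p / (p : ℝ)| ≤
      ∑ p ∈ d.primeFactors, |v p / p - u p / p| := by
    rw [← Finset.sum_sub_distrib]
    refine (Finset.abs_sum_le_sum_abs _ _).trans ?_
    rw [← Finset.sum_filter_add_sum_filter_not S (fun p => p ∣ d)]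
    have h2 : ∑ p ∈ S with ¬ p ∣ d, |v p / (p : ℝ) - u p / p| = 0 := by
      refine Finset.sum_eq_zero fun p hp => ?_
      simp only [hS, Finset.mem_filter] at hp
      rw [h p hp.1.2 hp.2]; simp
    rw [h2, add_zero]
    refine Finset.sum_le_sum_of_subset_of_nonneg ?_ fun _ _ _ => abs_nonneg _
    intro p hp
    simp only [hS, Finset.mem_filter] at hp
    exact Nat.mem_primeFactors.2 ⟨hp.1.2, hp.2, hd⟩
  have h3 := H x hx
  calc _ = |(∑ p ∈ S, u p / (p : ℝ) - κ * Real.log (Real.log x)) +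
        (∑ p ∈ S, v p / (p : ℝ) - ∑ p ∈ S, u p / (p : ℝ))| := by congr 1; ring
    _ ≤ _ := (abs_add_le _ _).trans (add_le_add h3 h1)

theorem idCount_asymp (K : Type*) [Field K] [NumberField K] :
    ∃ C : ℝ, 0 ≤ C ∧ ∀ x : ℝ, 3 ≤ x →
      |(∑ p ∈ (Finset.range (⌊x⌋₊ + 1)).filter Nat.Prime, (idCount K p : ℝ) / (p : ℝ)) -
          Real.log (Real.log x)| ≤ C := by
  obtain ⟨δ, C, hδ, H⟩ := zeta_bound (idCount K) (Module.finrank ℤ (𝓞 K))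
    (dedekindZeta_residue K) (dedekindZeta_residue_pos K) (idCount_one K) (idCount_mul K)
    (idCount_prime_pow K) (tendsto_sub_one_mul_dedekindZeta_nhdsGT K)
  refine analytic_core (fun p => (idCount K p : ℝ)) (2 ^ Module.finrank ℤ (𝓞 K))
    (fun p _ => Nat.cast_nonneg _) (fun p hp => ?_) δ C hδ H
  have := idCount_prime_pow K p 1 hp
  rw [pow_one] at this
  exact_mod_cast this

open Polynomial in
theorem exists_field (g : ℚ[X]) (hg : Irreducible g) :
    ∃ (K : Type) (_ : Field K) (_ : NumberField K) (B : PowerBasis ℚ K), aeval B.gen g = 0 := by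
  have : Fact (Irreducible g) := ⟨hg⟩
  have hN : NumberField (AdjoinRoot g) := by
    have : CharZero (AdjoinRoot g) := algebraRat.charZero _
    have : FiniteDimensional ℚ (AdjoinRoot g) := (AdjoinRoot.powerBasis hg.ne_zero).finite
    exact { }
  have key : ∃ (B : PowerBasis ℚ (AdjoinRoot g)), aeval B.gen g = 0 := by
    refine ⟨AdjoinRoot.powerBasis hg.ne_zero, ?_⟩
    have h1 := AdjoinRoot.eval₂_root g
    rw [AdjoinRoot.powerBasis_gen, aeval_def, ← h1]
    congr 1
  refine ⟨AdjoinRoot g, inferInstance, hN, ?_⟩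
  convert key

open Polynomial in
theorem irred_case (f : ℤ[X]) (hf : f.Monic) (hirr : Irreducible f) :
    ∃ C : ℝ, 0 ≤ C ∧ ∀ x : ℝ, 3 ≤ x →
      |(∑ p ∈ (Finset.range (⌊x⌋₊ + 1)).filter Nat.Prime, (rhoF f p : ℝ) / (p : ℝ)) -
          (numIrredFactors f : ℝ) * Real.log (Real.log x)| ≤ C := by
  have hgirr : Irreducible (f.map (Int.castRingHom ℚ)) :=
    (Polynomial.Monic.irreducible_iff_irreducible_map_fraction_map (K := ℚ) hf).1 hirr
  have hκ : numIrredFactors f = 1 := by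
    unfold numIrredFactors
    rw [UniqueFactorizationMonoid.normalizedFactors_irreducible hgirr, Multiset.card_singleton]
  obtain ⟨K, _, _, B, hroot⟩ := exists_field _ hgirr
  rw [show Int.castRingHom ℚ = algebraMap ℤ ℚ from rfl, aeval_map_algebraMap] at hroot
  have hIntg : IsIntegral ℤ B.gen := ⟨f, hf, hroot⟩
  let θ : 𝓞 K := ⟨B.gen, hIntg⟩
  have hB : B.gen = (θ : K) := rfl
  have hmin : minpoly ℤ θ = f := by
    have h1 := minpoly.isIntegrallyClosed_dvd hIntg hroot
    have h2 : minpoly ℤ B.gen = minpoly ℤ θ := RingOfIntegers.minpoly_coe θ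
    rw [← h2]
    have h3 := (minpoly.prime_of_isIntegrallyClosed hIntg).irreducible.associated_of_dvd hirr h1
    exact eq_of_monic_of_associated (minpoly.monic hIntg) hf h3
  have hex := exponent_ne_zero K θ B hB
  refine transfer (fun p => (idCount K p : ℝ)) (fun p => (rhoF f p : ℝ)) _ hex
    (fun p hp hpd => ?_) _ ?_
  · have := idCount_prime K θ p hp hpd
    rw [hmin] at this
    simp only [this]
  · rw [hκ]
    simpa using idCount_asymp K

end

section

open NumberField

open Polynomial in
theorem bezout_int (g h : ℤ[X]) (hg : g.Monic) (hh : h.Monic) (hsf : Squarefree (g * h)) :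
    ∃ (d : ℤ) (U V : ℤ[X]), d ≠ 0 ∧ U * g + V * h = C d := by
  have hcop : IsCoprime (g.map (algebraMap ℤ ℚ)) (h.map (algebraMap ℤ ℚ)) := by
    rw [isCoprime_iff_aeval_ne_zero_of_isAlgClosed ℚ (AlgebraicClosure ℚ)]
    intro a
    by_contra! hcon
    obtain ⟨h1, h2⟩ := hcon
    rw [aeval_map_algebraMap] at h1 h2
    have hIntg : IsIntegral ℤ a := ⟨g, hg, h1⟩
    have d1 := minpoly.isIntegrallyClosed_dvd hIntg h1
    have d2 := minpoly.isIntegrallyClosed_dvd hIntg h2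
    exact minpoly.not_isUnit ℤ a (hsf _ (mul_dvd_mul d1 d2))
  obtain ⟨u, v, huv⟩ := hcop
  obtain ⟨b, hb⟩ := IsLocalization.integerNormalization_map_to_map (nonZeroDivisors ℤ) u
  obtain ⟨c, hc⟩ := IsLocalization.integerNormalization_map_to_map (nonZeroDivisors ℤ) v
  refine ⟨(b : ℤ) * c, C (c : ℤ) * IsLocalization.integerNormalization (nonZeroDivisors ℤ) u,
    C (b : ℤ) * IsLocalization.integerNormalization (nonZeroDivisors ℤ) v,
    mul_ne_zero (nonZeroDivisors.ne_zero b.2) (nonZeroDivisors.ne_zero c.2), ?_⟩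
  apply Polynomial.map_injective (algebraMap ℤ ℚ) (IsFractionRing.injective ℤ ℚ)
  simp only [Polynomial.map_add, Polynomial.map_mul, hb, hc, Polynomial.map_C, C_mul, map_mul]
  have e : ∀ (z : ℤ) (w : ℚ[X]), z • w = C (algebraMap ℤ ℚ z) * w := by
    intro z w
    rw [← algebraMap_smul ℚ z w, smul_eq_C_mul]
  rw [e, e]
  linear_combination (C (algebraMap ℤ ℚ b) * C (algebraMap ℤ ℚ c)) * huv

open Polynomial in
theorem rhoF_mul (g h U V : ℤ[X]) (d : ℤ) (H : U * g + V * h = C d) (p : ℕ) (hp : p.Prime)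
    (hpd : ¬ p ∣ d.natAbs) : rhoF (g * h) p = rhoF g p + rhoF h p := by
  have : Fact p.Prime := ⟨hp⟩
  have : NeZero p := ⟨hp.ne_zero⟩
  unfold rhoF
  rw [← Nat.card_sum]
  have hdis : Disjoint (fun α : ZMod p => aeval α g = 0) (fun α : ZMod p => aeval α h = 0) := by
    rw [Pi.disjoint_iff]
    intro α
    rw [Prop.disjoint_iff, not_and]
    intro h1 h2
    have h3 := congrArg (aeval α) H
    simp only [map_add, map_mul, h1, h2, mul_zero, add_zero, aeval_C] at h3
    apply hpd
    have h4 : ((d : ℤ) : ZMod p) = 0 := by simpa using h3.symm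
    rw [ZMod.intCast_zmod_eq_zero_iff_dvd] at h4
    exact Int.natCast_dvd.1 h4
  classical
  refine Nat.card_congr (Equiv.trans (Equiv.subtypeEquivRight fun α => ?_)
    (subtypeOrEquiv _ _ hdis))
  rw [map_mul, mul_eq_zero]

open Polynomial in
theorem general_case (n : ℕ) : ∀ (f : ℤ[X]), f.natDegree = n → f.Monic → Squarefree f →
    1 ≤ f.natDegree →
    ∃ C : ℝ, 0 ≤ C ∧ ∀ x : ℝ, 3 ≤ x →
      |(∑ p ∈ (Finset.range (⌊x⌋₊ + 1)).filter Nat.Prime, (rhoF f p : ℝ) / (p : ℝ)) -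
          (numIrredFactors f : ℝ) * Real.log (Real.log x)| ≤ C := by
  induction n using Nat.strong_induction_on with
  | _ n ih =>
  intro f hfn hf hsf hdeg
  by_cases hirr : Irreducible f
  · exact irred_case f hf hirr
  have hf1 : f ≠ 1 := by rintro rfl; simp at hdeg
  rw [hf.irreducible_iff_natDegree'] at hirr
  push Not at hirr
  obtain ⟨g, h, hg, hh, hgh, hmem⟩ := hirr hf1
  rw [Finset.mem_Ioc] at hmem
  subst hgh
  rw [hg.natDegree_mul hh] at hfn hmem
  obtain ⟨C₁, hC₁, H₁⟩ := ih g.natDegree (by omega) g rfl hg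
    (hsf.squarefree_of_dvd (Dvd.intro _ rfl)) (by omega)
  obtain ⟨C₂, hC₂, H₂⟩ := ih h.natDegree (by omega) h rfl hh
    (hsf.squarefree_of_dvd (Dvd.intro_left _ rfl)) (by omega)
  obtain ⟨d, U, V, hd, hUV⟩ := bezout_int g h hg hh hsf
  have hκ : numIrredFactors (g * h) = numIrredFactors g + numIrredFactors h := by
    unfold numIrredFactors
    rw [Polynomial.map_mul, UniqueFactorizationMonoid.normalizedFactors_mul
      (hg.map _).ne_zero (hh.map _).ne_zero, Multiset.card_add]
  refine transfer (fun p => (rhoF g p : ℝ) + rhoF h p) (fun p => (rhoF (g * h) p : ℝ)) d.natAbs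
    (Int.natAbs_ne_zero.2 hd) (fun p hp hpd => ?_) _ ⟨C₁ + C₂, by positivity, fun x hx => ?_⟩
  · simp only [rhoF_mul g h U V d hUV p hp hpd, Nat.cast_add]
  · have a1 := H₁ x hx
    have a2 := H₂ x hx
    rw [hκ]
    simp only [add_div, Finset.sum_add_distrib, Nat.cast_add]
    rw [abs_le] at a1 a2 ⊢
    constructor <;> nlinarith

end

theorem stmt13 (f : Polynomial ℤ) (hmonic : f.Monic) (hsf : Squarefree f)
    (hdeg : 1 ≤ f.natDegree) :
    ∃ C : ℝ, 0 ≤ C ∧ ∀ x : ℝ, 3 ≤ x →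
      |(∑ p ∈ (Finset.range (⌊x⌋₊ + 1)).filter Nat.Prime, (rhoF f p : ℝ) / (p : ℝ)) -
          (numIrredFactors f : ℝ) * Real.log (Real.log x)| ≤ C := by
  exact general_case f.natDegree f rfl hmonic hsf hdeg
end

section
/- Let f ∈ ℤ[T] be a monic polynomial of degree ≥ 1 and let κ be the number of distinct irreducible factors of f in ℚ[T]. Then there exist an integer r ≥ 1, a constant c > 0, and X₀ such that for all X ≥ X₀, |{m ∈ ℤ : 1 ≤ m ≤ X, f(m) ≠ 0, and Ω(f(m)) ≤ r}| ≥ c · X/(log X)^κ. In particular, there are infinitely many positive integers m such that f(m) has at most r prime factors counted with multiplicity. -/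
/-- For a nonzero integer `n`, `bigOmega n` is the number of prime factors of `|n|`
counted with multiplicity. -/
def bigOmega (n : ℤ) : ℕ := ArithmeticFunction.cardFactors n.natAbs

/-- The number of distinct irreducible factors of `f` viewed in `ℚ[T]`. -/
noncomputable def numDistinctIrredFactors (f : Polynomial ℤ) : ℕ :=
  (UniqueFactorizationMonoid.normalizedFactors (f.map (Int.castRingHom ℚ))).toFinset.card

section
namespace S14
open Finset

/-- elementary symmetric sums over subsets of a finite set -/
noncomputable def esy (x : ℕ → ℝ) (S : Finset ℕ) (i : ℕ) : ℝ :=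
  ∑ T ∈ S.powersetCard i, ∏ p ∈ T, x p

lemma esy_nonneg {x : ℕ → ℝ} {S : Finset ℕ} (hx : ∀ p ∈ S, 0 ≤ x p) (i : ℕ) : 0 ≤ esy x S i := by
  refine sum_nonneg fun T hT => prod_nonneg fun p hp => hx p ?_
  exact (mem_powersetCard.1 hT).1 hp

lemma esy_zero (x : ℕ → ℝ) (S : Finset ℕ) : esy x S 0 = 1 := by simp [esy]

lemma esy_insert (x : ℕ → ℝ) {S : Finset ℕ} {a : ℕ} (ha : a ∉ S) (i : ℕ) :
    esy x (insert a S) (i+1) = esy x S (i+1) + x a * esy x S i := by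
  unfold esy
  rw [powersetCard_succ_insert ha, sum_union, sum_image, mul_sum]
  · congr 1
    refine sum_congr rfl fun T hT => ?_
    rw [prod_insert]
    exact fun h => ha ((mem_powersetCard.1 hT).1 h)
  · intro T hT T' hT' h
    have h1 : a ∉ T := fun h => ha ((mem_powersetCard.1 hT).1 h)
    have h2 : a ∉ T' := fun h => ha ((mem_powersetCard.1 hT').1 h)
    rw [← erase_insert h1, ← erase_insert h2, h]
  · rw [disjoint_left]
    intro T hT hT'
    obtain ⟨U, hU, rfl⟩ := mem_image.1 hT'
    exact ha ((mem_powersetCard.1 hT).1 (mem_insert_self _ _))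

noncomputable def bsum (x : ℕ → ℝ) (S : Finset ℕ) (c : ℕ) : ℝ :=
  ∑ i ∈ range c, (-1)^i * esy x S i

lemma bsum_insert (x : ℕ → ℝ) {S : Finset ℕ} {a : ℕ} (ha : a ∉ S) (c : ℕ) :
    bsum x (insert a S) (c+1) = bsum x S (c+1) - x a * bsum x S c := by
  unfold bsum
  rw [sum_range_succ', sum_range_succ' _ c, esy_zero, esy_zero, mul_sum]
  simp_rw [esy_insert x ha]
  rw [add_sub_right_comm, ← sum_sub_distrib]
  congr 1
  refine sum_congr rfl fun i _ => ?_
  ring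

lemma bonf (x : ℕ → ℝ) (S : Finset ℕ) (hx : ∀ p ∈ S, 0 ≤ x p ∧ x p ≤ 1) (c : ℕ) :
    0 ≤ (-1)^c * (∏ p ∈ S, (1 - x p) - bsum x S c) ∧
    (-1)^c * (∏ p ∈ S, (1 - x p) - bsum x S c) ≤ esy x S c := by
  induction S using Finset.induction_on generalizing c with
  | empty =>
    rcases c with _ | c
    · simp [bsum, esy]
    · have : bsum x ∅ (c+1) = 1 := by
        unfold bsum
        rw [sum_range_succ', esy_zero, sum_eq_zero]
        · simp
        · intro i _
          rw [esy, powersetCard_eq_empty.2 (by simp)]; simp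
      rw [this, esy, powersetCard_eq_empty.2 (by simp)]
      simp
  | insert a S ha ih =>
    have hx' : ∀ p ∈ S, 0 ≤ x p ∧ x p ≤ 1 := fun p hp => hx p (mem_insert_of_mem hp)
    have hxa := hx a (mem_insert_self _ _)
    rcases c with _ | c
    · simp only [bsum, range_zero, sum_empty, pow_zero, one_mul, sub_zero, esy_zero]
      constructor
      · exact prod_nonneg fun p hp => by linarith [(hx p hp).2]
      · exact prod_le_one (fun p hp => by linarith [(hx p hp).2]) (fun p hp => by linarith [(hx p hp).1])
    · obtain ⟨h1, h2⟩ := ih hx' (c+1)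
      obtain ⟨h3, h4⟩ := ih hx' c
      have key : (-1 : ℝ)^(c+1) * (∏ p ∈ insert a S, (1 - x p) - bsum x (insert a S) (c+1)) =
        (-1 : ℝ)^(c+1) * (∏ p ∈ S, (1 - x p) - bsum x S (c+1)) +
          x a * ((-1 : ℝ)^c * (∏ p ∈ S, (1 - x p) - bsum x S c)) := by
        rw [bsum_insert x ha, prod_insert ha]; ring
      rw [key, esy_insert x ha]
      constructor
      · have := mul_nonneg hxa.1 h3
        linarith
      · have := mul_le_mul_of_nonneg_left h4 hxa.1
        linarith

lemma bonf_odd (x : ℕ → ℝ) (S : Finset ℕ) (hx : ∀ p ∈ S, 0 ≤ x p ∧ x p ≤ 1) (b : ℕ) :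
    ∏ p ∈ S, (1 - x p) ≤ bsum x S (2*b+1) ∧
    bsum x S (2*b+1) - ∏ p ∈ S, (1 - x p) ≤ esy x S (2*b+1) := by
  have := bonf x S hx (2*b+1)
  have h : (-1:ℝ)^(2*b+1) = -1 := by rw [pow_succ, pow_mul]; simp
  rw [h] at this
  constructor <;> linarith [this.1, this.2]

lemma esy_le_prod {x : ℕ → ℝ} {S : Finset ℕ} (hx : ∀ p ∈ S, 0 ≤ x p) (c : ℕ) {y : ℝ} (hy : 0 ≤ y) :
    ∑ i ∈ range c, y^i * esy x S i ≤ Real.exp (y * ∑ p ∈ S, x p) := by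
  have h1 : ∏ p ∈ S, (1 + y * x p) ≤ Real.exp (y * ∑ p ∈ S, x p) := by
    rw [mul_sum, Real.exp_sum]
    refine prod_le_prod (fun p hp => by have := mul_nonneg hy (hx p hp); linarith) fun p hp => ?_
    linarith [Real.add_one_le_exp (y * x p)]
  refine le_trans ?_ h1
  rw [prod_one_add]
  have h2 : ∑ i ∈ range c, y^i * esy x S i =
      ∑ T ∈ (range c).biUnion (fun i => S.powersetCard i), ∏ p ∈ T, (y * x p) := by
    rw [sum_biUnion]
    · refine sum_congr rfl fun i _ => ?_
      unfold esy
      rw [mul_sum]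
      refine sum_congr rfl fun T hT => ?_
      rw [prod_mul_distrib, prod_const, (mem_powersetCard.1 hT).2]
    · intro i _ j _ hij
      exact S.pairwise_disjoint_powersetCard hij
  rw [h2]
  refine sum_le_sum_of_subset_of_nonneg ?_ ?_
  · intro T hT
    obtain ⟨i, _, hi⟩ := mem_biUnion.1 hT
    exact mem_powerset.2 (mem_powersetCard.1 hi).1
  · intro T hT _
    exact prod_nonneg fun p hp => mul_nonneg hy (hx p (mem_powerset.1 hT hp))

/-- bound for the elementary symmetric sums -/
lemma esy_le_two {x : ℕ → ℝ} {S : Finset ℕ} (hx : ∀ p ∈ S, 0 ≤ x p) (m : ℕ) :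
    esy x S m ≤ Real.exp (2 * ∑ p ∈ S, x p) / 2^m := by
  have h := esy_le_prod hx (m+1) (y := 2) (by norm_num)
  rw [sum_range_succ] at h
  have : 0 ≤ ∑ i ∈ range m, (2:ℝ)^i * esy x S i :=
    sum_nonneg fun i _ => mul_nonneg (by positivity) (esy_nonneg hx i)
  rw [le_div_iff₀ (by positivity)]
  linarith

lemma esy_sum_le {x : ℕ → ℝ} {S : Finset ℕ} (hx : ∀ p ∈ S, 0 ≤ x p) (c : ℕ) :
    ∑ i ∈ range (c+1), esy x S i ≤ Real.exp 1 * (1 + ∑ p ∈ S, x p)^c := by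
  set s := ∑ p ∈ S, x p with hs
  have hs0 : 0 ≤ s := sum_nonneg hx
  have h := esy_le_prod hx (c+1) (y := (1+s)⁻¹) (by positivity)
  have h1 : (1+s)⁻¹ * s ≤ 1 := by
    rw [inv_mul_le_iff₀ (by positivity)]; linarith
  have h2 : ((1+s)^c)⁻¹ * ∑ i ∈ range (c+1), esy x S i ≤ Real.exp 1 := by
    refine le_trans ?_ (h.trans (Real.exp_le_exp.2 h1))
    rw [mul_sum]
    refine sum_le_sum fun i hi => mul_le_mul_of_nonneg_right ?_ (esy_nonneg hx i)
    rw [← inv_pow]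
    refine pow_le_pow_of_le_one (by positivity) ?_ (by have := mem_range.1 hi; omega)
    exact inv_le_one_of_one_le₀ (by linarith)
  rw [inv_mul_le_iff₀ (by positivity)] at h2
  linarith

/-- Hooley inequality. -/
lemma hooley (s : Finset ℕ) (x y : ℕ → ℝ) (h0 : ∀ j ∈ s, 0 ≤ x j) (h1 : ∀ j ∈ s, x j ≤ y j) :
    ∏ j ∈ s, y j - ∑ l ∈ s, ∏ j ∈ s, (if j = l then y l - x l else y j) ≤ ∏ j ∈ s, x j := by
  induction s using Finset.induction_on with
  | empty => simp
  | insert a s ha ih =>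
    have ih' := ih (fun j hj => h0 j (mem_insert_of_mem hj)) (fun j hj => h1 j (mem_insert_of_mem hj))
    have a0 := h0 a (mem_insert_self _ _)
    have a1 := h1 a (mem_insert_self _ _)
    rw [prod_insert ha, prod_insert ha, sum_insert ha]
    simp_rw [prod_insert ha]
    have e1 : ∏ j ∈ s, (if j = a then y a - x a else y j) = ∏ j ∈ s, y j :=
      prod_congr rfl fun j hj => by rw [if_neg]; rintro rfl; exact ha hj
    have e2 : ∑ l ∈ s, (if a = l then y l - x l else y a) * ∏ j ∈ s, (if j = l then y l - x l else y j)
       = y a * ∑ l ∈ s, ∏ j ∈ s, (if j = l then y l - x l else y j) := by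
      rw [mul_sum]
      refine sum_congr rfl fun l hl => ?_
      rw [if_neg]; rintro rfl; exact ha hl
    rw [e1, e2, if_pos trivial]
    set A := ∑ l ∈ s, ∏ j ∈ s, (if j = l then y l - x l else y j)
    have hA : 0 ≤ A := sum_nonneg fun l hl => prod_nonneg fun j hj => by
      have := h0 j (mem_insert_of_mem hj); have := h1 j (mem_insert_of_mem hj)
      have := h1 l (mem_insert_of_mem hl)
      split_ifs <;> linarith
    have := mul_le_mul_of_nonneg_left ih' a0
    nlinarith

end S14
end

section
namespace S14
open Finset

open Classical in
noncomputable def uu (B : ℕ → ℕ → Prop) (p n : ℕ) : ℝ := if B p n then 1 else 0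

open Classical in
noncomputable def rr (B : ℕ → ℕ → Prop) (p : ℕ) : ℝ := ((range p).filter (fun r => B p r)).card

lemma rr_nonneg (B : ℕ → ℕ → Prop) (p : ℕ) : 0 ≤ rr B p := Nat.cast_nonneg _

open Classical in
lemma crt_rep (B : ℕ → ℕ → Prop) (hB : ∀ p n, B p n ↔ B p (n % p)) (T : Finset ℕ)
    (hT : ∀ p ∈ T, p.Prime) :
    ∃ (ι : Type) (_ : Fintype ι) (a : ι → ℕ), (Fintype.card ι : ℝ) = ∏ p ∈ T, rr B p ∧
      ∀ n, ∏ p ∈ T, uu B p n = ∑ i, (if n ≡ a i [MOD ∏ p ∈ T, p] then (1:ℝ) else 0) := by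
  induction T using Finset.induction_on with
  | empty => 
    refine ⟨Unit, inferInstance, fun _ => 0, by simp, fun n => by simp [Nat.modEq_one]⟩
  | insert q T hq ih =>
    obtain ⟨ι, _, a, hcard, ha⟩ := ih (fun p hp => hT p (mem_insert_of_mem hp))
    have hqp := hT q (mem_insert_self _ _)
    have hco : Nat.Coprime q (∏ p ∈ T, p) := by
      refine Nat.Coprime.prod_right fun p hp => ?_
      rw [Nat.coprime_primes hqp (hT p (mem_insert_of_mem hp))]
      rintro rfl; exact hq hp
    refine ⟨ι × {r // r ∈ (range q).filter (fun r => B q r)}, inferInstance,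
      fun x => Nat.chineseRemainder hco x.2.1 (a x.1), ?_, fun n => ?_⟩
    · rw [Fintype.card_prod, prod_insert hq, Nat.cast_mul, hcard, mul_comm]
      congr 1
      rw [Fintype.card_coe, rr]
    · rw [prod_insert hq, prod_insert hq, ha, Fintype.sum_prod_type, mul_sum]
      refine sum_congr rfl fun i _ => ?_
      have key : ∀ r : {r // r ∈ (range q).filter (fun r => B q r)},
          (n ≡ (Nat.chineseRemainder hco r.1 (a i) : ℕ) [MOD q * ∏ p ∈ T, p]) ↔
            (n % q = r.1 ∧ n ≡ a i [MOD ∏ p ∈ T, p]) := by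
        intro r
        have hr : r.1 < q := mem_range.1 (mem_filter.1 r.2).1
        have h1 := (Nat.chineseRemainder hco r.1 (a i)).2.1
        have h2 := (Nat.chineseRemainder hco r.1 (a i)).2.2
        rw [← Nat.modEq_and_modEq_iff_modEq_mul hco]
        constructor
        · rintro ⟨h3, h4⟩
          refine ⟨?_, h4.trans h2⟩
          have := h3.trans h1
          rw [Nat.ModEq, Nat.mod_eq_of_lt hr] at this
          exact this
        · rintro ⟨h3, h4⟩
          refine ⟨Nat.ModEq.trans ?_ h1.symm, h4.trans h2.symm⟩
          rw [Nat.ModEq, Nat.mod_eq_of_lt hr, h3]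
      simp_rw [key]
      by_cases hn : n ≡ a i [MOD ∏ p ∈ T, p]
      · simp only [hn, and_true, if_true, mul_one]
        rw [uu]
        rw [Finset.sum_coe_sort ((range q).filter (fun r => B q r)) (fun r => if n % q = r then (1:ℝ) else 0)]
        rw [Finset.sum_ite_eq]
        have : n % q ∈ (range q).filter (fun r => B q r) ↔ B q n := by
          rw [mem_filter, mem_range, ← hB]
          exact and_iff_right (Nat.mod_lt _ hqp.pos)
        simp only [this]
      · simp [hn]

lemma count_close (d a N : ℕ) (hd : 0 < d) :
    |(∑ n ∈ range N, (if n ≡ a [MOD d] then (1:ℝ) else 0)) - N / d| ≤ 1 := by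
  have h : (∑ n ∈ range N, (if n ≡ a [MOD d] then (1:ℝ) else 0)) = (N.count (· ≡ a [MOD d]) : ℕ) := by
    rw [Nat.count_eq_card_filter_range, ← Finset.sum_boole]
  rw [h, Nat.count_modEq_card _ hd]
  have hd' : (0:ℝ) < d := by exact_mod_cast hd
  have h1 : (N:ℝ) / d = (N / d : ℕ) + ((N % d : ℕ):ℝ) / d := by
    rw [div_eq_iff hd'.ne', add_mul, div_mul_cancel₀ _ hd'.ne']
    have := Nat.div_add_mod N d
    rw [mul_comm] at this
    exact_mod_cast this.symm
  have h2 : 0 ≤ ((N % d : ℕ):ℝ) / d := by positivity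
  have h3 : ((N % d : ℕ):ℝ) / d ≤ 1 := by
    rw [div_le_one hd']; exact_mod_cast (Nat.mod_lt _ hd).le
  rw [h1, abs_le]
  push_cast
  split_ifs <;> constructor <;> linarith

lemma crt_count (B : ℕ → ℕ → Prop) (hB : ∀ p n, B p n ↔ B p (n % p)) (T : Finset ℕ)
    (hT : ∀ p ∈ T, p.Prime) (N : ℕ) :
    |∑ n ∈ range N, ∏ p ∈ T, uu B p n - N * ∏ p ∈ T, (rr B p / p)| ≤ ∏ p ∈ T, rr B p := by
  obtain ⟨ι, _, a, hcard, ha⟩ := crt_rep B hB T hT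
  simp_rw [ha]
  rw [sum_comm, prod_div_distrib, ← hcard]
  have hd : 0 < ∏ p ∈ T, p := prod_pos fun p hp => (hT p hp).pos
  have e : (N:ℝ) * ((Fintype.card ι : ℝ) / ∏ p ∈ T, (p:ℝ)) = ∑ _i : ι, (N:ℝ) / ((∏ p ∈ T, p : ℕ):ℝ) := by
    rw [sum_const, nsmul_eq_mul, card_univ]; push_cast; ring
  rw [e, ← sum_sub_distrib]
  refine (abs_sum_le_sum_abs _ _).trans ?_
  refine (sum_le_sum fun i _ => ?_).trans (?_ : ∑ _i : ι, (1:ℝ) ≤ _)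
  · convert count_close _ (a i) N hd
  · simp

/-- `F` is a multilinear form in the indicators of `B p`, `p ∈ S`, with main term `M` and error `R`. -/
def Rep (B : ℕ → ℕ → Prop) (S : Finset ℕ) (F : ℕ → ℝ) (M R : ℝ) : Prop :=
  ∃ (ι : Type) (_ : Fintype ι) (c : ι → ℝ) (T : ι → Finset ℕ), (∀ i, T i ⊆ S) ∧
    (∀ n, F n = ∑ i, c i * ∏ p ∈ T i, uu B p n) ∧ M = ∑ i, c i * ∏ p ∈ T i, (rr B p / p) ∧
    ∑ i, |c i| * ∏ p ∈ T i, rr B p ≤ R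

variable {B : ℕ → ℕ → Prop}

lemma Rep.count (hB : ∀ p n, B p n ↔ B p (n % p)) {S : Finset ℕ} (hS : ∀ p ∈ S, p.Prime)
    {F : ℕ → ℝ} {M R : ℝ} (h : Rep B S F M R) (N : ℕ) :
    |∑ n ∈ range N, F n - N * M| ≤ R := by
  obtain ⟨ι, _, c, T, hT, hF, hM, hR⟩ := h
  refine le_trans ?_ hR
  simp_rw [hF]
  rw [sum_comm, hM, mul_sum, ← sum_sub_distrib]
  refine (abs_sum_le_sum_abs _ _).trans (sum_le_sum fun i _ => ?_)
  rw [← mul_sum, mul_left_comm, ← mul_sub, abs_mul]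
  exact mul_le_mul_of_nonneg_left (crt_count B hB _ (fun p hp => hS p (hT i hp)) N) (abs_nonneg _)

lemma Rep.mono {S S' : Finset ℕ} {F : ℕ → ℝ} {M R R' : ℝ} (h : Rep B S F M R) (hS : S ⊆ S')
    (hR : R ≤ R') : Rep B S' F M R' := by
  obtain ⟨ι, _, c, T, hT, hF, hM, hR1⟩ := h
  exact ⟨ι, _, c, T, fun i => (hT i).trans hS, hF, hM, hR1.trans hR⟩

lemma Rep.mul {S S' : Finset ℕ} {F F' : ℕ → ℝ} {M M' R R' : ℝ} (h : Rep B S F M R)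
    (h' : Rep B S' F' M' R') (hd : Disjoint S S') :
    Rep B (S ∪ S') (fun n => F n * F' n) (M * M') (R * R') := by
  obtain ⟨ι, _, c, T, hT, hF, hM, hR⟩ := h
  obtain ⟨ι', _, c', T', hT', hF', hM', hR'⟩ := h'
  have hdis : ∀ i j, Disjoint (T i) (T' j) := fun i j => disjoint_of_subset_left (hT i)
    (disjoint_of_subset_right (hT' j) hd)
  refine ⟨ι × ι', inferInstance, fun x => c x.1 * c' x.2, fun x => T x.1 ∪ T' x.2,
    fun x => union_subset_union (hT _) (hT' _), fun n => ?_, ?_, ?_⟩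
  · show F n * F' n = _
    rw [hF, hF', Fintype.sum_prod_type, sum_mul_sum]
    refine sum_congr rfl fun i _ => sum_congr rfl fun j _ => ?_
    rw [prod_union (hdis i j)]; ring
  · rw [hM, hM', Fintype.sum_prod_type, sum_mul_sum]
    refine sum_congr rfl fun i _ => sum_congr rfl fun j _ => ?_
    rw [prod_union (hdis i j)]; ring
  · refine le_trans (le_of_eq ?_) (mul_le_mul hR hR' ?_ (le_trans ?_ hR))
    · rw [Fintype.sum_prod_type, sum_mul_sum]
      refine sum_congr rfl fun i _ => sum_congr rfl fun j _ => ?_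
      rw [prod_union (hdis i j), abs_mul]; ring
    · exact sum_nonneg fun i _ => mul_nonneg (abs_nonneg _) (prod_nonneg fun p _ => rr_nonneg B p)
    · exact sum_nonneg fun i _ => mul_nonneg (abs_nonneg _) (prod_nonneg fun p _ => rr_nonneg B p)

lemma Rep.sum {α : Type} (s : Finset α) {S : Finset ℕ} {F : α → ℕ → ℝ} {M R : α → ℝ}
    (h : ∀ a ∈ s, Rep B S (F a) (M a) (R a)) :
    Rep B S (fun n => ∑ a ∈ s, F a n) (∑ a ∈ s, M a) (∑ a ∈ s, R a) := by
  classical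
  induction s using Finset.induction_on with
  | empty => exact ⟨Empty, inferInstance, fun _ => 0, fun _ => ∅, by simp, by simp, by simp, by simp⟩
  | insert a s ha ih =>
    obtain ⟨ι, _, c, T, hT, hF, hM, hR⟩ := h a (mem_insert_self _ _)
    obtain ⟨ι', _, c', T', hT', hF', hM', hR'⟩ := ih fun b hb => h b (mem_insert_of_mem hb)
    refine ⟨ι ⊕ ι', inferInstance, Sum.elim c c', Sum.elim T T', ?_, fun n => ?_, ?_, ?_⟩
    · rintro (i | i)
      · exact hT i
      · exact hT' i
    · have h2 := hF' n
      simp only at h2 ⊢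
      rw [sum_insert ha, hF, h2]; simp
    · rw [sum_insert ha, hM, hM']; simp
    · rw [sum_insert ha]; simp only [Fintype.sum_sum_type, Sum.elim_inl, Sum.elim_inr]; linarith

lemma Rep.smul {S : Finset ℕ} {F : ℕ → ℝ} {M R : ℝ} (h : Rep B S F M R) (k : ℝ) :
    Rep B S (fun n => k * F n) (k * M) (|k| * R) := by
  obtain ⟨ι, _, c, T, hT, hF, hM, hR⟩ := h
  refine ⟨ι, inferInstance, fun i => k * c i, T, hT, fun n => ?_, ?_, ?_⟩
  · simp only
    rw [hF, mul_sum]; simp_rw [mul_assoc]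
  · rw [hM, mul_sum]; simp_rw [mul_assoc]
  · simp_rw [abs_mul, mul_assoc]; rw [← mul_sum]; exact mul_le_mul_of_nonneg_left hR (abs_nonneg _)

lemma Rep.sub {S : Finset ℕ} {F F' : ℕ → ℝ} {M M' R R' : ℝ} (h : Rep B S F M R)
    (h' : Rep B S F' M' R') : Rep B S (fun n => F n - F' n) (M - M') (R + R') := by
  have h2 := h'.smul (-1)
  have h3 := Rep.sum (univ : Finset Bool) (S := S) (B := B) (F := fun b n => if b then F n else -1 * F' n)
    (M := fun b => if b then M else -1 * M') (R := fun b => if b then R else |(-1:ℝ)| * R') (by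
      rintro (_ | _) _
      · simpa using h2
      · simpa using h)
  simpa [sub_eq_add_neg] using h3

lemma Rep.prod (s : Finset ℕ) {S : ℕ → Finset ℕ} {F : ℕ → ℕ → ℝ} {M R : ℕ → ℝ}
    (h : ∀ a ∈ s, Rep B (S a) (F a) (M a) (R a))
    (hd : ∀ a b, a ≠ b → Disjoint (S a) (S b)) :
    Rep B (s.biUnion S) (fun n => ∏ a ∈ s, F a n) (∏ a ∈ s, M a) (∏ a ∈ s, R a) := by
  induction s using Finset.induction_on with
  | empty => exact ⟨Unit, inferInstance, fun _ => 1, fun _ => ∅, by simp, by simp, by simp, by simp⟩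
  | insert a s ha ih =>
    have := (h a (mem_insert_self _ _)).mul (ih fun b hb => h b (mem_insert_of_mem hb)) (by
      rw [disjoint_biUnion_right]
      intro b hb
      exact hd a b (by rintro rfl; exact ha hb))
    simp_rw [prod_insert ha]
    rw [biUnion_insert]
    exact this

lemma Rep.esy (S : Finset ℕ) (i : ℕ) :
    Rep B S (fun n => esy (fun p => uu B p n) S i) (esy (fun p => rr B p / p) S i) (esy (rr B) S i) := by
  unfold S14.esy
  refine Rep.sum _ (F := fun T n => ∏ p ∈ T, uu B p n) (M := fun T => ∏ p ∈ T, (rr B p / p))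
    (R := fun T => ∏ p ∈ T, rr B p) fun T hT => ?_
  exact ⟨Unit, inferInstance, fun _ => 1, fun _ => T, fun _ => (mem_powersetCard.1 hT).1,
    by simp, by simp, by simp⟩

lemma Rep.bsum (S : Finset ℕ) (c : ℕ) :
    Rep B S (fun n => bsum (fun p => uu B p n) S c) (bsum (fun p => rr B p / p) S c)
      (∑ i ∈ range c, S14.esy (rr B) S i) := by
  unfold S14.bsum
  refine Rep.sum _ (F := fun i n => (-1)^i * S14.esy (fun p => uu B p n) S i) 
    (M := fun i => (-1)^i * S14.esy (fun p => rr B p / p) S i) fun i _ => ?_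
  have := (Rep.esy (B := B) S i).smul ((-1)^i)
  simpa using this

end S14
end

section
namespace S14
open Finset

lemma sum_log_div_le (N : ℕ) :
    ∑ p ∈ (range (N+1)).filter Nat.Prime, Real.log p / p ≤ 2 * Real.log N := by
  rcases Nat.eq_zero_or_pos N with rfl | hN
  · simp [Finset.sum_filter, Nat.not_prime_zero]
  have hN' : (0:ℝ) < N := by exact_mod_cast hN
  have h1 : ∑ n ∈ Ioc 0 N, ∑ p ∈ (range (N+1)).filter Nat.Prime, (if p ∣ n then Real.log p else 0)
      ≤ N * Real.log N := by
    have : (N:ℝ) * Real.log N = ∑ n ∈ Ioc 0 N, Real.log N := by simp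
    rw [this]
    refine sum_le_sum fun n hn => ?_
    obtain ⟨hn0, hnN⟩ := mem_Ioc.1 hn
    rw [← sum_filter]
    have e : ((range (N+1)).filter Nat.Prime).filter (fun p => p ∣ n) = n.primeFactors := by
      ext p
      simp only [mem_filter, mem_range, Nat.mem_primeFactors]
      constructor
      · rintro ⟨⟨_, h⟩, h'⟩; exact ⟨h, h', hn0.ne'⟩
      · rintro ⟨h, h', _⟩
        exact ⟨⟨by have := Nat.le_of_dvd hn0 h'; omega, h⟩, h'⟩
    rw [e, ← Real.log_prod]
    · refine Real.log_le_log ?_ ?_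
      · exact prod_pos fun p hp => by exact_mod_cast (Nat.prime_of_mem_primeFactors hp).pos
      · have := Nat.le_of_dvd hn0 (Nat.prod_primeFactors_dvd n)
        have h3 := this.trans hnN
        rw [← Nat.cast_prod]
        exact Nat.cast_le.2 h3
    · intro p hp
      exact_mod_cast (Nat.prime_of_mem_primeFactors hp).ne_zero
  rw [sum_comm] at h1
  have h2 : ∑ p ∈ (range (N+1)).filter Nat.Prime, Real.log p / p * (N / 2) ≤ N * Real.log N := by
    refine le_trans (sum_le_sum fun p hp => ?_) h1
    rw [← sum_filter, sum_const, Nat.Ioc_filter_dvd_card_eq_div, nsmul_eq_mul]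
    have hpp := (mem_filter.1 hp).2
    have hpN : p ≤ N := by have := mem_range.1 (mem_filter.1 hp).1; omega
    have hp0 : (0:ℝ) < p := by exact_mod_cast hpp.pos
    have hl : 0 ≤ Real.log p := Real.log_natCast_nonneg p
    have h4 : 1 ≤ N / p := (Nat.one_le_div_iff hpp.pos).2 hpN
    have h5 : N < (N / p + 1) * p := by
      have := Nat.div_add_mod N p
      have := Nat.mod_lt N hpp.pos
      nlinarith
    have h6 : (N:ℝ) ≤ 2 * (N / p : ℕ) * p := by
      have : N ≤ 2 * (N / p) * p := by nlinarith
      exact_mod_cast this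
    have : Real.log p / p * (N/2) = (N / (2 * p)) * Real.log p := by field_simp
    rw [this]
    refine mul_le_mul_of_nonneg_right ?_ hl
    rw [div_le_iff₀ (by positivity)]
    linarith
  rw [← sum_mul] at h2
  have : (N:ℝ) * Real.log N = (2 * Real.log N) * (N/2) := by ring
  rw [this] at h2
  exact le_of_mul_le_mul_right h2 (by positivity)

lemma sum_log_div_le' (S : Finset ℕ) (hS : ∀ p ∈ S, p.Prime) (q : ℕ) (hq : ∀ p ∈ S, p ≤ q) :
    ∑ p ∈ S, Real.log p / p ≤ 2 * Real.log q := by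
  refine le_trans (sum_le_sum_of_subset_of_nonneg ?_ ?_) (sum_log_div_le q)
  · intro p hp
    exact mem_filter.2 ⟨mem_range.2 (by have := hq p hp; omega), hS p hp⟩
  · intro p _ _
    exact div_nonneg (Real.log_natCast_nonneg p) (Nat.cast_nonneg _)

lemma block_sum (S : Finset ℕ) (hS : ∀ p ∈ S, p.Prime) (z j : ℕ) (hz : 2 ≤ z)
    (h1 : ∀ p ∈ S, p ^ 2^j ≤ z) (h2 : ∀ p ∈ S, z < p ^ 2^(j+1)) :
    ∑ p ∈ S, (1:ℝ) / p ≤ 4 := by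
  rcases S.eq_empty_or_nonempty with rfl | hne
  · simp
  set q := S.max' hne with hq
  have hqS : q ∈ S := S.max'_mem hne
  have h3 := sum_log_div_le' S hS q (fun p hp => S.le_max' p hp)
  have hlz : 0 < Real.log z := Real.log_pos (by exact_mod_cast hz)
  have h4 : Real.log q * 2^j ≤ Real.log z := by
    have h : ((q ^ 2^j : ℕ) : ℝ) ≤ z := by exact_mod_cast h1 q hqS
    have := Real.log_le_log (by have := (hS q hqS).pos; positivity) h
    rw [Nat.cast_pow, Real.log_pow] at this
    push_cast at this
    linarith
  have h5 : ∑ p ∈ S, (1:ℝ)/p * (Real.log z / 2^(j+1)) ≤ ∑ p ∈ S, Real.log p / p := by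
    refine sum_le_sum fun p hp => ?_
    have h : (z:ℝ) ≤ ((p ^ 2^(j+1) : ℕ) : ℝ) := by exact_mod_cast (h2 p hp).le
    have := Real.log_le_log (by positivity) h
    rw [Nat.cast_pow, Real.log_pow] at this
    push_cast at this
    rw [one_div, inv_mul_eq_div]
    refine div_le_div_of_nonneg_right ?_ (Nat.cast_nonneg _)
    rw [div_le_iff₀ (by positivity)]
    linarith
  rw [← sum_mul] at h5
  have h6 : (∑ p ∈ S, (1:ℝ)/p) * (Real.log z / 2^(j+1)) ≤ 4 * (Real.log z / 2^(j+1)) := by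
    refine (h5.trans h3).trans ?_
    rw [pow_succ]
    rw [mul_div_assoc', le_div_iff₀ (by positivity)]
    nlinarith
  exact le_of_mul_le_mul_right h6 (by positivity)

lemma errW (B : ℕ → ℕ → Prop) (S : Finset ℕ) (D k z j c : ℕ) (hk : k ≤ D) (hD : 3 ≤ D) (hz : 2 ≤ z)
    (h0 : ∀ p ∈ S, D < p) (h1 : ∀ p ∈ S, p ^ 2^j ≤ z) (hr : ∀ p ∈ S, rr B p ≤ k) :
    ∑ i ∈ range (c+1), esy (rr B) S i ≤ Real.exp (Real.log z * ((2*c+1) / 2^j)) := by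
  have hlz : 0 < Real.log z := Real.log_pos (by exact_mod_cast hz)
  rcases S.eq_empty_or_nonempty with rfl | hne
  · rw [sum_range_succ', esy_zero, sum_eq_zero]
    · rw [zero_add, Real.one_le_exp_iff]; positivity
    · intro i _
      rw [esy, powersetCard_eq_empty.2 (by simp)]; simp
  set q := S.max' hne with hq
  have hqS : q ∈ S := S.max'_mem hne
  have hqD := h0 q hqS
  have hcard : S.card ≤ q - 1 := by
    have : S ⊆ Ioc 1 q := fun p hp => mem_Ioc.2 ⟨by have := h0 p hp; omega, S.le_max' p hp⟩
    simpa using card_le_card this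
  have hs : ∑ p ∈ S, rr B p ≤ q * (q-1) := by
    calc ∑ p ∈ S, rr B p ≤ ∑ p ∈ S, (k:ℝ) := sum_le_sum hr
      _ = S.card * k := by simp
      _ ≤ ((q - 1 : ℕ):ℝ) * q := by
          have : S.card * k ≤ (q-1) * q := Nat.mul_le_mul hcard (by omega)
          exact_mod_cast this
      _ = q * (q-1) := by rw [Nat.cast_sub (by omega)]; push_cast; ring
  have hs0 : 0 ≤ ∑ p ∈ S, rr B p := sum_nonneg fun p _ => rr_nonneg B p
  have hq3 : (3:ℝ) ≤ q := by exact_mod_cast (by omega : 3 ≤ q)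
  have h2 : 1 + ∑ p ∈ S, rr B p ≤ (q:ℝ)^2 := by nlinarith
  have he : Real.exp 1 ≤ q := by linarith [Real.exp_one_lt_d9]
  have h4 : Real.log q * 2^j ≤ Real.log z := by
    have h : ((q ^ 2^j : ℕ) : ℝ) ≤ z := by exact_mod_cast h1 q hqS
    have := Real.log_le_log (by have : 0 < q := by omega
                                positivity) h
    rw [Nat.cast_pow, Real.log_pow] at this
    push_cast at this
    linarith
  calc ∑ i ∈ range (c+1), esy (rr B) S i ≤ Real.exp 1 * (1 + ∑ p ∈ S, rr B p)^c :=
        esy_sum_le (fun p _ => rr_nonneg B p) c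
    _ ≤ q * ((q:ℝ)^2)^c := by gcongr
    _ = (q:ℝ)^(2*c+1) := by ring
    _ = Real.exp (Real.log q * (2*c+1)) := by
        rw [← Real.exp_log (show (0:ℝ) < q by linarith), ← Real.exp_nat_mul, Real.log_exp]
        push_cast; ring_nf
    _ ≤ _ := by
        rw [Real.exp_le_exp, mul_div_assoc', le_div_iff₀ (by positivity)]
        nlinarith [show (0:ℝ) ≤ 2*c+1 by positivity]

lemma geo_sum (A : ℝ) (t : ℕ) : ∑ j ∈ range t, (A + 4*j) / 2^j = (2*A+8) - (2*A+8+8*t)/2^t := by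
  induction t with
  | zero => simp
  | succ t ih => rw [sum_range_succ, ih]; push_cast; field_simp; ring

lemma one_sub_ge_exp {x : ℝ} (h0 : 0 ≤ x) (h1 : x ≤ 1/2) : Real.exp (-(2*x)) ≤ 1 - x := by
  rw [Real.exp_neg]
  have h : 1 + 2*x ≤ Real.exp (2*x) := by linarith [Real.add_one_le_exp (2*x)]
  refine (inv_anti₀ (by linarith) h).trans ?_
  rw [inv_le_iff_one_le_mul₀ (by linarith)]
  nlinarith

end S14
end

section
namespace S14
open Finset

def PP (D z : ℕ) : Finset ℕ := (range (z+1)).filter (fun p => p.Prime ∧ D < p)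

def blk (D z j : ℕ) : Finset ℕ := (PP D z).filter (fun p => p^2^j ≤ z ∧ z < p^2^(j+1))

lemma blk_disj (D z : ℕ) (i j : ℕ) (hij : i ≠ j) : Disjoint (blk D z i) (blk D z j) := by
  wlog h : i < j generalizing i j
  · exact (this j i hij.symm (by omega)).symm
  rw [disjoint_left]
  intro p hp hp'
  simp only [blk, PP, mem_filter] at hp hp'
  have : p^2^(i+1) ≤ p^2^j := Nat.pow_le_pow_right hp.1.2.1.pos (Nat.pow_le_pow_right (by norm_num) h)
  omega

lemma blk_union (D z : ℕ) : (range z).biUnion (blk D z) = PP D z := by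
  ext p
  simp only [mem_biUnion, blk, mem_filter, mem_range]
  constructor
  · rintro ⟨_, _, h, _⟩; exact h
  · intro hp
    have hp' := hp
    simp only [PP, mem_filter, mem_range] at hp'
    have hp2 := hp'.2.1.two_le
    have hex : ∃ j, z < p^2^(j+1) := by
      refine ⟨z, ?_⟩
      calc z < 2^z := Nat.lt_two_pow_self
        _ ≤ 2^2^(z+1) := Nat.pow_le_pow_right (by norm_num) (by
            have : z + 1 < 2^(z+1) := Nat.lt_two_pow_self
            omega)
        _ ≤ _ := Nat.pow_le_pow_left hp2 _
    classical
    have hle : p ^ 2 ^ (Nat.find hex) ≤ z := by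
      rcases h : Nat.find hex with _ | m
      · simp; omega
      · by_contra hcon
        exact Nat.find_min hex (m := m) (by omega) (by omega)
    refine ⟨Nat.find hex, ?_, hp, hle, Nat.find_spec hex⟩
    calc Nat.find hex < 2^Nat.find hex := Nat.lt_two_pow_self
      _ ≤ 2^2^Nat.find hex := Nat.pow_le_pow_right (by norm_num) Nat.lt_two_pow_self.le
      _ ≤ p^2^Nat.find hex := Nat.pow_le_pow_left hp2 _
      _ ≤ z := hle

open Classical in
theorem sieve (k : ℕ) : ∃ E : ℕ, ∀ (D : ℕ) (B : ℕ → ℕ → Prop), (∀ p n, B p n ↔ B p (n % p)) →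
    2 * k ≤ D → 3 ≤ D → (∀ p, p.Prime → D < p → rr B p ≤ k) → ∀ z N : ℕ, 2 ≤ z →
    (1/2) * N * ∏ p ∈ PP D z, (1 - rr B p / p) - (z:ℝ)^E ≤
      (((range N).filter (fun n => ∀ p ∈ PP D z, ¬ B p n)).card : ℝ) := by
  obtain ⟨b, hb⟩ : ∃ b : ℕ, 2 * Real.exp (4 * (4 * k)) ≤ 4^b := by
    obtain ⟨b, hb⟩ := pow_unbounded_of_one_lt (2 * Real.exp (4 * (4 * k))) (show (1:ℝ) < 4 by norm_num)
    exact ⟨b, hb.le⟩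
  refine ⟨8 * b + 16, fun D B hB hkD hD hr z N hz => ?_⟩
  set L : ℝ := 4 * k with hL
  have hL0 : 0 ≤ L := by positivity
  have hlz : 0 < Real.log z := Real.log_pos (by exact_mod_cast hz)
  have hz0 : (0:ℝ) < z := by positivity
  set S := blk D z with hSdef
  have hSp : ∀ j, ∀ p ∈ S j, p.Prime ∧ D < p ∧ p^2^j ≤ z ∧ z < p^2^(j+1) := by
    intro j p hp
    simp only [hSdef, blk, PP, mem_filter] at hp
    exact ⟨hp.1.2.1, hp.1.2.2, hp.2.1, hp.2.2⟩
  set x : ℕ → ℝ := fun p => rr B p / p with hx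
  have hx0 : ∀ p, 0 ≤ x p := fun p => div_nonneg (rr_nonneg B p) (Nat.cast_nonneg _)
  have hx1 : ∀ j, ∀ p ∈ S j, x p ≤ 1/2 := by
    intro j p hp
    obtain ⟨h1, h2, _⟩ := hSp j p hp
    have h3 := hr p h1 h2
    have : (2:ℝ) * k ≤ p := by exact_mod_cast (by omega : 2 * k ≤ p)
    simp only [hx]
    rw [div_le_iff₀ (by exact_mod_cast h1.pos)]
    linarith
  have hsum : ∀ j, ∑ p ∈ S j, x p ≤ L := by
    intro j
    have h1 := block_sum (S j) (fun p hp => (hSp j p hp).1) z j hz (fun p hp => (hSp j p hp).2.2.1)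
      (fun p hp => (hSp j p hp).2.2.2)
    calc ∑ p ∈ S j, x p ≤ ∑ p ∈ S j, k * ((1:ℝ)/p) := by
          refine sum_le_sum fun p hp => ?_
          simp only [hx]
          rw [mul_one_div]
          exact div_le_div_of_nonneg_right (hr p (hSp j p hp).1 (hSp j p hp).2.1) (Nat.cast_nonneg _)
      _ = k * ∑ p ∈ S j, (1:ℝ)/p := by rw [mul_sum]
      _ ≤ k * 4 := by gcongr
      _ = L := by rw [hL]; ring
  set V : ℕ → ℝ := fun j => ∏ p ∈ S j, (1 - x p) with hV
  have hVge : ∀ j, Real.exp (-(2*L)) ≤ V j := by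
    intro j
    calc Real.exp (-(2*L)) ≤ Real.exp (-(2*∑ p ∈ S j, x p)) := by
          rw [Real.exp_le_exp]; linarith [hsum j]
      _ = ∏ p ∈ S j, Real.exp (-(2 * x p)) := by
          rw [← Real.exp_sum, mul_sum, sum_neg_distrib]
      _ ≤ V j := prod_le_prod (fun p _ => (Real.exp_pos _).le)
          (fun p hp => one_sub_ge_exp (hx0 p) (hx1 j p hp))
  have hVpos : ∀ j, 0 < V j := fun j => (Real.exp_pos _).trans_le (hVge j)
  -- truncation parameters
  set c : ℕ → ℕ := fun j => 2 * (b + j) + 1 with hc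
  set Y : ℕ → ℝ := fun j => bsum x (S j) (c j) with hY
  set Ee : ℕ → ℝ := fun j => esy x (S j) (c j) with hEe
  have hYV : ∀ j, V j ≤ Y j := fun j =>
    (bonf_odd x (S j) (fun p hp => ⟨hx0 p, (hx1 j p hp).trans (by norm_num)⟩) (b+j)).1
  set ε : ℕ → ℝ := fun j => Real.exp (4*L) / 2^(c j) with hε
  have hEε : ∀ j, Ee j ≤ ε j * Y j := by
    intro j
    have h1 : Ee j ≤ Real.exp (2 * L) / 2^(c j) := by
      refine (esy_le_two (fun p _ => hx0 p) (c j)).trans ?_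
      gcongr
      exact hsum j
    have h2 : Real.exp (2 * L) / 2^(c j) = ε j * Real.exp (-(2*L)) := by
      simp only [hε]
      rw [div_mul_eq_mul_div, ← Real.exp_add]; ring_nf
    rw [h2] at h1
    refine h1.trans (mul_le_mul_of_nonneg_left ((hVge j).trans (hYV j)) (by positivity))
  have hεsum : ∑ j ∈ range z, ε j ≤ 1/2 := by
    have h1 : ∀ t : ℕ, ∑ j ∈ range t, ε j ≤ Real.exp (4*L) / 4^b * (1 - 1/4^t) := by
      intro t
      induction t with
      | zero => simp
      | succ t ih =>
        rw [sum_range_succ]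
        have e : ε t = Real.exp (4*L) / 4^b * (1/2 * (1/4^t)) := by
          simp only [hε, hc]
          rw [pow_succ, pow_mul, pow_add]; norm_num; field_simp
        rw [e]
        have h0 : 0 ≤ Real.exp (4*L) / 4^b := by positivity
        have h2 : (1:ℝ) - 1/4^t + 1/2 * (1/4^t) ≤ 1 - 1/4^(t+1) := by
          rw [pow_succ]
          have : (0:ℝ) < 1/4^t := by positivity
          have e3 : (1:ℝ)/(4^t*4) = 1/4^t / 4 := by field_simp
          rw [e3]; linarith
        have := mul_le_mul_of_nonneg_left h2 h0
        linarith
    refine (h1 z).trans ?_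
    have h2 : Real.exp (4*L) / 4^b ≤ 1/2 := by
      rw [div_le_iff₀ (by positivity)]; linarith
    have h3 : (1:ℝ) - 1/4^z ≤ 1 := by
      have : (0:ℝ) ≤ 1/4^z := by positivity
      linarith
    have h4 : (0:ℝ) ≤ 1 - 1/4^z := by
      rw [sub_nonneg, div_le_one (by positivity)]
      exact one_le_pow₀ (by norm_num)
    calc _ ≤ Real.exp (4*L) / 4^b * 1 := by gcongr
      _ ≤ _ := by linarith
  -- error weights
  set W : ℕ → ℝ := fun j => Real.exp (Real.log z * ((2*(c j : ℝ)+1) / 2^j)) with hW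
  have hWerr : ∀ j, ∑ i ∈ range (c j + 1), esy (rr B) (S j) i ≤ W j := fun j =>
    errW B (S j) D k z j (c j) (by omega) hD hz (fun p hp => (hSp j p hp).2.1)
      (fun p hp => (hSp j p hp).2.2.1) (fun p hp => hr p (hSp j p hp).1 (hSp j p hp).2.1)
  have hesy0 : ∀ j i, 0 ≤ esy (rr B) (S j) i := fun j i => esy_nonneg (fun p _ => rr_nonneg B p) i
  have hW1 : ∀ j, ∑ i ∈ range (c j), esy (rr B) (S j) i ≤ W j := fun j => by
    have := hWerr j; rw [sum_range_succ] at this; linarith [hesy0 j (c j)]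
  have hW2 : ∀ j, esy (rr B) (S j) (c j) ≤ W j := fun j => by
    have := hWerr j; rw [sum_range_succ] at this
    linarith [sum_nonneg (fun i (_ : i ∈ range (c j)) => hesy0 j i)]
  have hWprod : ∏ j ∈ range z, W j ≤ (z:ℝ)^(8*b+14) := by
    simp only [hW]
    rw [← Real.exp_sum, ← mul_sum]
    have e : ∑ j ∈ range z, (2*(c j : ℝ)+1) / 2^j = ∑ j ∈ range z, ((4*b+3 : ℝ) + 4 * j)/2^j := by
      refine sum_congr rfl fun j _ => ?_
      simp only [hc]; push_cast; ring
    rw [e, geo_sum]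
    calc _ ≤ Real.exp (Real.log z * (8*b+14 : ℕ)) := by
          rw [Real.exp_le_exp]
          refine mul_le_mul_of_nonneg_left ?_ hlz.le
          have : (0:ℝ) ≤ (2*(4*b+3)+8+8*z)/2^z := by positivity
          push_cast
          linarith
      _ = _ := by
          rw [mul_comm, Real.exp_nat_mul, Real.exp_log hz0]
  -- indicator functions
  set y : ℕ → ℕ → ℝ := fun j n => bsum (fun p => uu B p n) (S j) (c j) with hy
  set e : ℕ → ℕ → ℝ := fun j n => esy (fun p => uu B p n) (S j) (c j) with he
  set u : ℕ → ℕ → ℝ := fun j n => ∏ p ∈ S j, (1 - uu B p n) with hu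
  have huu : ∀ p n, 0 ≤ uu B p n ∧ uu B p n ≤ 1 := by
    intro p n; unfold uu; split_ifs <;> norm_num
  have hu0 : ∀ j n, 0 ≤ u j n := fun j n => prod_nonneg fun p _ => by linarith [(huu p n).2]
  have huy : ∀ j n, u j n ≤ y j n := fun j n =>
    (bonf_odd (fun p => uu B p n) (S j) (fun p _ => huu p n) (b+j)).1
  have hye : ∀ j n, y j n - u j n ≤ e j n := fun j n =>
    (bonf_odd (fun p => uu B p n) (S j) (fun p _ => huu p n) (b+j)).2
  set F : ℕ → ℝ := fun n => ∏ j ∈ range z, y j n -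
    ∑ l ∈ range z, ∏ j ∈ range z, (if j = l then e j n else y j n) with hF
  have hFle : ∀ n, F n ≤ if (∀ p ∈ PP D z, ¬ B p n) then 1 else 0 := by
    intro n
    have h1 := hooley (range z) (fun j => u j n) (fun j => y j n) (fun j _ => hu0 j n) (fun j _ => huy j n)
    have h2 : F n ≤ ∏ j ∈ range z, u j n := by
      refine le_trans ?_ h1
      simp only [hF]
      refine sub_le_sub_left (sum_le_sum fun l _ => prod_le_prod (fun j _ => ?_) (fun j _ => ?_)) _
      · have := huy l n; have := hu0 j n; have := huy j n
        split_ifs <;> linarith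
      · split_ifs with h
        · subst h; exact hye _ n
        · exact le_rfl
    refine h2.trans (le_of_eq ?_)
    simp only [hu]
    rw [← prod_biUnion (fun i _ j _ hij => blk_disj D z i j hij), blk_union]
    split_ifs with h
    · exact prod_eq_one fun p hp => by simp [uu, h p hp]
    · push Not at h
      obtain ⟨p, hp, hpB⟩ := h
      exact prod_eq_zero hp (by simp [uu, hpB])
  have hcard : ∑ n ∈ range N, F n ≤ (((range N).filter (fun n => ∀ p ∈ PP D z, ¬ B p n)).card : ℝ) := by
    rw [← Finset.sum_boole]
    exact sum_le_sum fun n _ => hFle n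
  -- representation
  have hRy : ∀ j, Rep B (S j) (y j) (Y j) (W j) := fun j =>
    (Rep.bsum (S j) (c j)).mono (Subset.refl _) (hW1 j)
  have hRe : ∀ j, Rep B (S j) (e j) (Ee j) (W j) := fun j =>
    (Rep.esy (S j) (c j)).mono (Subset.refl _) (hW2 j)
  have hR1 := Rep.prod (range z) (fun j _ => hRy j) (fun i j hij => blk_disj D z i j hij)
  have hR2 : ∀ l ∈ range z, Rep B ((range z).biUnion S)
      (fun n => ∏ j ∈ range z, (if j = l then e j n else y j n))
      (∏ j ∈ range z, (if j = l then Ee j else Y j)) (∏ j ∈ range z, W j) := by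
    intro l _
    refine Rep.prod (range z) (F := fun j n => if j = l then e j n else y j n) (fun j _ => ?_)
      (fun i j hij => blk_disj D z i j hij)
    by_cases h : j = l
    · simp only [h, if_true]; exact hRe l
    · simp only [h, if_false]; exact hRy j
  have hR := hR1.sub (Rep.sum (range z) hR2)
  have hcount := hR.count hB (by
    rw [blk_union]; intro p hp
    simp only [PP, mem_filter] at hp
    exact hp.2.1) N
  set M := ∏ j ∈ range z, Y j - ∑ l ∈ range z, ∏ j ∈ range z, (if j = l then Ee j else Y j) with hM
  have hYpos : ∀ j, 0 < Y j := fun j => (hVpos j).trans_le (hYV j)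
  have hMge : (1/2) * ∏ p ∈ PP D z, (1 - rr B p / p) ≤ M := by
    have h1 : ∀ l ∈ range z, ∏ j ∈ range z, (if j = l then Ee j else Y j) ≤ ε l * ∏ j ∈ range z, Y j := by
      intro l hl
      rw [← mul_prod_erase _ _ hl, ← mul_prod_erase _ _ hl, if_pos rfl, ← mul_assoc]
      have e1 : ∏ j ∈ (range z).erase l, (if j = l then Ee j else Y j) = ∏ j ∈ (range z).erase l, Y j :=
        prod_congr rfl fun j hj => by rw [if_neg (ne_of_mem_erase hj)]
      rw [e1]
      exact mul_le_mul_of_nonneg_right (hEε l) (prod_nonneg fun j _ => (hYpos j).le)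
    have h2 := sum_le_sum h1
    rw [← sum_mul] at h2
    have h3 : 0 ≤ ∏ j ∈ range z, Y j := prod_nonneg fun j _ => (hYpos j).le
    have h4 : ∏ p ∈ PP D z, (1 - rr B p / p) ≤ ∏ j ∈ range z, Y j := by
      rw [← blk_union, prod_biUnion (fun i _ j _ hij => blk_disj D z i j hij)]
      exact prod_le_prod (fun j _ => (hVpos j).le) (fun j _ => hYV j)
    have h5 := mul_le_mul_of_nonneg_right hεsum h3
    rw [hM]
    linarith
  have hErr : ∏ j ∈ range z, W j + ∑ l ∈ range z, ∏ j ∈ range z, W j ≤ (z:ℝ)^(8*b+16) := by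
    rw [sum_const, card_range, nsmul_eq_mul]
    have hz2 : (2:ℝ) ≤ z := by exact_mod_cast hz
    have h1 : (1 + (z:ℝ)) ≤ z^2 := by nlinarith
    calc _ = (1 + (z:ℝ)) * ∏ j ∈ range z, W j := by ring
      _ ≤ z^2 * z^(8*b+14) := by
          refine mul_le_mul h1 hWprod (prod_nonneg fun j _ => (Real.exp_pos _).le) (by positivity)
      _ = _ := by ring
  have h6 := (abs_le.1 hcount).1
  have h7 := mul_le_mul_of_nonneg_left hMge (Nat.cast_nonneg N : (0:ℝ) ≤ N)
  have h8 : ∑ n ∈ range N, (∏ j ∈ range z, y j n - ∑ l ∈ range z, ∏ j ∈ range z, (if j = l then e j n else y j n)) = ∑ n ∈ range N, F n := rfl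
  rw [h8] at h6
  linarith

end S14
end

section
namespace S14
open Finset Polynomial NumberField

theorem exponent_ne_zero {K : Type*} [Field K] [NumberField K] (B : PowerBasis ℚ K)
    (θ : 𝓞 K) (hB : B.gen = (θ : K)) : RingOfIntegers.exponent θ ≠ 0 := by
  have hinteg : IsIntegral ℤ B.gen := by rw [hB]; exact θ.isIntegral_coe
  have hd : Algebra.discr ℚ B.basis ≠ 0 := Algebra.discr_not_zero_of_basis ℚ B.basis
  set d := Algebra.discr ℚ B.basis with hdd
  have key : (d.num : 𝓞 K) ∈ conductor ℤ θ := by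
    rw [mem_conductor_iff]
    intro b
    have h1 := Algebra.discr_mul_isIntegral_mem_adjoin ℚ hinteg (z := (b : K)) b.isIntegral_coe
    rw [← hdd] at h1
    have h2 : ((d.num : 𝓞 K) * b : 𝓞 K) = ((d.num : K) * (b:K)) := by push_cast; rfl
    have h3 : ((d.num : K) * (b:K)) = (d.den : ℤ) • (d • (b:K)) := by
      rw [Algebra.smul_def d, zsmul_eq_mul, ← mul_assoc]
      congr 1
      have : ((d.num : ℚ)) = d.den * d := by rw [mul_comm]; exact (Rat.mul_den_eq_num d).symm
      have := congrArg (algebraMap ℚ K) this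
      rw [map_mul, map_intCast, map_natCast] at this
      rw [this]
      push_cast
      rfl
    have h4 : ((d.num : K) * (b:K)) ∈ Algebra.adjoin ℤ {B.gen} := by
      rw [h3]; exact Subalgebra.smul_mem _ h1 _
    rw [hB] at h4
    have h5 : Algebra.adjoin ℤ {(θ : K)} =
        (Algebra.adjoin ℤ {θ}).map (IsScalarTower.toAlgHom ℤ (𝓞 K) K) := by
      rw [AlgHom.map_adjoin_singleton]; rfl
    rw [h5, ← h2] at h4
    obtain ⟨y, hy, hy2⟩ := h4
    have : y = (d.num : 𝓞 K) * b := by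
      apply RingOfIntegers.ext
      simpa using hy2
    rw [← this]; exact hy
  intro h0
  rw [RingOfIntegers.exponent, Ideal.absNorm_eq_zero_iff] at h0
  have : d.num ∈ Ideal.under ℤ (conductor ℤ θ) := by
    rw [Ideal.under_def, Ideal.mem_comap]; simpa using key
  rw [h0] at this
  simp at this
  exact hd this

/-- prime ideals from roots -/
theorem ideal_of_root {K : Type*} [Field K] [NumberField K] (θ : 𝓞 K) (p : ℕ) (hpp : p.Prime)
    (hp : ¬ p ∣ RingOfIntegers.exponent θ) (a : ZMod p)
    (ha : ((minpoly ℤ θ).map (Int.castRingHom (ZMod p))).eval a = 0) :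
    ∃ φ : 𝓞 K →+* ZMod p, φ θ = a := by
  have : Fact p.Prime := ⟨hpp⟩
  let e := RingOfIntegers.ZModXQuotSpanEquivQuotSpan hp
  let g : (ZMod p)[X] ⧸ Ideal.span {map (Int.castRingHom (ZMod p)) (minpoly ℤ θ)} →+* ZMod p :=
    Ideal.Quotient.lift _ (evalRingHom a) (by
      intro q hq
      rw [Ideal.mem_span_singleton] at hq
      obtain ⟨c, rfl⟩ := hq
      simp [ha])
  refine ⟨(g.comp e.symm.toRingHom).comp (Ideal.Quotient.mk _), ?_⟩
  have h := RingOfIntegers.ZModXQuotSpanEquivQuotSpan_mk_apply hp (X : ℤ[X])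
  simp only [aeval_X] at h
  simp only [RingHom.comp_apply]
  rw [← h]
  change g (e.symm (e _)) = a
  rw [RingEquiv.symm_apply_apply]
  simp [g]

theorem ker_facts {K : Type*} [Field K] [NumberField K] (p : ℕ) (hpp : p.Prime) 
    (φ : 𝓞 K →+* ZMod p) : (RingHom.ker φ).IsPrime ∧ Ideal.absNorm (RingHom.ker φ) = p := by
  have : Fact p.Prime := ⟨hpp⟩
  refine ⟨RingHom.ker_isPrime φ, ?_⟩
  rw [Ideal.absNorm_apply, Submodule.cardQuot_apply]
  have hs : Function.Surjective φ := ZMod.ringHom_surjective φ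
  rw [Nat.card_congr (RingHom.quotientKerEquivOfSurjective hs).toEquiv]
  simp
end S14
end

section
namespace S14
open Finset Polynomial NumberField Filter Topology

open Classical in
theorem zeta_bound (K : Type*) [Field K] [NumberField K] : ∃ C : ℝ, 0 < C ∧ ∃ δ : ℝ, 0 < δ ∧
    ∀ s : ℝ, 1 < s → s < 1 + δ → ∀ T : Finset (Ideal (𝓞 K)), (∀ I ∈ T, I ≠ ⊥) →
      ∑ I ∈ T, (Ideal.absNorm I : ℝ) ^ (-s) ≤ C / (s - 1) := by
  set R := NumberField.dedekindZeta_residue K with hR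
  have hRp : 0 < R := NumberField.dedekindZeta_residue_pos K
  have ht := NumberField.tendsto_sub_one_mul_dedekindZeta_nhdsGT K
  have hev := (Metric.tendsto_nhds.1 ht) (R / 2) (by positivity)
  rw [eventually_nhdsWithin_iff, Metric.eventually_nhds_iff] at hev
  obtain ⟨δ, hδ, hev⟩ := hev
  refine ⟨2 * R, by positivity, δ, hδ, ?_⟩
  intro s hs1 hs2 T hT
  have h1 := hev (y := s) (by rw [Real.dist_eq, abs_of_pos] <;> linarith) hs1
  rw [dist_eq_norm, ← hR] at h1
  set a : ℕ → ℂ := fun n ↦ (Nat.card {I : Ideal (𝓞 K) // Ideal.absNorm I = n} : ℂ) with ha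
  set g : ℕ → ℝ := fun n ↦ (Nat.card {I : Ideal (𝓞 K) // Ideal.absNorm I = n} : ℝ) * (if n = 0 then 0 else (n:ℝ)^(-s)) with hg
  have hterm : ∀ n, LSeries.term a s n = ((g n : ℝ) : ℂ) := by
    intro n
    rw [LSeries.term_def]
    by_cases hn : n = 0
    · simp [hn, hg]
    · simp only [hn, if_false, hg, ha]
      rw [Real.rpow_neg (Nat.cast_nonneg n)]
      push_cast
      rw [Complex.ofReal_cpow (Nat.cast_nonneg n)]
      rw [div_eq_mul_inv]
      simp
  have hz : NumberField.dedekindZeta K s = ((∑' n, g n : ℝ) : ℂ) := by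
    rw [NumberField.dedekindZeta, LSeries, Complex.ofReal_tsum]
    exact tsum_congr hterm
  rw [hz] at h1
  have h2 : ((s:ℂ) - 1) * ((∑' n, g n : ℝ) : ℂ) - (R:ℂ) = (((s-1) * (∑' n, g n) - R : ℝ) : ℂ) := by
    push_cast; ring
  rw [h2, Complex.norm_real, Real.norm_eq_abs, abs_lt] at h1
  have hpos : 0 < s - 1 := by linarith
  have hsum : Summable g := by
    by_contra hns
    rw [tsum_eq_zero_of_not_summable hns] at h1
    linarith [h1.1]
  have hgn : ∀ n, 0 ≤ g n := by
    intro n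
    simp only [hg]
    split_ifs <;> positivity
  have hle : ∑' n, g n ≤ 2 * R / (s-1) := by
    rw [le_div_iff₀ hpos]; linarith [h1.2]
  refine le_trans ?_ hle
  refine le_trans ?_ (hsum.sum_le_tsum (T.image Ideal.absNorm) (fun n _ => hgn n))
  rw [← Finset.sum_fiberwise_of_maps_to (g := Ideal.absNorm) (t := T.image Ideal.absNorm)
    (fun x hx => Finset.mem_image_of_mem _ hx)]
  apply Finset.sum_le_sum
  intro n hn
  obtain ⟨I, hI, rfl⟩ := Finset.mem_image.1 hn
  have hn0 : Ideal.absNorm I ≠ 0 := by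
    rw [Ne, Ideal.absNorm_eq_zero_iff]; exact hT I hI
  set n := Ideal.absNorm I
  rw [Finset.sum_congr rfl (g := fun _ => (n:ℝ)^(-s))]
  · rw [Finset.sum_const, nsmul_eq_mul]
    simp only [hg, hn0, if_false]
    gcongr
    have hfin : {J : Ideal (𝓞 K) | Ideal.absNorm J = n}.Finite := Ideal.finite_setOfPred_absNorm_eq n
    have : Nat.card {J : Ideal (𝓞 K) // Ideal.absNorm J = n} = hfin.toFinset.card := by
      rw [← Nat.card_eq_card_finite_toFinset hfin]; rfl
    rw [this]
    apply Finset.card_le_card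
    intro J hJ
    simp at hJ ⊢
    exact hJ.2
  · intro J hJ
    rw [(Finset.mem_filter.1 hJ).2]

open Classical in
theorem prod_injOn {R : Type*} [CommRing R] [IsDedekindDomain R] (F : Finset (Ideal R))
    (hF : ∀ P ∈ F, P.IsPrime ∧ P ≠ ⊥) :
    Set.InjOn (fun T : Finset (Ideal R) => ∏ P ∈ T, P) (F.powerset : Set (Finset (Ideal R))) := by
  have key : ∀ T ∈ F.powerset, ∀ P, P ∈ T ↔ P ∈ F ∧ (∏ Q ∈ T, Q) ≤ P := by
    intro T hT P
    have hT' := Finset.mem_powerset.1 hT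
    constructor
    · intro h
      exact ⟨hT' h, Ideal.prod_le_inf.trans (Finset.inf_le h)⟩
    · rintro ⟨h1, h2⟩
      have := (hF P h1).1
      obtain ⟨Q, hQ, hQP⟩ := (Ideal.IsPrime.prod_le this).1 h2
      have hQm : Q.IsMaximal := (hF Q (hT' hQ)).1.isMaximal (hF Q (hT' hQ)).2
      rwa [← hQm.eq_of_le this.ne_top hQP]
  intro T hT T' hT' h
  ext P
  rw [key T hT, key T' hT']
  simp only at h
  rw [h]

open Classical in
theorem euler_bound (K : Type*) [Field K] [NumberField K] : ∃ C : ℝ, 0 < C ∧ ∃ δ : ℝ, 0 < δ ∧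
    ∀ s : ℝ, 1 < s → s < 1 + δ → ∀ F : Finset (Ideal (𝓞 K)), (∀ P ∈ F, P.IsPrime ∧ P ≠ ⊥) →
      ∏ P ∈ F, (1 + (Ideal.absNorm P : ℝ) ^ (-s)) ≤ C / (s - 1) := by
  obtain ⟨C, hC, δ, hδ, H⟩ := zeta_bound K
  refine ⟨C, hC, δ, hδ, ?_⟩
  intro s hs1 hs2 F hF
  have h1 := H s hs1 hs2 (F.powerset.image (fun T => ∏ P ∈ T, P)) (by
    intro I hI
    obtain ⟨T, hT, rfl⟩ := Finset.mem_image.1 hI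
    change _ ≠ (0 : Ideal (𝓞 K))
    rw [Finset.prod_ne_zero_iff]
    intro P hP
    exact (hF P (Finset.mem_powerset.1 hT hP)).2)
  rw [Finset.sum_image (prod_injOn F hF)] at h1
  rw [Finset.prod_one_add]
  refine le_trans (le_of_eq ?_) h1
  apply Finset.sum_congr rfl
  intro T hT
  rw [map_prod]
  push_cast
  rw [Real.finsetProd_rpow]
  intro i _; positivity
end S14
end

section
namespace S14
open Finset Polynomial NumberField Filter Topology

/-- roots mod p -/
def rts (h : ℤ[X]) (p : ℕ) : Finset ℕ := (range p).filter (fun r => (p:ℤ) ∣ h.eval (r:ℤ))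

theorem eval_zmod (h : ℤ[X]) (p : ℕ) (r : ℤ) :
    (h.map (Int.castRingHom (ZMod p))).eval (r : ZMod p) = ((h.eval r : ℤ) : ZMod p) := by
  rw [eval_map, ← eq_intCast (Int.castRingHom (ZMod p)) r, eval₂_at_apply]; simp

theorem rts_root (h : ℤ[X]) (p : ℕ) (r : ℕ) :
    (p:ℤ) ∣ h.eval (r:ℤ) ↔ (h.map (Int.castRingHom (ZMod p))).eval (r : ZMod p) = 0 := by
  have := eval_zmod h p r
  push_cast at this
  rw [this, ZMod.intCast_zmod_eq_zero_iff_dvd]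

theorem rts_card_le (h : ℤ[X]) (hm : h.Monic) (p : ℕ) (hp : p.Prime) :
    (rts h p).card ≤ h.natDegree := by
  have : Fact p.Prime := ⟨hp⟩
  set g := h.map (Int.castRingHom (ZMod p)) with hg
  have hg0 : g ≠ 0 := (hm.map _).ne_zero
  have hd : g.natDegree = h.natDegree := hm.natDegree_map _
  classical
  calc (rts h p).card ≤ g.roots.toFinset.card := by
        apply Finset.card_le_card_of_injOn (fun r : ℕ => (r : ZMod p))
        · intro r hr
          simp only [rts, coe_filter, Set.mem_ofPred_eq] at hr
          simp only [Finset.mem_coe, Multiset.mem_toFinset]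
          rw [mem_roots hg0]
          exact (rts_root h p r).1 hr.2
        · intro r hr r' hr' hrr
          simp only [rts, coe_filter, Set.mem_ofPred_eq, Finset.mem_range] at hr hr'
          simp only at hrr
          rw [ZMod.natCast_eq_natCast_iff'] at hrr
          rwa [Nat.mod_eq_of_lt hr.1, Nat.mod_eq_of_lt hr'.1] at hrr
    _ ≤ Multiset.card g.roots := Multiset.toFinset_card_le _
    _ ≤ g.natDegree := card_roots' g
    _ = h.natDegree := hd

theorem rts_card_le' (h : ℤ[X]) (p : ℕ) : (rts h p).card ≤ p := by
  exact (Finset.card_filter_le _ _).trans (by simp)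

theorem exists_field (h : ℤ[X]) (hm : h.Monic) (hi : Irreducible (h.map (Int.castRingHom ℚ))) :
    ∃ (K : Type) (_ : Field K) (_ : NumberField K) (θ : 𝓞 K),
      minpoly ℤ θ = h ∧ RingOfIntegers.exponent θ ≠ 0 := by
  have : Fact (Irreducible (h.map (Int.castRingHom ℚ))) := ⟨hi⟩
  set q := h.map (Int.castRingHom ℚ) with hq
  have hqm : q.Monic := hm.map _
  let B := AdjoinRoot.powerBasis (f := q) hqm.ne_zero
  have : FiniteDimensional ℚ (AdjoinRoot q) := B.finite
  have hc : CharZero (AdjoinRoot q) := charZero_of_injective_algebraMap (algebraMap ℚ _).injective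
  have hN : NumberField (AdjoinRoot q) := { to_charZero := hc, to_finiteDimensional := this }
  have hinteg : IsIntegral ℤ (AdjoinRoot.root q) := by
    refine ⟨h, hm, ?_⟩
    have h1 := AdjoinRoot.eval₂_root q
    have h2 : eval₂ (AdjoinRoot.of q) (AdjoinRoot.root q) q =
        eval₂ ((AdjoinRoot.of q).comp (Int.castRingHom ℚ)) (AdjoinRoot.root q) h :=
      eval₂_map _ _ _
    rw [h2] at h1
    rw [← h1]
    exact congrArg (fun g => eval₂ g (AdjoinRoot.root q) h) (RingHom.ext_int _ _)
  let θ : 𝓞 (AdjoinRoot q) := ⟨AdjoinRoot.root q, hinteg⟩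
  refine ⟨AdjoinRoot q, inferInstance, hN, θ, ?_, exponent_ne_zero B θ rfl⟩
  rw [← RingOfIntegers.minpoly_coe]
  change minpoly ℤ (AdjoinRoot.root q) = h
  have h1 := minpoly.isIntegrallyClosed_eq_field_fractions' ℚ hinteg
  rw [← minpoly.eq_of_irreducible_of_monic hi (by
    have h2 := AdjoinRoot.eval₂_root q
    rw [aeval_def]
    rw [← h2]
    exact congrArg (fun g => eval₂ g (AdjoinRoot.root q) q) (Subsingleton.elim _ _)) hqm] at h1
  apply Polynomial.map_injective (Int.castRingHom ℚ) (RingHom.injective_int _)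
  rw [← hq]; exact h1.symm

theorem log_one_add_ge (x : ℝ) (hx : 0 ≤ x) : x - x^2 ≤ Real.log (1 + x) := by
  have := Real.one_sub_inv_le_log_of_pos (show 0 < 1 + x by linarith)
  refine le_trans ?_ this
  have h1 : 0 < 1 + x := by linarith
  rw [← sub_nonneg]
  have : 1 - (1+x)⁻¹ - (x - x^2) = x^3 / (1+x) := by field_simp; ring
  rw [this]; positivity

theorem inv_le_aux (p : ℕ) (hp : 2 ≤ p) (s : ℝ) (hs : 1 < s) :
    (1:ℝ) / p ≤ Real.log (1 + (p:ℝ)^(-s)) + 1 / (p:ℝ)^2 + (s-1) * (Real.log p / p) := by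
  have hp0 : (0:ℝ) < p := by positivity
  have h1 := log_one_add_ge ((p:ℝ)^(-s)) (by positivity)
  have h2 : (p:ℝ)^(-s) ≤ 1 / p := by
    rw [one_div, ← Real.rpow_neg_one]
    apply Real.rpow_le_rpow_of_exponent_le
    · exact_mod_cast (by omega : 1 ≤ p)
    · linarith
  have h3 : ((p:ℝ)^(-s))^2 ≤ 1 / (p:ℝ)^2 := by
    calc ((p:ℝ)^(-s))^2 ≤ (1/(p:ℝ))^2 := by gcongr
      _ = _ := by rw [div_pow, one_pow]
  have h4 : (1:ℝ)/p - (s-1) * (Real.log p / p) ≤ (p:ℝ)^(-s) := by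
    have : (p:ℝ)^(-s) = (1/p) * Real.exp (-(s-1) * Real.log p) := by
      rw [show -s = -1 + (-(s-1)) by ring, Real.rpow_add hp0, Real.rpow_neg_one, one_div,
        Real.rpow_def_of_pos hp0, mul_comm (Real.log _)]
    rw [this]
    have h5 := Real.add_one_le_exp (-(s-1) * Real.log p)
    calc (1:ℝ)/p - (s-1) * (Real.log p / p) = (1/p) * (-(s-1) * Real.log p + 1) := by ring
      _ ≤ _ := by gcongr
  linarith

theorem sum_inv_sq (S : Finset ℕ) : ∑ p ∈ S, (1:ℝ) / (p:ℝ)^2 ≤ ∑' n : ℕ, (1:ℝ)/(n:ℝ)^2 := by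
  have : Summable (fun n : ℕ => (1:ℝ)/(n:ℝ)^2) := Real.summable_one_div_nat_pow.2 (by norm_num)
  exact this.sum_le_tsum S (fun _ _ => by positivity)

theorem good_bound (h : ℤ[X]) (hm : h.Monic) (hi : Irreducible (h.map (Int.castRingHom ℚ))) :
    ∃ e : ℕ, e ≠ 0 ∧ ∃ C : ℝ, 0 < C ∧ ∃ δ : ℝ, 0 < δ ∧ ∀ s : ℝ, 1 < s → s < 1 + δ →
     ∀ S : Finset ℕ, (∀ p ∈ S, p.Prime ∧ ¬ p ∣ e) →
      ∑ p ∈ S, ((rts h p).card : ℝ) * Real.log (1 + (p:ℝ)^(-s)) ≤ Real.log (C / (s-1)) := by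
  obtain ⟨K, _, _, θ, hθ, he⟩ := exists_field h hm hi
  obtain ⟨C, hC, δ, hδ, H⟩ := euler_bound K
  refine ⟨RingOfIntegers.exponent θ, he, C, hC, δ, hδ, ?_⟩
  intro s hs1 hs2 S hS
  classical
  have hex : ∀ x : (Σ _ : ℕ, ℕ), ∃ P : Ideal (𝓞 K), x ∈ S.sigma (fun p => rts h p) →
      P.IsPrime ∧ Ideal.absNorm P = x.1 ∧ ∃ φ : 𝓞 K →+* ZMod x.1, φ θ = x.2 ∧ P = RingHom.ker φ := by
    rintro ⟨p, r⟩
    by_cases hx : (⟨p, r⟩ : (Σ _ : ℕ, ℕ)) ∈ S.sigma (fun p => rts h p)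
    · have hx' := Finset.mem_sigma.1 hx
      simp only [rts, Finset.mem_filter] at hx'
      obtain ⟨φ, hφ⟩ := ideal_of_root θ p (hS p hx'.1).1 (hS p hx'.1).2 (r : ZMod p)
        (by rw [hθ]; exact (rts_root h p r).1 hx'.2.2)
      have := ker_facts p (hS p hx'.1).1 φ
      exact ⟨RingHom.ker φ, fun _ => ⟨this.1, this.2, φ, hφ, rfl⟩⟩
    · exact ⟨⊥, fun h => absurd h hx⟩
  choose P hP using hex
  have hinj : Set.InjOn P (S.sigma (fun p => rts h p) : Set (Σ _ : ℕ, ℕ)) := by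
    rintro ⟨p, r⟩ hx ⟨p', r'⟩ hx' hPP
    obtain ⟨-, h1, φ, h2, h3⟩ := hP _ hx
    obtain ⟨-, h1', φ', h2', h3'⟩ := hP _ hx'
    have hpp : p = p' := by
      simp only at h1 h1'
      rw [← h1, ← h1', hPP]
    subst hpp
    simp only at φ φ' h2 h2' h3 h3'
    have hm1 : θ - (r : 𝓞 K) ∈ RingHom.ker φ := by rw [RingHom.mem_ker]; simp [h2]
    rw [← h3, hPP, h3', RingHom.mem_ker] at hm1
    simp only [map_sub, h2', map_natCast, sub_eq_zero] at hm1
    have hr := (Finset.mem_filter.1 (Finset.mem_sigma.1 hx).2).1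
    have hr' := (Finset.mem_filter.1 (Finset.mem_sigma.1 hx').2).1
    simp only [Finset.mem_range] at hr hr'
    rw [ZMod.natCast_eq_natCast_iff', Nat.mod_eq_of_lt hr, Nat.mod_eq_of_lt hr'] at hm1
    rw [hm1]
  have h1 := H s hs1 hs2 ((S.sigma (fun p => rts h p)).image P) (by
    intro I hI
    obtain ⟨x, hx, rfl⟩ := Finset.mem_image.1 hI
    obtain ⟨a, b, -⟩ := hP x hx
    refine ⟨a, ?_⟩
    intro h0
    rw [h0] at b
    simp at b
    exact (hS x.1 (Finset.mem_sigma.1 hx).1).1.ne_zero b.symm)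
  rw [Finset.prod_image hinj] at h1
  have h2 : ∏ x ∈ S.sigma (fun p => rts h p), (1 + (Ideal.absNorm (P x) : ℝ)^(-s)) =
      ∏ p ∈ S, (1 + (p:ℝ)^(-s)) ^ (rts h p).card := by
    rw [Finset.prod_sigma]
    apply Finset.prod_congr rfl
    intro p hp
    rw [← Finset.prod_const]
    apply Finset.prod_congr rfl
    intro r hr
    rw [(hP ⟨p, r⟩ (Finset.mem_sigma.2 ⟨hp, hr⟩)).2.1]
  rw [h2] at h1
  have hpos : ∀ p : ℕ, (0:ℝ) < 1 + (p:ℝ)^(-s) := fun p => by positivity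
  have h3 := Real.log_le_log (Finset.prod_pos (fun p _ => pow_pos (hpos p) _)) h1
  rw [Real.log_prod (fun p _ => (pow_pos (hpos p) _).ne')] at h3
  simpa [Real.log_pow] using h3

theorem mertens_upper (h : ℤ[X]) (hm : h.Monic) (hi : Irreducible (h.map (Int.castRingHom ℚ))) :
    ∃ C : ℝ, 0 ≤ C ∧ ∀ z : ℕ, 3 ≤ z →
      ∑ p ∈ (range (z+1)).filter Nat.Prime, ((rts h p).card : ℝ) / p ≤ Real.log (Real.log z) + C := by
  obtain ⟨e, he, C, hC, δ, hδ, H⟩ := good_bound h hm hi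
  obtain ⟨z0, hz0⟩ := exists_nat_gt (Real.exp (1/δ))
  set k := (h.natDegree : ℝ)
  set L := ∑' n : ℕ, (1:ℝ)/(n:ℝ)^2
  have hL : 0 ≤ L := tsum_nonneg (fun _ => by positivity)
  have triv : ∀ S : Finset ℕ, ∑ p ∈ S, ((rts h p).card : ℝ) / p ≤ S.card := by
    intro S
    have : ∑ p ∈ S, ((rts h p).card : ℝ) / p ≤ ∑ p ∈ S, 1 := by
      apply Finset.sum_le_sum
      intro p _
      apply div_le_one_of_le₀ _ (Nat.cast_nonneg _)
      exact_mod_cast rts_card_le' h p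
    simpa using this
  refine ⟨|Real.log C| + (k * L + 2 * k) + (e + 1) + (z0 + 1), by positivity, ?_⟩
  intro z hz
  have hz3 : (3:ℝ) ≤ z := by exact_mod_cast hz
  have hlz : 1 < Real.log z := by
    rw [Real.lt_log_iff_exp_lt (by linarith)]
    linarith [Real.exp_one_lt_d9]
  have hllz : 0 ≤ Real.log (Real.log z) := Real.log_nonneg hlz.le
  have hk0 : 0 ≤ k := Nat.cast_nonneg _
  rcases lt_or_ge z z0 with hlt | hge
  · have h1 := triv ((range (z+1)).filter Nat.Prime)
    have h2 : ((range (z+1)).filter Nat.Prime).card ≤ z0 :=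
      (Finset.card_filter_le _ _).trans (by simp; omega)
    have h2' : (((range (z+1)).filter Nat.Prime).card : ℝ) ≤ z0 := by exact_mod_cast h2
    have : 0 ≤ |Real.log C| + (k * L + 2 * k) + (e + 1) := by positivity
    linarith
  · set s := 1 + 1 / Real.log z with hs
    have hs1 : 1 < s := by rw [hs]; have : 0 < 1 / Real.log z := by positivity
                           linarith
    have hs2 : s < 1 + δ := by
      rw [hs]
      have : 1/δ < Real.log z := by
        rw [Real.lt_log_iff_exp_lt (by linarith)]
        exact hz0.trans_le (by exact_mod_cast hge)
      have : 1 / Real.log z < δ := by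
        rw [div_lt_iff₀ (by linarith)]
        rw [div_lt_iff₀ hδ] at this
        linarith
      linarith
    set A := (range (z+1)).filter Nat.Prime with hA
    have hApr : ∀ p ∈ A, p.Prime ∧ p ≤ z := by
      intro p hp
      simp only [hA, Finset.mem_filter, Finset.mem_range] at hp
      exact ⟨hp.2, by omega⟩
    rw [← Finset.sum_filter_add_sum_filter_not A (fun p => p ∣ e)]
    have hbad : ∑ p ∈ A.filter (fun p => p ∣ e), ((rts h p).card : ℝ) / p ≤ e + 1 := by
      refine (triv _).trans ?_
      have : (A.filter (fun p => p ∣ e)).card ≤ (range (e+1)).card := by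
        apply Finset.card_le_card
        intro p hp
        have := Nat.le_of_dvd (Nat.pos_of_ne_zero he) (Finset.mem_filter.1 hp).2
        simp; omega
      rw [Finset.card_range] at this
      exact_mod_cast this
    set S := A.filter (fun p => ¬ p ∣ e) with hS
    have hSA : ∀ p ∈ S, p.Prime ∧ p ≤ z := fun p hp => hApr p (Finset.mem_filter.1 hp).1
    have hg := H s hs1 hs2 S (fun p hp => ⟨(hSA p hp).1, (Finset.mem_filter.1 hp).2⟩)
    have hgood : ∑ p ∈ S, ((rts h p).card : ℝ) / p ≤
        ∑ p ∈ S, ((rts h p).card : ℝ) * Real.log (1 + (p:ℝ)^(-s)) +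
        (k * ∑ p ∈ S, (1:ℝ)/(p:ℝ)^2 + k * ((s-1) * ∑ p ∈ S, Real.log p / p)) := by
      rw [Finset.mul_sum, Finset.mul_sum, Finset.mul_sum, ← Finset.sum_add_distrib, ← Finset.sum_add_distrib]
      apply Finset.sum_le_sum
      intro p hp
      have h1 := inv_le_aux p (hSA p hp).1.two_le s hs1
      have h2 : ((rts h p).card : ℝ) ≤ k := Nat.cast_le.2 (rts_card_le h hm p (hSA p hp).1)
      have h3 : 0 ≤ 1 / (p:ℝ)^2 + (s-1) * (Real.log p / p) := by
        have : 0 ≤ Real.log p := Real.log_natCast_nonneg p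
        have : 0 ≤ s - 1 := by linarith
        positivity
      calc ((rts h p).card : ℝ) / p = ((rts h p).card : ℝ) * (1 / p) := by ring
        _ ≤ ((rts h p).card : ℝ) * (Real.log (1 + (p:ℝ)^(-s)) + 1 / (p:ℝ)^2 + (s-1) * (Real.log p / p)) := by gcongr
        _ = ((rts h p).card : ℝ) * Real.log (1 + (p:ℝ)^(-s)) + ((rts h p).card : ℝ) * (1 / (p:ℝ)^2 + (s-1) * (Real.log p / p)) := by ring
        _ ≤ ((rts h p).card : ℝ) * Real.log (1 + (p:ℝ)^(-s)) + k * (1 / (p:ℝ)^2 + (s-1) * (Real.log p / p)) := by gcongr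
        _ = _ := by ring
    have hsq := sum_inv_sq S
    have hlg := sum_log_div_le' S (fun p hp => (hSA p hp).1) z (fun p hp => (hSA p hp).2)
    have hs3 : s - 1 = 1 / Real.log z := by rw [hs]; ring
    have h5 : (s-1) * ∑ p ∈ S, Real.log p / p ≤ 2 := by
      rw [hs3, one_div, inv_mul_le_iff₀ (by linarith)]; linarith
    have h6 : Real.log (C / (s-1)) = Real.log C + Real.log (Real.log z) := by
      rw [hs3, div_div_eq_mul_div, div_one, Real.log_mul hC.ne' (by linarith)]
    have h7 : k * ∑ p ∈ S, (1:ℝ)/(p:ℝ)^2 ≤ k * L := by gcongr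
    have h8 : k * ((s-1) * ∑ p ∈ S, Real.log p / p) ≤ k * 2 := by gcongr
    have h9 := le_abs_self (Real.log C)
    have h10 : (0:ℝ) ≤ z0 := Nat.cast_nonneg _
    linarith
end S14
end

section
namespace S14
open Finset Polynomial

theorem mertens_f (f : ℤ[X]) (hm : f.Monic) :
    ∃ C : ℝ, 0 ≤ C ∧ ∀ z : ℕ, 3 ≤ z →
      ∑ p ∈ (range (z+1)).filter Nat.Prime, ((rts f p).card : ℝ) / p ≤
        ((UniqueFactorizationMonoid.normalizedFactors (f.map (Int.castRingHom ℚ))).toFinset.card : ℝ)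
          * Real.log (Real.log z) + C := by
  classical
  set F := UniqueFactorizationMonoid.normalizedFactors (f.map (Int.castRingHom ℚ)) with hF
  have hfm : (f.map (Int.castRingHom ℚ)).Monic := hm.map _
  have hqs : ∀ q ∈ F, Irreducible q ∧ q.Monic ∧ q ∣ f.map (Int.castRingHom ℚ) := by
    intro q hq
    exact (Polynomial.mem_normalizedFactors_iff hfm.ne_zero).1 hq
  have hex : ∀ q : ℚ[X], ∃ h : ℤ[X], q ∈ F → h.map (Int.castRingHom ℚ) = q ∧ h.Monic := by
    intro q
    by_cases hq : q ∈ F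
    · obtain ⟨h1, h2, h3⟩ := hqs q hq
      obtain ⟨h, hh⟩ := IsIntegrallyClosed.eq_map_mul_C_of_dvd ℚ hm h3
      rw [h2.leadingCoeff, C_1, mul_one] at hh
      refine ⟨h, fun _ => ⟨hh, ?_⟩⟩
      apply Polynomial.monic_of_injective (RingHom.injective_int (Int.castRingHom ℚ))
      have : h.map (Int.castRingHom ℚ) = q := hh
      rw [this]; exact h2
    · exact ⟨0, fun h => absurd h hq⟩
  choose H hH using hex
  have hprod : f = (F.map H).prod := by
    apply Polynomial.map_injective (Int.castRingHom ℚ) (RingHom.injective_int _)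
    rw [Polynomial.map_multiset_prod, Multiset.map_map]
    have h1 : F.map (Polynomial.map (Int.castRingHom ℚ) ∘ H) = F := by
      conv_rhs => rw [← Multiset.map_id F]
      apply Multiset.map_congr rfl
      intro q hq
      exact (hH q hq).1
    rw [h1, hF, UniqueFactorizationMonoid.prod_normalizedFactors_eq hfm.ne_zero]
    exact hfm.normalize_eq_self.symm
  have hex2 : ∀ q : ℚ[X], ∃ C : ℝ, q ∈ F → 0 ≤ C ∧ ∀ z : ℕ, 3 ≤ z →
      ∑ p ∈ (range (z+1)).filter Nat.Prime, ((rts (H q) p).card : ℝ) / p ≤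
        Real.log (Real.log z) + C := by
    intro q
    by_cases hq : q ∈ F
    · obtain ⟨C, h1, h2⟩ := mertens_upper (H q) (hH q hq).2 (by rw [(hH q hq).1]; exact (hqs q hq).1)
      exact ⟨C, fun _ => ⟨h1, h2⟩⟩
    · exact ⟨0, fun h => absurd h hq⟩
  choose Cq hCq using hex2
  refine ⟨∑ q ∈ F.toFinset, Cq q, Finset.sum_nonneg (fun q hq => (hCq q (Multiset.mem_toFinset.1 hq)).1), ?_⟩
  intro z hz
  have h1 : ∑ p ∈ (range (z+1)).filter Nat.Prime, ((rts f p).card : ℝ) / p ≤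
      ∑ p ∈ (range (z+1)).filter Nat.Prime, ∑ q ∈ F.toFinset, ((rts (H q) p).card : ℝ) / p := by
    apply Finset.sum_le_sum
    intro p hp
    have hpp := (Finset.mem_filter.1 hp).2
    rw [← Finset.sum_div]
    gcongr
    have hsub : rts f p ⊆ F.toFinset.biUnion (fun q => rts (H q) p) := by
      intro r hr
      simp only [rts, Finset.mem_filter] at hr
      have h3 := hr.2
      rw [hprod, ← coe_evalRingHom, map_multiset_prod, Multiset.map_map] at h3
      obtain ⟨q, hq, hd⟩ := (Nat.prime_iff_prime_int.1 hpp).exists_mem_multiset_map_dvd h3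
      simp only [Finset.mem_biUnion, Multiset.mem_toFinset, rts, Finset.mem_filter]
      exact ⟨q, hq, hr.1, by simpa using hd⟩
    exact_mod_cast (Finset.card_le_card hsub).trans Finset.card_biUnion_le
  refine h1.trans ?_
  rw [Finset.sum_comm]
  calc _ ≤ ∑ q ∈ F.toFinset, (Real.log (Real.log z) + Cq q) :=
        Finset.sum_le_sum (fun q hq => (hCq q (Multiset.mem_toFinset.1 hq)).2 z hz)
    _ = _ := by rw [Finset.sum_add_distrib, Finset.sum_const, nsmul_eq_mul]
end S14
end

section
namespace S14
open Finset Polynomial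

/-- the sifting relation -/
def BB (f : ℤ[X]) (m0 Q : ℕ) (p n : ℕ) : Prop := (p:ℤ) ∣ f.eval ((m0:ℤ) + Q * n)

theorem dvd_eval_congr (f : ℤ[X]) (p a b : ℤ) (h : p ∣ a - b) : p ∣ f.eval a ↔ p ∣ f.eval b := by
  have h1 : p ∣ f.eval a - f.eval b := h.trans (sub_dvd_eval_sub a b f)
  constructor
  · intro h2
    have := dvd_sub h2 h1
    simpa using this
  · intro h2
    have := dvd_add h1 h2
    simpa using this

theorem BB_per (f : ℤ[X]) (m0 Q : ℕ) (p n : ℕ) : BB f m0 Q p n ↔ BB f m0 Q p (n % p) := by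
  apply dvd_eval_congr
  have h : (p:ℤ) ∣ (n:ℤ) - ((n % p : ℕ) : ℤ) := by
    push_cast
    exact Int.dvd_self_sub_emod
  have h2 : ((m0:ℤ) + Q * n) - ((m0:ℤ) + Q * ((n % p : ℕ) : ℤ)) = Q * ((n:ℤ) - ((n % p : ℕ) : ℤ)) := by ring
  rw [h2]
  exact h.mul_left _

open Classical in
theorem rr_BB_le (f : ℤ[X]) (m0 Q : ℕ) (p : ℕ) (hp : p.Prime) (hpQ : ¬ p ∣ Q) :
    rr (BB f m0 Q) p ≤ ((rts f p).card : ℝ) := by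
  rw [rr, Nat.cast_le]
  apply Finset.card_le_card_of_injOn (fun r => (m0 + Q * r) % p)
  · intro r hr
    have hr := Finset.mem_filter.1 hr
    simp only [rts, Finset.mem_coe, Finset.mem_filter, Finset.mem_range]
    refine ⟨Nat.mod_lt _ hp.pos, ?_⟩
    rw [dvd_eval_congr f p _ ((m0:ℤ) + Q * r)]
    · exact hr.2
    · push_cast
      rw [← dvd_neg, neg_sub]
      exact Int.dvd_self_sub_emod
  · intro r hr r' hr' h
    have hr := Finset.mem_range.1 (Finset.mem_filter.1 hr).1
    have hr' := Finset.mem_range.1 (Finset.mem_filter.1 hr').1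
    have h1 : m0 + Q * r ≡ m0 + Q * r' [MOD p] := h
    have h2 : Q * r ≡ Q * r' [MOD p] := Nat.ModEq.add_left_cancel' m0 h1
    have h3 : r ≡ r' [MOD p] := Nat.ModEq.cancel_left_of_coprime
      ((Nat.Prime.coprime_iff_not_dvd hp).2 hpQ) h2
    rw [Nat.ModEq, Nat.mod_eq_of_lt hr, Nat.mod_eq_of_lt hr'] at h3
    exact h3

theorem one_sub_ge (x : ℝ) (h0 : 0 ≤ x) (h1 : x ≤ 1/2) : Real.exp (-(x + 2 * x^2)) ≤ 1 - x := by
  have h := Real.abs_log_sub_add_sum_range_le (x := x) (by rw [abs_of_nonneg h0]; linarith) 1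
  simp only [Finset.sum_range_one, abs_of_nonneg h0] at h
  norm_num at h
  have h2 : x^2 / (1-x) ≤ 2 * x^2 := by
    rw [div_le_iff₀ (by linarith)]
    nlinarith [sq_nonneg x]
  have h3 := (abs_le.1 h).1
  rw [← Real.le_log_iff_exp_le (by linarith)]
  linarith

theorem prod_lower (f : ℤ[X]) (hm : f.Monic) (m0 Q D : ℕ) (hD : 2 * f.natDegree ≤ D)
    (hQ : ∀ p : ℕ, p.Prime → D < p → ¬ p ∣ Q) :
    ∃ c : ℝ, 0 < c ∧ ∀ z : ℕ, 3 ≤ z → c / (Real.log z) ^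
      (UniqueFactorizationMonoid.normalizedFactors (f.map (Int.castRingHom ℚ))).toFinset.card ≤
      ∏ p ∈ PP D z, (1 - rr (BB f m0 Q) p / p) := by
  obtain ⟨C, hC, H⟩ := mertens_f f hm
  set κ := (UniqueFactorizationMonoid.normalizedFactors (f.map (Int.castRingHom ℚ))).toFinset.card
  set k : ℝ := (f.natDegree : ℝ) with hk
  set L := ∑' n : ℕ, (1:ℝ)/(n:ℝ)^2
  refine ⟨Real.exp (-(C + 2 * k^2 * L)), Real.exp_pos _, ?_⟩
  intro z hz
  have hz3 : (3:ℝ) ≤ z := by exact_mod_cast hz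
  have hlz : 1 < Real.log z := by
    rw [Real.lt_log_iff_exp_lt (by linarith)]
    linarith [Real.exp_one_lt_d9]
  have hPP : ∀ p ∈ PP D z, p.Prime ∧ D < p ∧ p ≤ z := by
    intro p hp
    simp only [PP, Finset.mem_filter, Finset.mem_range] at hp
    exact ⟨hp.2.1, hp.2.2, by omega⟩
  have hrr : ∀ p ∈ PP D z, rr (BB f m0 Q) p ≤ ((rts f p).card : ℝ) := fun p hp =>
    rr_BB_le f m0 Q p (hPP p hp).1 (hQ p (hPP p hp).1 (hPP p hp).2.1)
  have hrk : ∀ p ∈ PP D z, rr (BB f m0 Q) p ≤ k := fun p hp =>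
    (hrr p hp).trans (Nat.cast_le.2 (rts_card_le f hm p (hPP p hp).1))
  have hp0 : ∀ p ∈ PP D z, (0:ℝ) < p := fun p hp => by exact_mod_cast (hPP p hp).1.pos
  have hS1 : ∑ p ∈ PP D z, rr (BB f m0 Q) p / p ≤ κ * Real.log (Real.log z) + C := by
    refine le_trans ?_ (H z hz)
    calc ∑ p ∈ PP D z, rr (BB f m0 Q) p / p ≤ ∑ p ∈ PP D z, ((rts f p).card : ℝ) / p := by
          apply Finset.sum_le_sum
          intro p hp
          have := hrr p hp
          gcongr
      _ ≤ _ := by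
          apply Finset.sum_le_sum_of_subset_of_nonneg
          · intro p hp
            have := hPP p hp
            simp only [Finset.mem_filter, Finset.mem_range]
            exact ⟨by omega, this.1⟩
          · intros; positivity
  have hS2 : ∑ p ∈ PP D z, 2 * (rr (BB f m0 Q) p / p)^2 ≤ 2 * k^2 * L := by
    calc ∑ p ∈ PP D z, 2 * (rr (BB f m0 Q) p / p)^2 ≤ ∑ p ∈ PP D z, 2 * k^2 * ((1:ℝ)/(p:ℝ)^2) := by
          apply Finset.sum_le_sum
          intro p hp
          have h1 := hrk p hp
          have h0 := rr_nonneg (BB f m0 Q) p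
          rw [div_pow, mul_assoc, mul_one_div]
          gcongr
      _ = 2 * k^2 * ∑ p ∈ PP D z, (1:ℝ)/(p:ℝ)^2 := by rw [Finset.mul_sum]
      _ ≤ _ := by
          have := sum_inv_sq (PP D z)
          gcongr
  have hexp : Real.exp (-(C + 2 * k^2 * L)) / (Real.log z)^κ =
      Real.exp (-(κ * Real.log (Real.log z) + C + 2 * k^2 * L)) := by
    have : (Real.log z)^κ = Real.exp (κ * Real.log (Real.log z)) := by
      rw [← Real.log_pow, Real.exp_log (by positivity)]
    rw [this, ← Real.exp_sub]
    congr 1; ring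
  rw [hexp]
  calc Real.exp (-(κ * Real.log (Real.log z) + C + 2 * k^2 * L))
      ≤ Real.exp (∑ p ∈ PP D z, -(rr (BB f m0 Q) p / p + 2 * (rr (BB f m0 Q) p / p)^2)) := by
        apply Real.exp_le_exp.2
        rw [Finset.sum_neg_distrib, Finset.sum_add_distrib]
        linarith
    _ = ∏ p ∈ PP D z, Real.exp (-(rr (BB f m0 Q) p / p + 2 * (rr (BB f m0 Q) p / p)^2)) := by
        rw [Real.exp_sum]
    _ ≤ _ := by
        apply Finset.prod_le_prod
        · intros; positivity
        · intro p hp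
          apply one_sub_ge
          · exact div_nonneg (rr_nonneg _ _) (Nat.cast_nonneg _)
          · rw [div_le_iff₀ (hp0 p hp)]
            have h1 := hrk p hp
            have h2 : (2:ℝ) * k ≤ p := by
              rw [hk]; exact_mod_cast hD.trans (hPP p hp).2.1.le
            linarith

open Classical in
theorem sieve_count (f : ℤ[X]) (hm : f.Monic) (m0 Q D : ℕ) (hD : 2 * f.natDegree ≤ D) (hD3 : 3 ≤ D)
    (hQ : ∀ p : ℕ, p.Prime → D < p → ¬ p ∣ Q) :
    ∃ (c : ℝ) (E : ℕ), 0 < c ∧ 1 ≤ E ∧ ∀ z N : ℕ, 3 ≤ z → c * N / (Real.log z) ^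
      (UniqueFactorizationMonoid.normalizedFactors (f.map (Int.castRingHom ℚ))).toFinset.card
        - (z:ℝ)^E ≤
      (((range N).filter (fun n => ∀ p ∈ PP D z, ¬ BB f m0 Q p n)).card : ℝ) := by
  obtain ⟨c, hc, H⟩ := prod_lower f hm m0 Q D hD hQ
  obtain ⟨E, hE⟩ := sieve f.natDegree
  refine ⟨c/2, E+1, by positivity, by omega, ?_⟩
  intro z N hz
  have h1 := hE D (BB f m0 Q) (BB_per f m0 Q) hD hD3 (fun p hp hDp =>
    (rr_BB_le f m0 Q p hp (hQ p hp hDp)).trans (Nat.cast_le.2 (rts_card_le f hm p hp))) z N (by omega)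
  refine le_trans ?_ h1
  have h2 := H z hz
  have h3 : (z:ℝ)^E ≤ (z:ℝ)^(E+1) := by
    apply pow_le_pow_right₀ _ (by omega)
    exact_mod_cast (by omega : 1 ≤ z)
  have h4 : (1/2:ℝ) * N * (c / (Real.log z) ^
      (UniqueFactorizationMonoid.normalizedFactors (f.map (Int.castRingHom ℚ))).toFinset.card) ≤
    (1/2:ℝ) * N * ∏ p ∈ PP D z, (1 - rr (BB f m0 Q) p / p) := by gcongr
  have h5 : c/2 * N / (Real.log z) ^
      (UniqueFactorizationMonoid.normalizedFactors (f.map (Int.castRingHom ℚ))).toFinset.card = (1/2:ℝ) * N * (c / (Real.log z) ^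
      (UniqueFactorizationMonoid.normalizedFactors (f.map (Int.castRingHom ℚ))).toFinset.card) := by ring
  rw [h5]
  linarith
end S14
end

section
namespace S14
open Finset Polynomial

theorem exists_root_nat (e N : ℕ) (he : 1 ≤ e) : ∃ z : ℕ, z ^ e ≤ N ∧ N < (z+1)^e := by
  refine ⟨Nat.findGreatest (fun z => z^e ≤ N) N, ?_, ?_⟩
  · exact Nat.findGreatest_spec (P := fun z => z^e ≤ N) (Nat.zero_le N) (by
      simp [Nat.zero_pow (by omega : 0 < e)])
  · set z := Nat.findGreatest (fun z => z^e ≤ N) N with hz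
    rcases le_or_gt (z+1) N with h | h
    · have := Nat.findGreatest_is_greatest (P := fun z => z^e ≤ N) (k := z+1) (n := N) (by omega) h
      omega
    · exact h.trans_le (Nat.le_self_pow (by omega) _)

theorem eval_bound (f : ℤ[X]) : ∃ C : ℕ, ∀ m : ℕ, 1 ≤ m → (f.eval (m:ℤ)).natAbs ≤ C * m ^ f.natDegree := by
  refine ⟨∑ i ∈ range (f.natDegree + 1), (f.coeff i).natAbs, ?_⟩
  intro m hm
  rw [eval_eq_sum_range, Finset.sum_mul]
  refine (Int.natAbs_sum_le _ _).trans ?_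
  apply Finset.sum_le_sum
  intro i hi
  rw [Int.natAbs_mul, Int.natAbs_pow, Int.natAbs_natCast]
  have := Finset.mem_range.1 hi
  gcongr
  omega

theorem pow_omega_le (w z : ℕ) (hw : w ≠ 0) (h : ∀ p : ℕ, p.Prime → p ∣ w → z ≤ p) :
    z ^ (ArithmeticFunction.cardFactors w) ≤ w := by
  rw [ArithmeticFunction.cardFactors_apply]
  conv_rhs => rw [← Nat.prod_primeFactorsList hw]
  apply List.pow_card_le_prod
  intro p hp
  exact h p (Nat.prime_of_mem_primeFactorsList hp) (Nat.dvd_of_mem_primeFactorsList hp)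

theorem exists_m0 (f : ℤ[X]) (hm : f.Monic) : ∃ m0 : ℕ, 1 ≤ m0 ∧ f.eval (m0:ℤ) ≠ 0 := by
  by_contra! h
  apply hm.ne_zero
  apply Polynomial.eq_zero_of_infinite_isRoot
  refine Set.Infinite.mono (s := (fun n : ℕ => (n:ℤ)) '' Set.Ici 1) ?_ ?_
  · rintro _ ⟨n, hn, rfl⟩
    exact h n hn
  · exact (Set.Ici_infinite 1).image (fun a _ b _ hab => by simpa using hab)

theorem sqrt_beats (κ : ℕ) (c : ℝ) (hc : 0 < c) : ∃ N0 : ℕ, ∀ N : ℕ, N0 ≤ N → 3 ≤ N →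
    √(N:ℝ) ≤ c * N / (Real.log N)^κ := by
  have h := isLittleO_log_rpow_rpow_atTop (κ:ℝ) (show (0:ℝ) < 1/2 by norm_num)
  have h2 := (h.bound hc)
  obtain ⟨x0, hx0⟩ := Filter.eventually_atTop.1 h2
  obtain ⟨N0, hN0⟩ := exists_nat_ge x0
  refine ⟨N0, ?_⟩
  intro N hN hN3
  have h3 := hx0 N (hN0.trans (by exact_mod_cast hN))
  have hl : 0 < Real.log N := Real.log_pos (by exact_mod_cast (by omega : 1 < N))
  rw [Real.rpow_natCast, ← Real.sqrt_eq_rpow, Real.norm_of_nonneg (by positivity), Real.norm_of_nonneg (by positivity)] at h3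
  rw [le_div_iff₀ (by positivity)]
  calc √(N:ℝ) * Real.log N ^ κ ≤ √(N:ℝ) * (c * √(N:ℝ)) := by gcongr
    _ = c * (√(N:ℝ) * √(N:ℝ)) := by ring
    _ = c * N := by rw [Real.mul_self_sqrt (Nat.cast_nonneg _)]

theorem core (f : ℤ[X]) (hm : f.Monic) :
    ∃ (m0 Q r : ℕ) (c : ℝ) (N0 : ℕ), 1 ≤ m0 ∧ 1 ≤ Q ∧ 1 ≤ r ∧ 0 < c ∧ ∀ N : ℕ, N0 ≤ N → 
      ∃ S : Finset ℕ, (∀ n ∈ S, n < N ∧ f.eval ((m0 + Q * n : ℕ) : ℤ) ≠ 0 ∧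
        ArithmeticFunction.cardFactors (f.eval ((m0 + Q * n : ℕ) : ℤ)).natAbs ≤ r) ∧
      c * N / (Real.log N) ^
      (UniqueFactorizationMonoid.normalizedFactors (f.map (Int.castRingHom ℚ))).toFinset.card ≤
        (S.card : ℝ) := by
  classical
  obtain ⟨m0, hm0, hf0⟩ := exists_m0 f hm
  set A := (f.eval (m0:ℤ)).natAbs with hA
  have hA0 : A ≠ 0 := by rw [hA]; simpa using hf0
  set k := f.natDegree with hk
  set D := A + 2 * k + 3 with hD
  set Q := A * D.factorial with hQ
  have hQ0 : 1 ≤ Q := Nat.mul_pos (by omega) (Nat.factorial_pos _)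
  have hQp : ∀ p : ℕ, p.Prime → D < p → ¬ p ∣ Q := by
    intro p hp hDp hd
    rcases (Nat.Prime.dvd_mul hp).1 hd with h | h
    · have := Nat.le_of_dvd (by omega) h
      omega
    · have := (Nat.Prime.dvd_factorial hp).1 h
      omega
  obtain ⟨c, E, hc, hE, H⟩ := sieve_count f hm m0 Q D (by omega) (by omega) hQp
  obtain ⟨Cf, hCf⟩ := eval_bound f
  set κ := (UniqueFactorizationMonoid.normalizedFactors (f.map (Int.castRingHom ℚ))).toFinset.card
  obtain ⟨N1, hN1⟩ := sqrt_beats κ (c/2) (by positivity)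
  refine ⟨m0, Q, ArithmeticFunction.cardFactors A + 4 * E * (k+1) , c/2,
    N1 + 3 ^ (2*E) + Cf * (m0 + Q)^k + 3, hm0, hQ0, ?_, by positivity, ?_⟩
  · have : 1 ≤ 4 * E * (k+1) := Nat.mul_pos (by omega) (by omega)
    omega
  intro N hN
  obtain ⟨z, hz1, hz2⟩ := exists_root_nat (2*E) N (by omega)
  have hz3 : 3 ≤ z := by
    by_contra hlt
    have : (z+1)^(2*E) ≤ 3^(2*E) := Nat.pow_le_pow_left (by omega) _
    have : 0 ≤ Cf * (m0 + Q)^k := Nat.zero_le _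
    omega
  have hNz : N ≤ z ^ (4*E) := by
    refine hz2.le.trans ?_
    calc (z+1)^(2*E) ≤ (z^2)^(2*E) := Nat.pow_le_pow_left (by nlinarith) _
      _ = z^(4*E) := by rw [← pow_mul]; congr 1; ring
  have h33 : 0 ≤ 3^(2*E) := Nat.zero_le _
  have hN3 : 3 ≤ N := by omega
  refine ⟨(range N).filter (fun n => ∀ p ∈ PP D z, ¬ BB f m0 Q p n), ?_, ?_⟩
  · intro n hn
    obtain ⟨hnN, hn2⟩ := Finset.mem_filter.1 hn
    rw [Finset.mem_range] at hnN
    have hcast : ((m0 + Q * n : ℕ) : ℤ) = (m0:ℤ) + Q * n := by push_cast; ring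
    have hdvd : (Q:ℤ) ∣ f.eval ((m0 + Q * n : ℕ) : ℤ) - f.eval (m0:ℤ) := by
      refine Dvd.dvd.trans ?_ (sub_dvd_eval_sub _ _ f)
      rw [hcast]; exact ⟨n, by ring⟩
    obtain ⟨t, ht⟩ := hdvd
    have hAf : ∃ ε : ℤ, (A:ℤ) = f.eval (m0:ℤ) * ε := by
      have : f.eval (m0:ℤ) ∣ (A:ℤ) := Int.dvd_natAbs.2 dvd_rfl
      exact this
    obtain ⟨ε, hε⟩ := hAf
    set w : ℤ := 1 + ε * D.factorial * t with hw
    have hfw : f.eval ((m0 + Q * n : ℕ) : ℤ) = f.eval (m0:ℤ) * w := by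
      have : f.eval ((m0 + Q * n : ℕ) : ℤ) = f.eval (m0:ℤ) + Q * t := by linarith
      rw [this, hw, hQ]
      push_cast
      rw [hε]; ring
    have hwp : ∀ p : ℕ, p.Prime → p ∣ w.natAbs → z < p := by
      intro p hp hpw
      have hpw' : (p:ℤ) ∣ w := Int.natCast_dvd.2 hpw
      have hDp : D < p := by
        by_contra hle
        have h1 : (p:ℤ) ∣ D.factorial := by
          exact_mod_cast (Nat.Prime.dvd_factorial hp).2 (by omega)
        have h2 : (p:ℤ) ∣ ε * D.factorial * t := (h1.mul_left ε).mul_right t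
        have h3 : (p:ℤ) ∣ 1 := by
          have := dvd_sub hpw' h2
          rw [hw] at this
          simpa using this
        have h4 : p ∣ 1 := by exact_mod_cast h3
        exact hp.one_lt.ne' (Nat.dvd_one.1 h4)
      by_contra hle
      refine hn2 p ?_ ?_
      · simp only [PP, Finset.mem_filter, Finset.mem_range]
        exact ⟨by omega, hp, hDp⟩
      · rw [BB, ← hcast, hfw]
        exact hpw'.mul_left _
    have hw0 : w.natAbs ≠ 0 := by
      intro h0
      obtain ⟨p, hp, hpl⟩ : ∃ p : ℕ, p.Prime ∧ p ≤ z := ⟨2, Nat.prime_two, by omega⟩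
      have := hwp p hp (by rw [h0]; exact dvd_zero p)
      omega
    have hw0' : w ≠ 0 := by simpa using hw0
    refine ⟨hnN, by rw [hfw]; exact mul_ne_zero hf0 hw0', ?_⟩
    rw [hfw, Int.natAbs_mul, ArithmeticFunction.cardFactors_mul hA0 hw0]
    gcongr
    have h1 := pow_omega_le w.natAbs z hw0 (fun p hp hd => (hwp p hp hd).le)
    have h2 : w.natAbs ≤ (f.eval ((m0 + Q * n : ℕ) : ℤ)).natAbs := by
      rw [hfw, Int.natAbs_mul]
      exact Nat.le_mul_of_pos_left _ (by omega)
    have h3 := hCf (m0 + Q * n) (by omega)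
    have h4 : m0 + Q * n ≤ (m0 + Q) * N := by nlinarith
    have h5 : Cf * (m0 + Q * n)^k ≤ N^(k+1) := by
      calc Cf * (m0 + Q * n)^k ≤ Cf * ((m0 + Q) * N)^k := by gcongr
        _ = (Cf * (m0+Q)^k) * N^k := by rw [mul_pow]; ring
        _ ≤ N * N^k := by
          gcongr
          have : 0 ≤ 3^(2*E) := Nat.zero_le _
          omega
        _ = N^(k+1) := by ring
    have h6 : z ^ (ArithmeticFunction.cardFactors w.natAbs) ≤ z^(4*E*(k+1)) := by
      calc _ ≤ N^(k+1) := h1.trans (h2.trans (h3.trans h5))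
        _ ≤ (z^(4*E))^(k+1) := Nat.pow_le_pow_left hNz _
        _ = _ := by rw [← pow_mul]
    exact (Nat.pow_le_pow_iff_right (by omega)).1 h6
  · refine le_trans ?_ (H z N hz3)
    have hsq := hN1 N (by have : 0 ≤ Cf * (m0 + Q)^k := Nat.zero_le _
                          omega) hN3
    have hzN : z ≤ N := (Nat.le_self_pow (by omega) z).trans hz1
    have hz0 : (3:ℝ) ≤ z := by exact_mod_cast hz3
    have hlz : 0 < Real.log z := Real.log_pos (by linarith)
    have hlog : Real.log z ≤ Real.log N := Real.log_le_log (by linarith) (by exact_mod_cast hzN)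
    have h1 : c * N / (Real.log N)^κ ≤ c * N / (Real.log z)^κ := by gcongr
    have h2 : (z:ℝ)^E ≤ √(N:ℝ) := by
      apply Real.le_sqrt_of_sq_le
      rw [← pow_mul, mul_comm E 2]
      exact_mod_cast hz1
    have h3 : c / 2 * N / (Real.log N)^κ + c / 2 * N / (Real.log N)^κ = c * N / (Real.log N)^κ := by ring
    linarith
end S14
end

theorem stmt14 (f : Polynomial ℤ) (hmonic : f.Monic) (hdeg : 1 ≤ f.natDegree) :
    ∃ (r : ℕ) (c X₀ : ℝ), 1 ≤ r ∧ 0 < c ∧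
      (∀ X : ℝ, X₀ ≤ X →
        c * X / Real.log X ^ numDistinctIrredFactors f ≤
          (Nat.card {m : ℕ // 1 ≤ m ∧ (m : ℝ) ≤ X ∧ Polynomial.eval (m : ℤ) f ≠ 0 ∧
            bigOmega (Polynomial.eval (m : ℤ) f) ≤ r} : ℝ)) ∧
      {m : ℕ | 1 ≤ m ∧ Polynomial.eval (m : ℤ) f ≠ 0 ∧
        bigOmega (Polynomial.eval (m : ℤ) f) ≤ r}.Infinite := by
  obtain ⟨m0, Q, r, c, N0, hm0, hQ, hr, hc, H⟩ := S14.core f hmonic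
  have hQr : (1:ℝ) ≤ Q := by exact_mod_cast hQ
  have hcount : ∀ X : ℝ, 2 * (m0 + Q) + 2 * Q * (N0 + 3) ≤ X →
        c / (2 * Q) * X / Real.log X ^ numDistinctIrredFactors f ≤
          (Nat.card {m : ℕ // 1 ≤ m ∧ (m : ℝ) ≤ X ∧ Polynomial.eval (m : ℤ) f ≠ 0 ∧
            bigOmega (Polynomial.eval (m : ℤ) f) ≤ r} : ℝ) := by
    intro X hX
    have hm0r : (1:ℝ) ≤ m0 := by exact_mod_cast hm0
    have hN0r : (0:ℝ) ≤ N0 := Nat.cast_nonneg _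
    have hQN : 0 ≤ (Q:ℝ) * N0 := by positivity
    have hXm : (m0:ℝ) ≤ X := by nlinarith
    set N := ⌊(X - m0) / Q⌋₊ with hN
    have hdiv0 : 0 ≤ (X - m0) / Q := div_nonneg (by linarith) (by linarith)
    have hNle : (N:ℝ) ≤ (X - m0) / Q := Nat.floor_le hdiv0
    have hNQ : (N:ℝ) * Q ≤ X - m0 := by rwa [le_div_iff₀ (by linarith)] at hNle
    have hNgt : (X - m0) / Q < N + 1 := Nat.lt_floor_add_one _
    have hNgt' : X - m0 < (N + 1) * Q := by rwa [div_lt_iff₀ (by linarith)] at hNgt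
    have hNlow : X / (2 * Q) ≤ N := by
      rw [div_le_iff₀ (by linarith)]
      nlinarith
    have hNbig : ((N0 + 3 : ℕ) : ℝ) ≤ N := by
      refine le_trans ?_ hNlow
      rw [le_div_iff₀ (by linarith)]
      push_cast
      nlinarith
    have hNN : N0 + 3 ≤ N := by exact_mod_cast hNbig
    have hN3 : (3:ℝ) ≤ N := by exact_mod_cast (by omega : 3 ≤ N)
    have hNX : (N:ℝ) ≤ X := by nlinarith
    obtain ⟨S, hS, hScard⟩ := H N (by omega)
    set κ := numDistinctIrredFactors f with hκ
    have hlogN : 0 < Real.log N := Real.log_pos (by linarith)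
    have hlog : Real.log N ≤ Real.log X := Real.log_le_log (by linarith) hNX
    have hlogX : 0 < Real.log X := hlogN.trans_le hlog
    have h1 : c / (2 * Q) * X / Real.log X ^ κ ≤ c * N / Real.log N ^ κ := by
      calc c / (2 * Q) * X / Real.log X ^ κ = c * (X / (2 * Q)) / Real.log X ^ κ := by ring
        _ ≤ c * N / Real.log X ^ κ := by gcongr
        _ ≤ c * N / Real.log N ^ κ := by gcongr
    refine h1.trans (le_trans hScard ?_)
    have hfin : Finite {m : ℕ // 1 ≤ m ∧ (m : ℝ) ≤ X ∧ Polynomial.eval (m : ℤ) f ≠ 0 ∧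
            bigOmega (Polynomial.eval (m : ℤ) f) ≤ r} := by
      apply Set.Finite.subset (Set.finite_Iic ⌊X⌋₊)
      rintro m ⟨-, hm, -⟩
      exact Nat.le_floor hm
    rw [Nat.cast_le]
    have : S.card = Nat.card S := by simp
    rw [this]
    refine Nat.card_le_card_of_injective (fun n : S => ⟨m0 + Q * n.1, by omega, ?_, (hS n.1 n.2).2.1, (hS n.1 n.2).2.2⟩) ?_
    · have h2 : (n.1:ℝ) + 1 ≤ N := by exact_mod_cast (hS n.1 n.2).1
      push_cast
      nlinarith
    · intro a b hab
      simp only [Subtype.mk.injEq] at hab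
      apply Subtype.ext
      have : Q * a.1 = Q * b.1 := by omega
      exact Nat.eq_of_mul_eq_mul_left (by omega) this
  refine ⟨r, c / (2 * Q), 2 * (m0 + Q) + 2 * Q * (N0 + 3), hr, by positivity, hcount, ?_⟩
  intro hfin
  set M := Nat.card {m : ℕ | 1 ≤ m ∧ Polynomial.eval (m : ℤ) f ≠ 0 ∧
        bigOmega (Polynomial.eval (m : ℤ) f) ≤ r} with hM
  have hbd : ∀ X : ℝ, 2 * (m0 + Q) + 2 * Q * (N0 + 3) ≤ X →
      c / (2 * Q) * X / Real.log X ^ numDistinctIrredFactors f ≤ M := by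
    intro X hX
    refine (hcount X hX).trans ?_
    rw [Nat.cast_le]
    have := hfin.to_subtype
    exact Nat.card_le_card_of_injective (fun m => ⟨m.1, m.2.1, m.2.2.2⟩) (by
      intro a b hab
      simp only [Subtype.mk.injEq] at hab
      exact Subtype.ext hab)
  have hlo := (Real.isLittleO_pow_log_id_atTop (n := numDistinctIrredFactors f)).bound
    (show 0 < c / (2 * Q) / (M + 1) by positivity)
  obtain ⟨x0, hx0⟩ := Filter.eventually_atTop.1 hlo
  set X := max (max x0 3) (2 * (m0 + Q) + 2 * Q * (N0 + 3)) with hX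
  have h1 := hx0 X ((le_max_left _ _).trans (le_max_left _ _))
  have h2 := hbd X (le_max_right _ _)
  have h3 : 3 ≤ X := (le_max_right _ _).trans (le_max_left _ _)
  have hl : 0 < Real.log X := Real.log_pos (by linarith)
  rw [Real.norm_of_nonneg (by positivity), id, Real.norm_of_nonneg (by linarith)] at h1
  rw [div_le_iff₀ (by positivity)] at h2
  have hM0 : (0:ℝ) < M + 1 := by positivity
  have h4 : (M + 1) * Real.log X ^ numDistinctIrredFactors f ≤ c / (2 * Q) * X := by
    calc _ ≤ ((M:ℝ) + 1) * (c / (2 * Q) / (M + 1) * X) := by gcongr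
      _ = _ := by field_simp
  have h5 : 0 < Real.log X ^ numDistinctIrredFactors f := by positivity
  nlinarith
end

section
/- There exists a constant C ≥ 0 such that for all real X ≥ 3, Σ_{2 ≤ n ≤ X} (Ω(n) − log log X)² ≤ C · X · log log X, where the sum is over integers n with 2 ≤ n ≤ X. -/
open ArithmeticFunction in
lemma mertens_aux1 : ∃ K : ℝ, 0 ≤ K ∧ ∀ N : ℕ, 1 ≤ N →
    |∑ d ∈ Finset.Ioc 0 N, vonMangoldt d / d - Real.log N| ≤ K := by
  have h4 : 0 ≤ Real.log 4 := Real.log_nonneg (by norm_num)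
  refine ⟨Real.log 4 + 4, by positivity, fun N hN => ?_⟩
  have hN0 : (0:ℝ) < N := by exact_mod_cast hN
  have h1 : ∑ n ∈ Finset.Ioc 0 N, Real.log n = ∑ d ∈ Finset.Ioc 0 N, vonMangoldt d * ((N / d : ℕ) : ℝ) := by
    have := sum_Ioc_mul_zeta_eq_sum (R := ℝ) vonMangoldt N
    rw [vonMangoldt_mul_zeta] at this
    simpa using this
  have h2 : ∑ n ∈ Finset.Ioc 0 N, Real.log n = Real.log (N.factorial) := by
    rw [← Finset.prod_Ico_id_eq_factorial, Nat.cast_prod, Real.log_prod]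
    · rfl
    · intro i hi
      simp at hi
      have : i ≠ 0 := by omega
      exact_mod_cast this
  have h3 : Real.log N.factorial ≤ N * Real.log N := by
    rw [← Real.log_pow]
    apply Real.log_le_log (by positivity)
    exact_mod_cast Nat.factorial_le_pow N
  have h5 := Stirling.le_log_factorial_stirling (n := N) (by omega)
  have h6 : 0 ≤ Real.log N := Real.log_natCast_nonneg N
  have h7 : 0 ≤ Real.log (2 * Real.pi) := Real.log_nonneg (by nlinarith [Real.pi_gt_three])
  have h8 := Chebyshev.psi_le_const_mul_self (x := N) hN0.le
  rw [Chebyshev.psi, Nat.floor_natCast] at h8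
  have h9 : ∑ d ∈ Finset.Ioc 0 N, vonMangoldt d * ((N / d : ℕ) : ℝ) ≤ N * ∑ d ∈ Finset.Ioc 0 N, vonMangoldt d / d := by
    rw [Finset.mul_sum]
    refine Finset.sum_le_sum fun d _ => ?_
    have : ((N / d : ℕ) : ℝ) ≤ N / d := Nat.cast_div_le
    calc _ ≤ vonMangoldt d * ((N:ℝ) / d) := mul_le_mul_of_nonneg_left this vonMangoldt_nonneg
      _ = _ := by ring
  have h10 : N * ∑ d ∈ Finset.Ioc 0 N, vonMangoldt d / d ≤ ∑ d ∈ Finset.Ioc 0 N, vonMangoldt d * ((N / d : ℕ) : ℝ) + ∑ d ∈ Finset.Ioc 0 N, vonMangoldt d := by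
    rw [Finset.mul_sum, ← Finset.sum_add_distrib]
    refine Finset.sum_le_sum fun d _ => ?_
    have : (N:ℝ) / d ≤ ((N / d : ℕ) : ℝ) + 1 := by
      rw [← Nat.floor_div_eq_div (K := ℝ)]
      exact (Nat.lt_floor_add_one _).le
    calc _ = vonMangoldt d * ((N:ℝ) / d) := by ring
      _ ≤ vonMangoldt d * (((N / d : ℕ) : ℝ) + 1) := mul_le_mul_of_nonneg_left this vonMangoldt_nonneg
      _ = _ := by ring
  rw [abs_le]
  constructor
  · apply le_of_mul_le_mul_left _ hN0
    nlinarith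
  · apply le_of_mul_le_mul_left _ hN0
    nlinarith

lemma aux_log_sq_sum : ∃ D : ℝ, 0 ≤ D ∧ ∀ s : Finset ℕ, ∑ m ∈ s, Real.log m / (m:ℝ)^2 ≤ D := by
  have hs : Summable (fun m : ℕ => 2 * (1 / (m:ℝ) ^ (3/2 : ℝ))) :=
    (Real.summable_one_div_nat_rpow.2 (by norm_num)).mul_left 2
  refine ⟨∑' m : ℕ, 2 * (1 / (m:ℝ) ^ (3/2 : ℝ)), tsum_nonneg fun m => by positivity, fun s => ?_⟩
  refine le_trans (Finset.sum_le_sum fun m _ => ?_) (hs.sum_le_tsum s fun m _ => by positivity)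
  rcases Nat.eq_zero_or_pos m with rfl | hm
  · simp
  have hm0 : (0:ℝ) < m := by exact_mod_cast hm
  have := Real.log_le_rpow_div (x := m) hm0.le (ε := 1/2) (by norm_num)
  rw [div_le_iff₀ (by positivity)]
  have h2 : (m:ℝ)^2 = (m:ℝ)^(3/2:ℝ) * (m:ℝ)^(1/2:ℝ) := by
    rw [← Real.rpow_add hm0]; norm_num
  rw [h2]
  have : 0 < (m:ℝ)^(3/2:ℝ) := by positivity
  field_simp at *
  linarith

open ArithmeticFunction in
lemma mertens_aux2 : ∃ K : ℝ, 0 ≤ K ∧ ∀ N : ℕ, 1 ≤ N →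
    |∑ p ∈ Finset.Ioc 0 N with p.Prime, Real.log p / p - Real.log N| ≤ K := by
  obtain ⟨K, hK, h⟩ := mertens_aux1
  obtain ⟨D, hD, hD'⟩ := aux_log_sq_sum
  refine ⟨K + D * 2, by positivity, fun N hN => ?_⟩
  have hN0 : (0:ℝ) < N := by exact_mod_cast hN
  have hN1 : (1:ℝ) ≤ N := by exact_mod_cast hN
  have key : ∑ d ∈ Finset.Ioc 0 N, vonMangoldt d / d =
      ∑ p ∈ Finset.Ioc 0 N with p.Prime, Real.log p / p +
      ∑ k ∈ Finset.Icc 2 (⌊Real.log N / Real.log 2⌋₊ + 1), ∑ p ∈ Finset.Ioc 0 ⌊(N:ℝ) ^ ((1 : ℝ) / k)⌋₊ with p.Prime, Real.log p / (p:ℝ)^k := by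
    have e1 : ∑ d ∈ Finset.Ioc 0 N, vonMangoldt d / d = ∑ d ∈ Finset.Ioc 0 ⌊(N:ℝ)⌋₊ with IsPrimePow d, vonMangoldt d / d := by
      rw [Nat.floor_natCast, Finset.sum_filter]
      refine Finset.sum_congr rfl fun d _ => ?_
      split_ifs with hd
      · rfl
      · simp [vonMangoldt_eq_zero_iff.2 hd]
    rw [e1, Chebyshev.sum_PrimePow_eq_sum_sum' _ hN0.le (N := ⌊Real.log N / Real.log 2⌋₊ + 1) (by omega),
      ← Finset.add_sum_Ioc_eq_sum_Icc (by omega)]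
    congr 1
    · simp only [Nat.cast_one, div_one, Real.rpow_one, Nat.floor_natCast, pow_one]
      refine Finset.sum_congr rfl fun p hp => ?_
      rw [vonMangoldt_apply_prime (Finset.mem_filter.1 hp).2]
    · refine Finset.sum_congr rfl fun k hk => Finset.sum_congr rfl fun p hp => ?_
      have : k ≠ 0 := by simp at hk; omega
      rw [vonMangoldt_apply_pow this, vonMangoldt_apply_prime (Finset.mem_filter.1 hp).2]
      push_cast; rfl
  have b0 : 0 ≤ ∑ k ∈ Finset.Icc 2 (⌊Real.log N / Real.log 2⌋₊ + 1), ∑ p ∈ Finset.Ioc 0 ⌊(N:ℝ) ^ ((1 : ℝ) / k)⌋₊ with p.Prime, Real.log p / (p:ℝ)^k :=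
    Finset.sum_nonneg fun k _ => Finset.sum_nonneg fun p _ => div_nonneg (Real.log_natCast_nonneg p) (by positivity)
  have b1 : ∑ k ∈ Finset.Icc 2 (⌊Real.log N / Real.log 2⌋₊ + 1), ∑ p ∈ Finset.Ioc 0 ⌊(N:ℝ) ^ ((1 : ℝ) / k)⌋₊ with p.Prime, Real.log p / (p:ℝ)^k ≤ D * 2 := by
    calc _ ≤ ∑ k ∈ Finset.Icc 2 (⌊Real.log N / Real.log 2⌋₊ + 1), D * (1/2:ℝ)^(k-2) := by
          refine Finset.sum_le_sum fun k hk => ?_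
          calc _ ≤ ∑ p ∈ Finset.Ioc 0 ⌊(N:ℝ) ^ ((1 : ℝ) / k)⌋₊ with p.Prime, Real.log p / (p:ℝ)^2 * (1/2:ℝ)^(k-2) := by
                refine Finset.sum_le_sum fun p hp => ?_
                have hp2 : (2:ℝ) ≤ p := by exact_mod_cast (Finset.mem_filter.1 hp).2.two_le
                have : (p:ℝ)^k = (p:ℝ)^2 * (p:ℝ)^(k-2) := by
                  rw [← pow_add]; congr 1; simp at hk; omega
                rw [this, div_pow, one_pow, div_mul_div_comm, mul_one]
                have := Real.log_natCast_nonneg p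
                gcongr
            _ ≤ _ := by
                rw [← Finset.sum_mul]
                exact mul_le_mul_of_nonneg_right (hD' _) (by positivity)
      _ ≤ D * 2 := by
          rw [← Finset.mul_sum]
          refine mul_le_mul_of_nonneg_left ?_ hD
          have : ∑ k ∈ Finset.Icc 2 (⌊Real.log N / Real.log 2⌋₊ + 1), (1/2:ℝ)^(k-2) = ∑ k ∈ Finset.range (⌊Real.log N / Real.log 2⌋₊), (1/2:ℝ)^k := by
            rw [← Finset.Ico_add_one_right_eq_Icc, Finset.sum_Ico_eq_sum_range]
            simp
          rw [this]
          exact sum_geometric_two_le _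
  have := abs_le.1 (h N hN)
  rw [abs_le]
  constructor <;> linarith

lemma mertens_aux3 : ∃ K : ℝ, 0 ≤ K ∧ ∀ t : ℝ, 2 ≤ t →
    |∑ n ∈ Finset.Icc 0 ⌊t⌋₊, (if n.Prime then Real.log n / n else 0) - Real.log t| ≤ K := by
  obtain ⟨K, hK, h⟩ := mertens_aux2
  refine ⟨K + Real.log 2, by positivity, fun t ht => ?_⟩
  have h1 : 1 ≤ ⌊t⌋₊ := Nat.one_le_floor_iff _ |>.2 (by linarith)
  have h2 := h _ h1
  rw [Finset.sum_filter] at h2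
  rw [← Finset.add_sum_Ioc_eq_sum_Icc (by omega)]
  have hf : (1:ℝ) ≤ ⌊t⌋₊ := by exact_mod_cast h1
  have h3 : Real.log ⌊t⌋₊ ≤ Real.log t := Real.log_le_log (by linarith) (Nat.floor_le (by linarith))
  have h4 : Real.log t ≤ Real.log ⌊t⌋₊ + Real.log 2 := by
    rw [← Real.log_mul (by linarith) (by norm_num)]
    apply Real.log_le_log (by linarith)
    linarith [Nat.lt_floor_add_one t]
  rw [abs_le] at h2 ⊢
  simp only [Nat.not_prime_zero, if_false, zero_add]
  constructor <;> linarith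

lemma mertens_two : ∃ K : ℝ, 0 ≤ K ∧ ∀ X : ℝ, 3 ≤ X →
    |∑ p ∈ Finset.Ioc 0 ⌊X⌋₊ with p.Prime, 1 / (p:ℝ) - Real.log (Real.log X)| ≤ K := by
  obtain ⟨K, hK, h⟩ := mertens_aux3
  have l2 : 0 < Real.log 2 := Real.log_pos (by norm_num)
  refine ⟨1 + 2 * K / Real.log 2 + |Real.log (Real.log 2)|, by positivity, fun X hX => ?_⟩
  set c : ℕ → ℝ := fun n => if n.Prime then Real.log n / n else 0 with hc
  have hd : ∀ t : ℝ, 2 ≤ t → HasDerivAt (fun t => (Real.log t)⁻¹) (-(t⁻¹) / (Real.log t)^2) t := by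
    intro t ht
    exact (Real.hasDerivAt_log (by linarith)).inv (Real.log_pos (by linarith)).ne'
  have hderiv : ∀ t ∈ Set.Icc 2 X, deriv (fun t => (Real.log t)⁻¹) t = -(t⁻¹) / (Real.log t)^2 :=
    fun t ht => (hd t ht.1).deriv
  have hcont : ∀ a b : ℝ, ContinuousOn (fun t : ℝ => t⁻¹ * (a / Real.log t + b / (Real.log t)^2)) (Set.Icc 2 X) := by
    intro a b t ht
    have h1 : t ≠ 0 := by linarith [ht.1]
    have h2 : Real.log t ≠ 0 := (Real.log_pos (by linarith [ht.1])).ne'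
    apply ContinuousAt.continuousWithinAt
    fun_prop (disch := first | assumption | positivity)
  have hint : MeasureTheory.IntegrableOn (deriv (fun t => (Real.log t)⁻¹)) (Set.Icc 2 X) := by
    refine MeasureTheory.IntegrableOn.congr_fun (f := fun t : ℝ => t⁻¹ * (0 / Real.log t + (-1) / (Real.log t)^2)) (hcont 0 (-1)).integrableOn_Icc ?_ measurableSet_Icc
    intro t ht
    rw [hderiv t ht]
    ring
  have abel := sum_mul_eq_sub_integral_mul₁ c (f := fun t => (Real.log t)⁻¹) (by simp [hc]) (by simp [hc]) X
    (fun t ht => (hd t ht.1).differentiableAt) hint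
  have hintM : MeasureTheory.IntegrableOn (fun t => deriv (fun t => (Real.log t)⁻¹) t * ∑ k ∈ Finset.Icc 0 ⌊t⌋₊, c k) (Set.Icc 2 X) :=
    integrableOn_mul_sum_Icc c (by norm_num) hint
  have hS : ∑ p ∈ Finset.Ioc 0 ⌊X⌋₊ with p.Prime, 1 / (p:ℝ) = ∑ k ∈ Finset.Icc 0 ⌊X⌋₊, (Real.log k)⁻¹ * c k := by
    rw [← Finset.add_sum_Ioc_eq_sum_Icc (by omega), Finset.sum_filter]
    simp only [hc, Nat.not_prime_zero, if_false, mul_zero, zero_add]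
    refine Finset.sum_congr rfl fun p hp => ?_
    split_ifs with hpp
    · have : 0 < Real.log p := Real.log_pos (by exact_mod_cast hpp.one_lt)
      have : (0:ℝ) < p := by exact_mod_cast hpp.pos
      field_simp
    · simp
  have hanti : ∀ b : ℝ, ∫ t in (2:ℝ)..X, t⁻¹ * (1 / Real.log t + b / (Real.log t)^2) =
      (Real.log (Real.log X) - b * (Real.log X)⁻¹) - (Real.log (Real.log 2) - b * (Real.log 2)⁻¹) := by
    intro b
    refine intervalIntegral.integral_eq_sub_of_hasDerivAt (f := fun t => Real.log (Real.log t) - b * (Real.log t)⁻¹) ?_ ?_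
    · intro t ht
      rw [Set.uIcc_of_le (by linarith)] at ht
      have h1 := ((Real.hasDerivAt_log (x := t) (by linarith [ht.1])).log (Real.log_pos (by linarith [ht.1])).ne').sub ((hd t ht.1).const_mul b)
      exact h1.congr_deriv (by ring)
    · apply ContinuousOn.intervalIntegrable
      rw [Set.uIcc_of_le (by linarith)]
      exact hcont 1 b
  have hIoc : ∀ b : ℝ, MeasureTheory.IntegrableOn (fun t : ℝ => t⁻¹ * (1 / Real.log t + b / (Real.log t)^2)) (Set.Ioc 2 X) :=
    fun b => (hcont 1 b).integrableOn_Icc.mono_set Set.Ioc_subset_Icc_self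
  have hM := hintM.mono_set Set.Ioc_subset_Icc_self
  have hpt : ∀ t ∈ Set.Ioc 2 X, t⁻¹ * (1 / Real.log t + (-K) / (Real.log t)^2) ≤ -(deriv (fun t => (Real.log t)⁻¹) t * ∑ k ∈ Finset.Icc 0 ⌊t⌋₊, c k) ∧
      -(deriv (fun t => (Real.log t)⁻¹) t * ∑ k ∈ Finset.Icc 0 ⌊t⌋₊, c k) ≤ t⁻¹ * (1 / Real.log t + K / (Real.log t)^2) := by
    intro t ht
    rw [hderiv t ⟨ht.1.le, ht.2⟩]
    have hb := abs_le.1 (h t ht.1.le)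
    have ht0 : 0 < t := by linarith [ht.1]
    have hl : 0 < Real.log t := Real.log_pos (by linarith [ht.1])
    have e : ∀ b : ℝ, t⁻¹ * (1 / Real.log t + b / (Real.log t)^2) = t⁻¹ / (Real.log t)^2 * (Real.log t + b) := by
      intro b; field_simp
    have e2 : -(-(t⁻¹) / (Real.log t)^2 * ∑ k ∈ Finset.Icc 0 ⌊t⌋₊, c k) = t⁻¹ / (Real.log t)^2 * ∑ k ∈ Finset.Icc 0 ⌊t⌋₊, c k := by ring
    rw [e, e, e2]
    constructor
    · exact mul_le_mul_of_nonneg_left (by linarith) (by positivity)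
    · exact mul_le_mul_of_nonneg_left (by linarith) (by positivity)
  have up := MeasureTheory.setIntegral_mono_on hM.neg (hIoc K) measurableSet_Ioc (fun t ht => (hpt t ht).2)
  have lo := MeasureTheory.setIntegral_mono_on (hIoc (-K)) hM.neg measurableSet_Ioc (fun t ht => (hpt t ht).1)
  rw [← intervalIntegral.integral_of_le (by linarith), hanti] at lo
  rw [← intervalIntegral.integral_of_le (b := X) (f := fun t : ℝ => t⁻¹ * (1 / Real.log t + K / (Real.log t)^2)) (by linarith), hanti] at up
  simp only [Pi.neg_apply] at up lo
  rw [MeasureTheory.integral_neg] at up lo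
  rw [hS, abel]
  have hX := abs_le.1 (h X (by linarith))
  have lX : 0 < Real.log X := Real.log_pos (by linarith)
  have hle : (Real.log X)⁻¹ ≤ (Real.log 2)⁻¹ := inv_anti₀ l2 (Real.log_le_log (by norm_num) (by linarith))
  have hinv : 0 < (Real.log X)⁻¹ := by positivity
  have m1 : (Real.log X)⁻¹ * ∑ k ∈ Finset.Icc 0 ⌊X⌋₊, c k ≤ 1 + K * (Real.log X)⁻¹ := by
    calc _ ≤ (Real.log X)⁻¹ * (Real.log X + K) := mul_le_mul_of_nonneg_left (by linarith) hinv.le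
      _ = _ := by field_simp
  have m2 : 1 - K * (Real.log X)⁻¹ ≤ (Real.log X)⁻¹ * ∑ k ∈ Finset.Icc 0 ⌊X⌋₊, c k := by
    calc _ = (Real.log X)⁻¹ * (Real.log X - K) := by field_simp
      _ ≤ _ := mul_le_mul_of_nonneg_left (by linarith) hinv.le
  have hKK : K * (Real.log X)⁻¹ ≤ K * (Real.log 2)⁻¹ := mul_le_mul_of_nonneg_left hle hK
  have := abs_le.1 (le_refl |Real.log (Real.log 2)|)
  have : 0 ≤ K * (Real.log X)⁻¹ := by positivity
  rw [div_eq_mul_inv, abs_le]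
  constructor <;> linarith

/-- number of primes `p ≤ N` with `p ^ k ∣ n` -/
noncomputable def cntPow (N k n : ℕ) : ℝ :=
  ∑ p ∈ Finset.Ioc 0 N with p.Prime, if p ^ k ∣ n then (1:ℝ) else 0

noncomputable def recSum (N k : ℕ) : ℝ :=
  ∑ p ∈ Finset.Ioc 0 N with p.Prime, 1 / (p:ℝ) ^ k

lemma sum_dvd_ind (N d : ℕ) : ∑ n ∈ Finset.Ioc 0 N, (if d ∣ n then (1:ℝ) else 0) = ((N / d : ℕ) : ℝ) := by
  rw [← Nat.Ioc_filter_dvd_card_eq_div, Finset.sum_boole]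

lemma cardFactors_eq_sum_cntPow (N n : ℕ) (hn : n ∈ Finset.Ioc 0 N) :
    (ArithmeticFunction.cardFactors n : ℝ) = ∑ k ∈ Finset.Ico 1 (N + 1), cntPow N k n := by
  rw [Finset.mem_Ioc] at hn
  unfold cntPow
  rw [Finset.sum_comm, ArithmeticFunction.cardFactors_eq_sum_factorization, Finsupp.sum,
    Nat.support_factorization]
  push_cast
  have hsub : n.primeFactors ⊆ (Finset.Ioc 0 N).filter Nat.Prime := by
    intro p hp
    have hpp := Nat.prime_of_mem_primeFactors hp
    have := Nat.le_of_mem_primeFactors hp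
    simp only [Finset.mem_filter, Finset.mem_Ioc]
    exact ⟨⟨hpp.pos, by omega⟩, hpp⟩
  rw [Finset.sum_subset hsub (f := fun p => ((n.factorization p : ℕ) : ℝ))]
  · refine Finset.sum_congr rfl fun p hp => ?_
    have hpp := (Finset.mem_filter.1 hp).2
    rw [Nat.factorization_eq_card_pow_dvd_of_lt (b := N + 1) hpp hn.1, Finset.sum_boole]
    calc n < N + 1 := by omega
      _ < p ^ (N + 1) := Nat.lt_pow_self hpp.one_lt
  · intro p _ hp
    rw [← Nat.support_factorization, Finsupp.notMem_support_iff] at hp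
    simp [hp]

lemma sum_cntPow_sq (N k : ℕ) (hk : 1 ≤ k) :
    ∑ n ∈ Finset.Ioc 0 N, (cntPow N k n) ^ 2 ≤ N * ((recSum N k) ^ 2 + recSum N k) := by
  set P := (Finset.Ioc 0 N).filter Nat.Prime with hP
  have e1 : ∑ n ∈ Finset.Ioc 0 N, (cntPow N k n) ^ 2 = ∑ p ∈ P, ∑ q ∈ P, ∑ n ∈ Finset.Ioc 0 N,
      (if p ^ k ∣ n then (1:ℝ) else 0) * (if q ^ k ∣ n then (1:ℝ) else 0) := by
    simp only [cntPow, sq, Finset.sum_mul_sum]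
    rw [Finset.sum_comm]
    refine Finset.sum_congr rfl fun p _ => ?_
    rw [Finset.sum_comm]
  have e2 : N * ((recSum N k) ^ 2 + recSum N k) = ∑ p ∈ P, ∑ q ∈ P,
      (N * (1 / (p:ℝ) ^ k * (1 / (q:ℝ) ^ k)) + if p = q then N * (1 / (p:ℝ) ^ k) else 0) := by
    simp only [Finset.sum_add_distrib, ← Finset.mul_sum, ← Finset.sum_mul, Finset.sum_ite_eq]
    rw [Finset.sum_ite_mem, Finset.inter_self, ← Finset.mul_sum, recSum]
    ring
  rw [e1, e2]
  refine Finset.sum_le_sum fun p hp => Finset.sum_le_sum fun q hq => ?_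
  have hpp := (Finset.mem_filter.1 hp).2
  have hqp := (Finset.mem_filter.1 hq).2
  have hp0 : (0:ℝ) < p := by exact_mod_cast hpp.pos
  have hq0 : (0:ℝ) < q := by exact_mod_cast hqp.pos
  split_ifs with hpq
  · subst hpq
    have : ∑ n ∈ Finset.Ioc 0 N, (if p ^ k ∣ n then (1:ℝ) else 0) * (if p ^ k ∣ n then (1:ℝ) else 0)
        = ((N / p ^ k : ℕ) : ℝ) := by
      rw [← sum_dvd_ind]
      refine Finset.sum_congr rfl fun n _ => ?_
      split_ifs <;> simp
    rw [this]
    have h1 : ((N / p ^ k : ℕ) : ℝ) ≤ N / ((p ^ k : ℕ) : ℝ) := Nat.cast_div_le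
    push_cast at h1
    have h2 : (0:ℝ) ≤ N * (1 / (p:ℝ) ^ k * (1 / (p:ℝ) ^ k)) := by positivity
    rw [div_eq_mul_one_div] at h1
    linarith
  · have : ∑ n ∈ Finset.Ioc 0 N, (if p ^ k ∣ n then (1:ℝ) else 0) * (if q ^ k ∣ n then (1:ℝ) else 0)
        = ((N / (p ^ k * q ^ k) : ℕ) : ℝ) := by
      rw [← sum_dvd_ind]
      refine Finset.sum_congr rfl fun n _ => ?_
      have hco : Nat.Coprime (p ^ k) (q ^ k) := Nat.Coprime.pow _ _ ((Nat.coprime_primes hpp hqp).2 hpq)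
      have : p ^ k * q ^ k ∣ n ↔ p ^ k ∣ n ∧ q ^ k ∣ n :=
        ⟨fun h => ⟨dvd_of_mul_right_dvd h, dvd_of_mul_left_dvd h⟩, fun h => hco.mul_dvd_of_dvd_of_dvd h.1 h.2⟩
      simp only [this]
      split_ifs <;> simp_all
    rw [this, add_zero]
    have h1 : ((N / (p ^ k * q ^ k) : ℕ) : ℝ) ≤ N / ((p ^ k * q ^ k : ℕ) : ℝ) := Nat.cast_div_le
    push_cast at h1
    rw [one_div_mul_one_div, ← div_eq_mul_one_div]
    exact h1

lemma sum_cntPow_one (N : ℕ) : N * recSum N 1 - N ≤ ∑ n ∈ Finset.Ioc 0 N, cntPow N 1 n := by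
  unfold cntPow recSum
  rw [Finset.sum_comm]
  simp only [sum_dvd_ind, pow_one]
  have : (N:ℝ) ≥ ∑ p ∈ Finset.Ioc 0 N with p.Prime, (1:ℝ) := by
    rw [Finset.sum_const, nsmul_eq_mul, mul_one]
    have := Finset.card_filter_le (Finset.Ioc 0 N) Nat.Prime
    rw [Nat.card_Ioc] at this
    exact_mod_cast this
  have h2 : N * ∑ p ∈ Finset.Ioc 0 N with p.Prime, 1 / (p:ℝ) ≤ ∑ p ∈ Finset.Ioc 0 N with p.Prime, (((N / p : ℕ) : ℝ) + 1) := by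
    rw [Finset.mul_sum]
    refine Finset.sum_le_sum fun p _ => ?_
    rw [← Nat.floor_div_eq_div (K := ℝ), ← div_eq_mul_one_div]
    exact (Nat.lt_floor_add_one _).le
  rw [Finset.sum_add_distrib] at h2
  linarith

lemma recSum_bound : ∃ D : ℝ, 0 ≤ D ∧ ∀ N k : ℕ, 2 ≤ k → recSum N k ≤ D * (1 / 2) ^ (k - 2) := by
  have hs : Summable (fun m : ℕ => 1 / (m:ℝ) ^ 2) := Real.summable_one_div_nat_pow.2 (by norm_num)
  refine ⟨∑' m : ℕ, 1 / (m:ℝ) ^ 2, tsum_nonneg fun m => by positivity, fun N k hk => ?_⟩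
  refine le_trans ?_ (mul_le_mul_of_nonneg_right (hs.sum_le_tsum ((Finset.Ioc 0 N).filter Nat.Prime) fun m _ => by positivity) (by positivity))
  rw [Finset.sum_mul]
  refine Finset.sum_le_sum fun p hp => ?_
  have hp2 : (2:ℝ) ≤ p := by exact_mod_cast (Finset.mem_filter.1 hp).2.two_le
  have : (p:ℝ)^k = (p:ℝ)^2 * (p:ℝ)^(k-2) := by
    rw [← pow_add]; congr 1; omega
  rw [this, div_pow, one_pow, div_mul_div_comm, mul_one]
  gcongr

lemma geom_shift_le (r : ℝ) (h0 : 0 ≤ r) (h1 : r < 1) (M : ℕ) : ∑ k ∈ Finset.Ico 2 M, r ^ (k - 2) ≤ (1 - r)⁻¹ := by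
  rw [Finset.sum_Ico_eq_sum_range]
  simp only [Nat.add_sub_cancel_left]
  rw [← tsum_geometric_of_lt_one h0 h1]
  exact (summable_geometric_of_lt_one h0 h1).sum_le_tsum _ fun i _ => by positivity

lemma high_moment : ∃ D : ℝ, 0 ≤ D ∧ ∀ N : ℕ,
    ∑ n ∈ Finset.Ioc 0 N, (∑ k ∈ Finset.Ico 2 (N + 1), cntPow N k n) ^ 2 ≤ D * N := by
  obtain ⟨D, hD, h⟩ := recSum_bound
  refine ⟨4 * ((D ^ 2 + D) * 3), by positivity, fun N => ?_⟩
  have cs : ∀ n, (∑ k ∈ Finset.Ico 2 (N + 1), cntPow N k n) ^ 2 ≤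
      4 * ∑ k ∈ Finset.Ico 2 (N + 1), (4/3:ℝ) ^ (k - 2) * (cntPow N k n) ^ 2 := by
    intro n
    refine le_trans (Finset.sum_sq_le_sum_mul_sum_of_sq_eq_mul _ (f := fun k => (3/4:ℝ) ^ (k - 2))
      (g := fun k => (4/3:ℝ) ^ (k - 2) * (cntPow N k n) ^ 2) (fun k _ => by positivity) (fun k _ => by positivity) ?_) ?_
    · intro k _
      rw [← mul_assoc, ← mul_pow]; norm_num
    · refine mul_le_mul_of_nonneg_right ?_ (Finset.sum_nonneg fun k _ => by positivity)
      exact (geom_shift_le _ (by norm_num) (by norm_num) _).trans (by norm_num)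
  refine (Finset.sum_le_sum fun n _ => cs n).trans ?_
  rw [← Finset.mul_sum, Finset.sum_comm, mul_assoc]
  refine mul_le_mul_of_nonneg_left ?_ (by norm_num)
  have hk : ∀ k ∈ Finset.Ico 2 (N + 1), ∑ n ∈ Finset.Ioc 0 N, (4/3:ℝ) ^ (k - 2) * (cntPow N k n) ^ 2 ≤
      (N * (D ^ 2 + D)) * (2/3:ℝ) ^ (k - 2) := by
    intro k hk
    have hk2 := (Finset.mem_Ico.1 hk).1
    rw [← Finset.mul_sum]
    have hr := h N k hk2
    have hr0 : 0 ≤ recSum N k := Finset.sum_nonneg fun p _ => by positivity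
    have hx : (1/2:ℝ) ^ (k - 2) ≤ 1 := pow_le_one₀ (by norm_num) (by norm_num)
    have hx0 : 0 < (1/2:ℝ) ^ (k - 2) := by positivity
    calc _ ≤ (4/3:ℝ) ^ (k - 2) * (N * ((D ^ 2 + D) * (1/2:ℝ) ^ (k - 2))) := by
          refine mul_le_mul_of_nonneg_left ((sum_cntPow_sq N k (by omega)).trans ?_) (by positivity)
          refine mul_le_mul_of_nonneg_left ?_ (by positivity)
          have : (recSum N k) ^ 2 ≤ D ^ 2 * (1/2:ℝ) ^ (k - 2) := by
            calc _ ≤ (D * (1/2:ℝ) ^ (k - 2)) ^ 2 := by gcongr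
              _ = D ^ 2 * (1/2:ℝ) ^ (k - 2) * (1/2:ℝ) ^ (k - 2) := by ring
              _ ≤ D ^ 2 * (1/2:ℝ) ^ (k - 2) * 1 := by gcongr
              _ = _ := by ring
          linarith
      _ = (N * (D ^ 2 + D)) * ((4/3:ℝ) ^ (k - 2) * (1/2:ℝ) ^ (k - 2)) := by ring
      _ = _ := by rw [← mul_pow]; norm_num
  refine (Finset.sum_le_sum hk).trans ?_
  rw [← Finset.mul_sum]
  calc _ ≤ (N * (D ^ 2 + D)) * (3:ℝ) := by
        refine mul_le_mul_of_nonneg_left ?_ (by positivity)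
        exact (geom_shift_le _ (by norm_num) (by norm_num) _).trans (by norm_num)
    _ = _ := by ring

theorem stmt19 :
    ∃ C : ℝ, 0 ≤ C ∧ ∀ X : ℝ, 3 ≤ X →
      ∑ n ∈ Finset.Icc 2 ⌊X⌋₊,
          ((ArithmeticFunction.cardFactors n : ℝ) - Real.log (Real.log X)) ^ 2 ≤
        C * X * Real.log (Real.log X) := by
  obtain ⟨K, hK, h⟩ := mertens_two
  obtain ⟨D, hD, hH⟩ := high_moment
  have l3 : 1 < Real.log 3 := by
    rw [Real.lt_log_iff_exp_lt (by norm_num)]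
    exact Real.exp_one_lt_d9.trans (by norm_num)
  have ll3 : 0 < Real.log (Real.log 3) := Real.log_pos l3
  refine ⟨6 + 2 * (K ^ 2 + K + D) / Real.log (Real.log 3), by positivity, fun X hX => ?_⟩
  set L := Real.log (Real.log X) with hL
  set N := ⌊X⌋₊ with hN
  have hLL : Real.log (Real.log 3) ≤ L :=
    Real.log_le_log (by linarith) (Real.log_le_log (by norm_num) hX)
  have hNX : (N:ℝ) ≤ X := Nat.floor_le (by linarith)
  have hS : |recSum N 1 - L| ≤ K := by
    have := h X hX
    simpa only [recSum, pow_one] using this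
  have hN1 : 1 ≤ N := Nat.one_le_floor_iff _ |>.2 (by linarith)
  have step1 : ∑ n ∈ Finset.Icc 2 N, ((ArithmeticFunction.cardFactors n : ℝ) - L) ^ 2 ≤
      ∑ n ∈ Finset.Ioc 0 N, ((ArithmeticFunction.cardFactors n : ℝ) - L) ^ 2 := by
    refine Finset.sum_le_sum_of_subset_of_nonneg ?_ fun n _ _ => sq_nonneg _
    intro n hn
    simp only [Finset.mem_Icc, Finset.mem_Ioc] at *
    omega
  have step2 : ∑ n ∈ Finset.Ioc 0 N, ((ArithmeticFunction.cardFactors n : ℝ) - L) ^ 2 ≤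
      ∑ n ∈ Finset.Ioc 0 N, (2 * ((cntPow N 1 n) ^ 2 - 2 * L * cntPow N 1 n + L ^ 2) + 2 * (∑ k ∈ Finset.Ico 2 (N + 1), cntPow N k n) ^ 2) := by
    refine Finset.sum_le_sum fun n hn => ?_
    rw [cardFactors_eq_sum_cntPow N n hn, Finset.sum_eq_sum_Ico_succ_bot (by omega)]
    set a := cntPow N 1 n
    set b := ∑ k ∈ Finset.Ico (1 + 1) (N + 1), cntPow N k n
    nlinarith [sq_nonneg (a - L - b)]
  have step3 : ∑ n ∈ Finset.Ioc 0 N, (2 * ((cntPow N 1 n) ^ 2 - 2 * L * cntPow N 1 n + L ^ 2) + 2 * (∑ k ∈ Finset.Ico 2 (N + 1), cntPow N k n) ^ 2) =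
      2 * (∑ n ∈ Finset.Ioc 0 N, (cntPow N 1 n) ^ 2 - 2 * L * ∑ n ∈ Finset.Ioc 0 N, cntPow N 1 n + N * L ^ 2) + 2 * ∑ n ∈ Finset.Ioc 0 N, (∑ k ∈ Finset.Ico 2 (N + 1), cntPow N k n) ^ 2 := by
    simp only [Finset.sum_add_distrib, ← Finset.mul_sum, Finset.sum_sub_distrib, Finset.sum_const, Nat.card_Ioc, nsmul_eq_mul, Nat.sub_zero]
  have m1 := sum_cntPow_sq N 1 le_rfl
  have m2 := sum_cntPow_one N
  have m3 := hH N
  have hL0 : 0 < L := by linarith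
  set S := recSum N 1
  have m2' := mul_le_mul_of_nonneg_left m2 hL0.le
  have hSL : (S - L) ^ 2 ≤ K ^ 2 := sq_le_sq' (abs_le.1 hS).1 (abs_le.1 hS).2
  have total : ∑ n ∈ Finset.Icc 2 N, ((ArithmeticFunction.cardFactors n : ℝ) - L) ^ 2 ≤
      N * (2 * ((S - L) ^ 2 + S + 2 * L + D)) := by
    refine (step1.trans step2).trans ?_
    rw [step3]
    nlinarith
  have fin : 2 * ((S - L) ^ 2 + S + 2 * L + D) ≤ 6 * L + 2 * (K ^ 2 + K + D) := by
    linarith [(abs_le.1 hS).2]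
  have fin2 : 2 * (K ^ 2 + K + D) ≤ 2 * (K ^ 2 + K + D) / Real.log (Real.log 3) * L := by
    rw [div_mul_eq_mul_div, le_div_iff₀ ll3]
    exact mul_le_mul_of_nonneg_left hLL (by positivity)
  calc _ ≤ N * (2 * ((S - L) ^ 2 + S + 2 * L + D)) := total
    _ ≤ N * (6 * L + 2 * (K ^ 2 + K + D) / Real.log (Real.log 3) * L) :=
        mul_le_mul_of_nonneg_left (by linarith) (by positivity)
    _ ≤ X * (6 * L + 2 * (K ^ 2 + K + D) / Real.log (Real.log 3) * L) :=
        mul_le_mul_of_nonneg_right hNX (by positivity)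
    _ = _ := by ring
end
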